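/- arXiv:2206.11099 — 4 statements merged into one kernel-verified Lean document; each statement's English description precedes it below -/
import Mathlib

section
/- Let k be a countable totally ordered division ring. Then every completely normal distributive 0-lattice L with at most ℵ₁ elements is the image of a surjective lattice homomorphism from Idc F for some vector lattice F over k. -/
universe u v

/-- A vector lattice over a totally ordered division ring `k`: a left `k`-vector space
with a translation-invariant lattice order compatible with multiplication by positive
scalars. -/
structure VectorLatticeOver (k : Type u) [DivisionRing k] [LinearOrder k] where
  carrier : Type v
  [lat : Lattice carrier]
  [grp : AddCommGroup carrier]
  [mod : Module k carrier]
  add_le_add_left' : ∀ a b : carrier, a ≤ b → ∀ c : carrier, c + a ≤ c + b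
  smul_nonneg' : ∀ (c : k) (x : carrier), 0 < c → 0 ≤ x → 0 ≤ c • x

attribute [instance] VectorLatticeOver.lat VectorLatticeOver.grp VectorLatticeOver.mod

/-- The principal `ℓ`-ideal `⟨a⟩ = {x : |x| ≤ n • a for some n ∈ ℕ}` generated by `a`
(here `|x| = x ⊔ -x`). -/
def principalLIdeal {G : Type*} [Lattice G] [AddCommGroup G] (a : G) : Set G :=
  {x : G | ∃ n : ℕ, x ⊔ -x ≤ n • a}

section Amalgamation

variable {L : Type*} [DistribLattice L]

/-- A finite meet, characterized by the distributivity property used below. -/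
theorem exists_finite_inf (t : ℕ → L) (n : ℕ) :
    ∃ A, (∀ i ≤ n, A ≤ t i) ∧ ∀ z w, (∀ i ≤ n, z ≤ t i ⊔ w) → z ≤ A ⊔ w := by
  induction n with
  | zero => exact ⟨t 0, by simp, fun z w h => h 0 le_rfl⟩
  | succ n ih =>
    obtain ⟨A, hA, hA'⟩ := ih
    refine ⟨A ⊓ t (n + 1), fun i hi => ?_, fun z w h => ?_⟩
    · rcases Nat.le_succ_iff.1 hi with hi | rfl
      · exact inf_le_left.trans (hA i hi)
      · exact inf_le_right
    · rw [sup_inf_right]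
      exact le_inf (hA' z w fun i hi => h i (hi.trans n.le_succ)) (h _ le_rfl)

variable [OrderBot L]

theorem le_of_le_sup_of_inf_eq_bot {a b c : L} (h : a ≤ c ⊔ b) (hab : a ⊓ b = ⊥) :
    a ≤ c := by
  calc a = a ⊓ (c ⊔ b) := (inf_eq_left.2 h).symm
    _ = a ⊓ c := by rw [inf_sup_left, hab, sup_bot_eq]
    _ ≤ c := inf_le_right

/-- An `L`-valued comparison on `X`: at every prime ideal of `L` it induces a total preorder,
`d x y` being the truth value of `y < x`. -/
structure IsComparison {X : Type*} (d : X → X → L) : Prop where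
  self : ∀ x, d x x = ⊥
  inf_swap : ∀ x y, d x y ⊓ d y x = ⊥
  triangle : ∀ x y z, d x z ≤ d x y ⊔ d y z

/-- The functions `up` and `lo` describe a position relative to the points of `s`:
`up x` and `lo x` are the truth values of a new point being above, respectively below, `x`. -/
structure IsCut {X : Type*} (d : X → X → L) (s : Set X) (up lo : X → L) : Prop where
  inf_eq_bot : ∀ x ∈ s, up x ⊓ lo x = ⊥
  up_le : ∀ x ∈ s, ∀ y ∈ s, up x ≤ up y ⊔ d y x
  lo_le : ∀ x ∈ s, ∀ y ∈ s, lo x ≤ d x y ⊔ lo y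
  le_lo_sup_up : ∀ x ∈ s, ∀ y ∈ s, d x y ≤ lo x ⊔ up y

theorem IsComparison.exists_cut_succ
    (hcn : ∀ a b : L, ∃ x y : L, a ⊔ b = a ⊔ y ∧ a ⊔ b = x ⊔ b ∧ x ⊓ y = ⊥)
    {d : ℕ → ℕ → L} (hd : IsComparison d) {n : ℕ} {up lo : ℕ → L}
    (h : IsCut d (Set.Iic n) up lo) :
    ∃ up' lo' : ℕ → L, IsCut d (Set.Iic (n + 1)) up' lo' ∧
      ∀ i ≤ n, up' i = up i ∧ lo' i = lo i := by
  obtain ⟨A, hA, hA'⟩ := exists_finite_inf (fun y => up y ⊔ d y (n + 1)) n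
  obtain ⟨B, hB, hB'⟩ := exists_finite_inf (fun y => d (n + 1) y ⊔ lo y) n
  obtain ⟨p, q, hq, hp, hpq⟩ := hcn A B
  obtain ⟨u, hu⟩ : ∃ u, u = p ⊓ A := ⟨_, rfl⟩
  obtain ⟨l, hl⟩ : ∃ l, l = q ⊓ B := ⟨_, rfl⟩
  have huA : u ≤ A := hu ▸ inf_le_right
  have hlB : l ≤ B := hl ▸ inf_le_right
  have hul : u ⊓ l = ⊥ := by
    rw [eq_bot_iff, ← hpq, hu, hl]
    exact inf_le_inf inf_le_left inf_le_left
  have hAu : A ≤ u ⊔ B := by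
    rw [hu, sup_inf_right]
    exact le_inf (hp ▸ le_sup_left) le_sup_left
  have hBl : B ≤ l ⊔ A := by
    rw [hl, sup_inf_right]
    exact le_inf (by rw [sup_comm q, ← hq]; exact le_sup_right) le_sup_left
  have key₁ : ∀ y ≤ n, up y ≤ u ⊔ d (n + 1) y := fun y hy => by
    have h₁ : up y ≤ A ⊔ d (n + 1) y := hA' _ _ fun i hi =>
      (h.up_le y hy i hi).trans <| by
        rw [sup_assoc]; exact sup_le_sup_left (hd.triangle _ _ _) _
    refine le_of_le_sup_of_inf_eq_bot (h₁.trans ?_) (h.inf_eq_bot y hy)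
    refine sup_le (hAu.trans (sup_le (le_sup_left.trans le_sup_left) ((hB y hy).trans ?_)))
      (le_sup_right.trans le_sup_left)
    exact sup_le_sup_right le_sup_right _
  have key₂ : ∀ y ≤ n, lo y ≤ d y (n + 1) ⊔ l := fun y hy => by
    have h₁ : lo y ≤ B ⊔ d y (n + 1) := hB' _ _ fun i hi =>
      (h.lo_le y hy i hi).trans <| by
        refine sup_le ((hd.triangle y (n + 1) i).trans ?_) (le_sup_right.trans le_sup_left)
        exact sup_le le_sup_right (le_sup_left.trans le_sup_left)
    refine le_of_le_sup_of_inf_eq_bot (h₁.trans ?_)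
      ((inf_comm _ _).trans (h.inf_eq_bot y hy))
    refine sup_le (hBl.trans (sup_le (le_sup_right.trans le_sup_left) ((hA y hy).trans ?_)))
      (le_sup_left.trans le_sup_left)
    exact sup_le le_sup_right (le_sup_left.trans le_sup_left)
  have key₃ : ∀ y ≤ n, d y (n + 1) ≤ lo y ⊔ u := fun y hy => by
    have h₁ : d y (n + 1) ≤ A ⊔ lo y := hA' _ _ fun i hi =>
      (hd.triangle y i (n + 1)).trans <| by
        refine sup_le ((h.le_lo_sup_up y hy i hi).trans ?_) (le_sup_right.trans le_sup_left)
        exact sup_le le_sup_right (le_sup_left.trans le_sup_left)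
    refine le_of_le_sup_of_inf_eq_bot (h₁.trans ?_) (hd.inf_swap _ _)
    refine sup_le (hAu.trans (sup_le (le_sup_right.trans le_sup_left) ((hB y hy).trans ?_)))
      (le_sup_left.trans le_sup_left)
    exact sup_le le_sup_right (le_sup_left.trans le_sup_left)
  have key₄ : ∀ y ≤ n, d (n + 1) y ≤ l ⊔ up y := fun y hy => by
    have h₁ : d (n + 1) y ≤ B ⊔ up y := hB' _ _ fun i hi =>
      (hd.triangle (n + 1) i y).trans <| by
        refine sup_le (le_sup_left.trans le_sup_left) ((h.le_lo_sup_up i hi y hy).trans ?_)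
        exact sup_le (le_sup_right.trans le_sup_left) le_sup_right
    refine le_of_le_sup_of_inf_eq_bot (h₁.trans ?_) (hd.inf_swap _ _)
    refine sup_le (hBl.trans (sup_le (le_sup_left.trans le_sup_left) ((hA y hy).trans ?_)))
      (le_sup_right.trans le_sup_left)
    exact sup_le_sup_right le_sup_right _
  have hold : ∀ (f : ℕ → L) (c : L), ∀ i ≤ n, Function.update f (n + 1) c i = f i :=
    fun f c i hi => Function.update_of_ne (by omega) _ _
  refine ⟨Function.update up (n + 1) u, Function.update lo (n + 1) l, ⟨?_, ?_, ?_, ?_⟩,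
    fun i hi => ⟨hold _ _ i hi, hold _ _ i hi⟩⟩
  · intro x hx
    rcases Nat.le_succ_iff.1 hx with hx | rfl
    · rw [hold _ _ x hx, hold _ _ x hx, h.inf_eq_bot x hx]
    · simpa using hul
  all_goals
    intro x hx y hy
    rcases Nat.le_succ_iff.1 hx with hx | rfl <;> rcases Nat.le_succ_iff.1 hy with hy | rfl
  · simpa only [hold _ _ x hx, hold _ _ y hy] using h.up_le x hx y hy
  · simpa only [hold _ _ x hx, Nat.succ_eq_add_one, Function.update_self] using key₁ x hx
  · simpa only [hold _ _ y hy, Nat.succ_eq_add_one, Function.update_self] using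
      huA.trans (hA y hy)
  · exact le_sup_left
  · simpa only [hold _ _ x hx, hold _ _ y hy] using h.lo_le x hx y hy
  · simpa only [hold _ _ x hx, Nat.succ_eq_add_one, Function.update_self] using key₂ x hx
  · simpa only [hold _ _ y hy, Nat.succ_eq_add_one, Function.update_self] using
      hlB.trans (hB y hy)
  · exact le_sup_right
  · simpa only [hold _ _ x hx, hold _ _ y hy] using h.le_lo_sup_up x hx y hy
  · simpa only [hold _ _ x hx, Nat.succ_eq_add_one, Function.update_self] using key₃ x hx
  · simpa only [hold _ _ y hy, Nat.succ_eq_add_one, Function.update_self] using key₄ y hy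
  · simp only [Nat.succ_eq_add_one, hd.self, bot_le]

theorem IsComparison.exists_cut_nat
    (hcn : ∀ a b : L, ∃ x y : L, a ⊔ b = a ⊔ y ∧ a ⊔ b = x ⊔ b ∧ x ⊓ y = ⊥)
    {d : ℕ → ℕ → L} (hd : IsComparison d) (a : L) :
    ∃ up lo : ℕ → L, IsCut d Set.univ up lo ∧ up 0 = a := by
  let T (n : ℕ) := {p : (ℕ → L) × (ℕ → L) // IsCut d (Set.Iic n) p.1 p.2}
  have hstep : ∀ (n : ℕ) (p : T n), ∃ q : T (n + 1),
      ∀ i ≤ n, q.1.1 i = p.1.1 i ∧ q.1.2 i = p.1.2 i := fun n p => by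
    obtain ⟨up', lo', h, h'⟩ := hd.exists_cut_succ hcn p.2
    exact ⟨⟨(up', lo'), h⟩, h'⟩
  choose next hnext using hstep
  have h0 : IsCut d (Set.Iic 0) (fun _ => a) (fun _ => ⊥) := by
    constructor <;> simp [hd.self]
  let seq : ∀ n, T n := fun n => Nat.rec ⟨(fun _ => a, fun _ => ⊥), h0⟩ next n
  have hseq : ∀ i n, i ≤ n → (seq n).1.1 i = (seq i).1.1 i ∧ (seq n).1.2 i = (seq i).1.2 i := by
    intro i n hin
    induction n, hin using Nat.le_induction with
    | base => exact ⟨rfl, rfl⟩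
    | succ n hn ih =>
      exact ⟨(hnext n (seq n) i hn).1.trans ih.1, (hnext n (seq n) i hn).2.trans ih.2⟩
  refine ⟨fun i => (seq i).1.1 i, fun i => (seq i).1.2 i, ⟨?_, ?_, ?_, ?_⟩, rfl⟩
  · exact fun x _ => (seq x).2.inf_eq_bot x Set.self_mem_Iic
  all_goals
    intro x _ y _
    have hx := hseq x _ (le_max_left x y)
    have hy := hseq y _ (le_max_right x y)
    simp only [← hx.1, ← hx.2, ← hy.1, ← hy.2]
  · exact (seq (max x y)).2.up_le x (le_max_left x y) y (le_max_right x y)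
  · exact (seq (max x y)).2.lo_le x (le_max_left x y) y (le_max_right x y)
  · exact (seq (max x y)).2.le_lo_sup_up x (le_max_left x y) y (le_max_right x y)

theorem IsComparison.exists_cut
    (hcn : ∀ a b : L, ∃ x y : L, a ⊔ b = a ⊔ y ∧ a ⊔ b = x ⊔ b ∧ x ⊓ y = ⊥)
    {X : Type*} [Countable X] {d : X → X → L} (hd : IsComparison d) (x₀ : X) (a : L) :
    ∃ up lo : X → L, IsCut d Set.univ up lo ∧ up x₀ = a := by
  classical
  have : Nonempty X := ⟨x₀⟩
  obtain ⟨f, hf⟩ := exists_surjective_nat X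
  let f' : ℕ → X := fun n => Nat.casesOn n x₀ f
  obtain ⟨up, lo, h, ha⟩ := IsComparison.exists_cut_nat hcn (d := fun m n => d (f' m) (f' n))
    ⟨fun _ => hd.self _, fun _ _ => hd.inf_swap _ _, fun _ _ _ => hd.triangle _ _ _⟩ a
  have hs : ∀ x, ∃ n, f' n = x ∧ (x = x₀ → n = 0) := fun x => by
    by_cases hx : x = x₀
    · exact ⟨0, hx.symm, fun _ => rfl⟩
    · obtain ⟨n, hn⟩ := hf x
      exact ⟨n + 1, hn, fun h => absurd h hx⟩
  choose s hs hs₀ using hs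
  refine ⟨up ∘ s, lo ∘ s, ⟨?_, ?_, ?_, ?_⟩, by simp [hs₀ x₀ rfl, ha]⟩
  · exact fun x _ => h.inf_eq_bot _ trivial
  · exact fun x _ y _ => by simpa [hs] using h.up_le (s x) trivial (s y) trivial
  · exact fun x _ y _ => by simpa [hs] using h.lo_le (s x) trivial (s y) trivial
  · exact fun x _ y _ => by simpa [hs] using h.le_lo_sup_up (s x) trivial (s y) trivial

end Amalgamation

section Extend

variable {k : Type*} [DivisionRing k] {V L : Type*} [AddCommGroup V] [Module k V]

theorem exists_eq_neg_smul {c : k} (hc : c ≠ 0) (x : V) : ∃ z : V, x = -c • z :=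
  ⟨-c⁻¹ • x, by simp [smul_smul, hc]⟩

variable [LinearOrder k]

/-- The sign valuation on `V × k` determined by a cut, which describes the position of the new
basis vector `(0, 1)` relative to `V`. -/
noncomputable def IsSignValuation.extend (φ up lo : V → L) (p : V × k) : L :=
  if p.2 = 0 then φ p.1 else if 0 < p.2 then up (-p.2⁻¹ • p.1) else lo (-p.2⁻¹ • p.1)

theorem IsSignValuation.extend_zero (φ up lo : V → L) (x : V) :
    IsSignValuation.extend φ up lo (x, (0 : k)) = φ x := by
  simp [IsSignValuation.extend]

theorem IsSignValuation.extend_pos (φ up lo : V → L) (z : V) {c : k} (hc : 0 < c) :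
    IsSignValuation.extend φ up lo (-c • z, c) = up z := by
  simp [IsSignValuation.extend, hc, hc.ne', smul_smul]

theorem IsSignValuation.extend_neg (φ up lo : V → L) (z : V) {c : k} (hc : c < 0) :
    IsSignValuation.extend φ up lo (-c • z, c) = lo z := by
  simp [IsSignValuation.extend, hc.not_gt, hc.ne, smul_smul]

end Extend

section SignValuation

variable {k : Type*} [DivisionRing k] [LinearOrder k] {L : Type*} [DistribLattice L] [OrderBot L]

/-- `φ x` plays the role of the principal ideal generated by the positive part of `x`. -/
structure IsSignValuation (k : Type*) [DivisionRing k] [LinearOrder k] {L : Type*}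
    [DistribLattice L] [OrderBot L] {V : Type*} [AddCommGroup V] [Module k V]
    (φ : V → L) : Prop where
  inf_neg : ∀ x, φ x ⊓ φ (-x) = ⊥
  add_le : ∀ x y, φ (x + y) ≤ φ x ⊔ φ y
  smul_le : ∀ (c : k) x, 0 < c → φ (c • x) ≤ φ x

variable {V W : Type*} [AddCommGroup V] [Module k V] [AddCommGroup W] [Module k W]

namespace IsSignValuation

variable {φ : V → L}

theorem map_zero (hφ : IsSignValuation k φ) : φ 0 = ⊥ := by
  simpa using hφ.inf_neg 0

theorem comp (hφ : IsSignValuation k φ) (f : W →ₗ[k] V) : IsSignValuation k (φ ∘ f) where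
  inf_neg x := by simpa using hφ.inf_neg (f x)
  add_le x y := by simpa using hφ.add_le (f x) (f y)
  smul_le c x hc := by simpa using hφ.smul_le c (f x) hc

theorem isComparison (hφ : IsSignValuation k φ) : IsComparison fun x y => φ (x - y) where
  self x := by simpa using hφ.map_zero
  inf_swap x y := by simpa using hφ.inf_neg (x - y)
  triangle x y z := by simpa using hφ.add_le (x - y) (y - z)

variable [IsStrictOrderedRing k]

theorem le_of_smul_eq_smul (hφ : IsSignValuation k φ) {c d : k} (hc : 0 < c) (hd : 0 < d)
    {x y : V} (h : c • x = d • y) : φ x ≤ φ y := by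
  have : x = (c⁻¹ * d) • y := by rw [mul_smul, ← h, inv_smul_smul₀ hc.ne']
  rw [this]
  exact hφ.smul_le _ _ (mul_pos (inv_pos.2 hc) hd)

variable {up lo : V → L}

theorem extend_add_le_of_pos_of_neg (hφ : IsSignValuation k φ)
    (h : IsCut (fun x y => φ (x - y)) Set.univ up lo) {c d : k} (hc : 0 < c) (hd : d < 0)
    (x y : V) :
    extend φ up lo ((-c • x, c) + (-d • y, d)) ≤ up x ⊔ lo y := by
  have hyx : φ (y - x) ≤ up x ⊔ lo y :=
    (h.le_lo_sup_up y trivial x trivial).trans_eq (sup_comm _ _)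
  rcases lt_trichotomy (c + d) 0 with hcd | hcd | hcd
  · obtain ⟨z, hz⟩ := exists_eq_neg_smul hcd.ne (-c • x + -d • y)
    rw [Prod.mk_add_mk, hz, extend_neg _ _ _ _ hcd]
    refine (h.lo_le z trivial y trivial).trans (sup_le (le_trans ?_ hyx) le_sup_right)
    refine hφ.le_of_smul_eq_smul (neg_pos.2 hcd) hc ?_
    rw [smul_sub, ← hz]
    simp only [smul_sub, add_smul, neg_smul, neg_add_rev]; abel
  · rw [Prod.mk_add_mk, hcd, extend_zero]
    refine le_trans ?_ hyx
    refine hφ.le_of_smul_eq_smul one_pos hc ?_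
    rw [eq_neg_of_add_eq_zero_right hcd]
    simp only [smul_sub, smul_add, neg_smul, one_smul]; abel
  · obtain ⟨z, hz⟩ := exists_eq_neg_smul hcd.ne' (-c • x + -d • y)
    rw [Prod.mk_add_mk, hz, extend_pos _ _ _ _ hcd]
    refine (h.up_le z trivial x trivial).trans (sup_le le_sup_left (le_trans ?_ hyx))
    refine hφ.le_of_smul_eq_smul hcd (neg_pos.2 hd) ?_
    have hz' : (c + d) • z = c • x + d • y := by
      rw [← neg_inj, ← neg_smul, ← hz]; simp only [neg_smul, neg_add_rev]; abel
    rw [smul_sub, hz']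
    simp only [smul_sub, add_smul, neg_smul]; abel

theorem extend_add_le_of_pos_of_pos (hφ : IsSignValuation k φ)
    (h : IsCut (fun x y => φ (x - y)) Set.univ up lo) {c d : k} (hc : 0 < c) (hd : 0 < d)
    (x y : V) :
    extend φ up lo ((-c • x, c) + (-d • y, d)) ≤ up x ⊔ up y := by
  have hcd := add_pos hc hd
  obtain ⟨z, hz⟩ := exists_eq_neg_smul hcd.ne' (-c • x + -d • y)
  have hz' : (c + d) • z = c • x + d • y := by
    rw [← neg_inj, ← neg_smul, ← hz]; simp only [neg_smul, neg_add_rev]; abel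
  rw [Prod.mk_add_mk, hz, extend_pos _ _ _ _ hcd]
  have hx : φ (x - z) ≤ φ (x - y) :=
    hφ.le_of_smul_eq_smul hcd hd (by rw [smul_sub, hz']; simp only [smul_sub, add_smul]; abel)
  have hy : φ (y - z) ≤ φ (y - x) :=
    hφ.le_of_smul_eq_smul hcd hc (by rw [smul_sub, hz']; simp only [smul_sub, add_smul]; abel)
  calc up z ≤ (up x ⊔ up y ⊔ φ (x - z)) ⊓ (up x ⊔ up y ⊔ φ (y - z)) :=
        le_inf ((h.up_le z trivial x trivial).trans (sup_le_sup_right le_sup_left _))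
          ((h.up_le z trivial y trivial).trans (sup_le_sup_right le_sup_right _))
    _ = up x ⊔ up y ⊔ φ (x - z) ⊓ φ (y - z) := (sup_inf_left _ _ _).symm
    _ ≤ up x ⊔ up y ⊔ φ (x - y) ⊓ φ (y - x) := sup_le_sup_left (inf_le_inf hx hy) _
    _ = up x ⊔ up y := by rw [hφ.isComparison.inf_swap, sup_bot_eq]

theorem extend_add_le_of_neg_of_neg (hφ : IsSignValuation k φ)
    (h : IsCut (fun x y => φ (x - y)) Set.univ up lo) {c d : k} (hc : c < 0) (hd : d < 0)
    (x y : V) :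
    extend φ up lo ((-c • x, c) + (-d • y, d)) ≤ lo x ⊔ lo y := by
  have hcd := add_neg hc hd
  obtain ⟨z, hz⟩ := exists_eq_neg_smul hcd.ne (-c • x + -d • y)
  rw [Prod.mk_add_mk, hz, extend_neg _ _ _ _ hcd]
  have hx : φ (z - x) ≤ φ (y - x) :=
    hφ.le_of_smul_eq_smul (neg_pos.2 hcd) (neg_pos.2 hd)
      (by rw [smul_sub, ← hz]; simp only [smul_sub, add_smul, neg_smul, neg_add_rev]; abel)
  have hy : φ (z - y) ≤ φ (x - y) :=
    hφ.le_of_smul_eq_smul (neg_pos.2 hcd) (neg_pos.2 hc)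
      (by rw [smul_sub, ← hz]; simp only [smul_sub, add_smul, neg_smul, neg_add_rev]; abel)
  calc lo z ≤ (lo x ⊔ lo y ⊔ φ (z - x)) ⊓ (lo x ⊔ lo y ⊔ φ (z - y)) :=
        le_inf ((h.lo_le z trivial x trivial).trans
            (sup_le le_sup_right (le_sup_left.trans le_sup_left)))
          ((h.lo_le z trivial y trivial).trans
            (sup_le le_sup_right (le_sup_right.trans le_sup_left)))
    _ = lo x ⊔ lo y ⊔ φ (z - x) ⊓ φ (z - y) := (sup_inf_left _ _ _).symm
    _ ≤ lo x ⊔ lo y ⊔ φ (y - x) ⊓ φ (x - y) := sup_le_sup_left (inf_le_inf hx hy) _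
    _ = lo x ⊔ lo y := by rw [hφ.isComparison.inf_swap, sup_bot_eq]

theorem extend_add_le_of_pos_of_zero (hφ : IsSignValuation k φ)
    (h : IsCut (fun x y => φ (x - y)) Set.univ up lo) {c : k} (hc : 0 < c) (x y : V) :
    extend φ up lo ((-c • x, c) + (y, 0)) ≤ up x ⊔ φ y := by
  obtain ⟨z, hz⟩ := exists_eq_neg_smul hc.ne' (-c • x + y)
  rw [Prod.mk_add_mk, hz, add_zero, extend_pos _ _ _ _ hc]
  refine (h.up_le z trivial x trivial).trans (sup_le_sup_left ?_ _)
  refine hφ.le_of_smul_eq_smul hc one_pos ?_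
  have hz' : c • z = c • x - y := by
    rw [← neg_inj, ← neg_smul, ← hz]; simp only [neg_smul]; abel
  rw [smul_sub, hz']
  simp only [one_smul]; abel

theorem extend_add_le_of_neg_of_zero (hφ : IsSignValuation k φ)
    (h : IsCut (fun x y => φ (x - y)) Set.univ up lo) {c : k} (hc : c < 0) (x y : V) :
    extend φ up lo ((-c • x, c) + (y, 0)) ≤ lo x ⊔ φ y := by
  obtain ⟨z, hz⟩ := exists_eq_neg_smul hc.ne (-c • x + y)
  rw [Prod.mk_add_mk, hz, add_zero, extend_neg _ _ _ _ hc]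
  refine (h.lo_le z trivial x trivial).trans ((sup_comm _ _).trans_le (sup_le_sup_left ?_ _))
  refine hφ.le_of_smul_eq_smul (neg_pos.2 hc) one_pos ?_
  rw [smul_sub, ← hz]
  simp only [neg_smul, one_smul]; abel

theorem extend_isSignValuation (hφ : IsSignValuation k φ)
    (h : IsCut (fun x y => φ (x - y)) Set.univ up lo) :
    IsSignValuation k (extend (k := k) φ up lo) where
  inf_neg := by
    rintro ⟨x, c⟩
    rcases lt_trichotomy c 0 with hc | rfl | hc
    · obtain ⟨z, rfl⟩ := exists_eq_neg_smul hc.ne x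
      rw [Prod.neg_mk, ← neg_smul, extend_neg _ _ _ _ hc, extend_pos _ _ _ _ (neg_pos.2 hc),
        inf_comm, h.inf_eq_bot z trivial]
    · simpa [extend_zero] using hφ.inf_neg x
    · obtain ⟨z, rfl⟩ := exists_eq_neg_smul hc.ne' x
      rw [Prod.neg_mk, ← neg_smul, extend_pos _ _ _ _ hc, extend_neg _ _ _ _ (neg_lt_zero.2 hc),
        h.inf_eq_bot z trivial]
  add_le := by
    rintro ⟨x, c⟩ ⟨y, d⟩
    rcases lt_trichotomy c 0 with hc | rfl | hc <;> rcases lt_trichotomy d 0 with hd | rfl | hd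
    · obtain ⟨x, rfl⟩ := exists_eq_neg_smul hc.ne x
      obtain ⟨y, rfl⟩ := exists_eq_neg_smul hd.ne y
      rw [extend_neg _ _ _ x hc, extend_neg _ _ _ y hd]
      exact hφ.extend_add_le_of_neg_of_neg h hc hd x y
    · obtain ⟨x, rfl⟩ := exists_eq_neg_smul hc.ne x
      rw [extend_neg _ _ _ x hc, extend_zero]
      exact hφ.extend_add_le_of_neg_of_zero h hc x y
    · obtain ⟨x, rfl⟩ := exists_eq_neg_smul hc.ne x
      obtain ⟨y, rfl⟩ := exists_eq_neg_smul hd.ne' y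
      rw [extend_neg _ _ _ x hc, extend_pos _ _ _ y hd, add_comm, sup_comm]
      exact hφ.extend_add_le_of_pos_of_neg h hd hc y x
    · obtain ⟨y, rfl⟩ := exists_eq_neg_smul hd.ne y
      rw [extend_neg _ _ _ y hd, extend_zero, add_comm, sup_comm]
      exact hφ.extend_add_le_of_neg_of_zero h hd y x
    · simpa [extend_zero] using hφ.add_le x y
    · obtain ⟨y, rfl⟩ := exists_eq_neg_smul hd.ne' y
      rw [extend_pos _ _ _ y hd, extend_zero, add_comm, sup_comm]
      exact hφ.extend_add_le_of_pos_of_zero h hd y x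
    · obtain ⟨x, rfl⟩ := exists_eq_neg_smul hc.ne' x
      obtain ⟨y, rfl⟩ := exists_eq_neg_smul hd.ne y
      rw [extend_pos _ _ _ x hc, extend_neg _ _ _ y hd]
      exact hφ.extend_add_le_of_pos_of_neg h hc hd x y
    · obtain ⟨x, rfl⟩ := exists_eq_neg_smul hc.ne' x
      rw [extend_pos _ _ _ x hc, extend_zero]
      exact hφ.extend_add_le_of_pos_of_zero h hc x y
    · obtain ⟨x, rfl⟩ := exists_eq_neg_smul hc.ne' x
      obtain ⟨y, rfl⟩ := exists_eq_neg_smul hd.ne' y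
      rw [extend_pos _ _ _ x hc, extend_pos _ _ _ y hd]
      exact hφ.extend_add_le_of_pos_of_pos h hc hd x y
  smul_le := by
    rintro a ⟨x, c⟩ ha
    rcases lt_trichotomy c 0 with hc | rfl | hc
    · obtain ⟨z, rfl⟩ := exists_eq_neg_smul hc.ne x
      rw [Prod.smul_mk, smul_smul, smul_eq_mul, mul_neg, extend_neg _ _ _ _ hc,
        extend_neg _ _ _ _ (mul_neg_of_pos_of_neg ha hc)]
    · simpa [extend_zero] using hφ.smul_le a x ha
    · obtain ⟨z, rfl⟩ := exists_eq_neg_smul hc.ne' x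
      rw [Prod.smul_mk, smul_smul, smul_eq_mul, mul_neg, extend_pos _ _ _ _ hc,
        extend_pos _ _ _ _ (mul_pos ha hc)]

/-- A sign valuation on a countable vector space extends to one more dimension, with any
prescribed value at the new basis vector. -/
theorem exists_extension
    (hcn : ∀ a b : L, ∃ x y : L, a ⊔ b = a ⊔ y ∧ a ⊔ b = x ⊔ b ∧ x ⊓ y = ⊥)
    [Countable V] (hφ : IsSignValuation k φ) (a : L) :
    ∃ ψ : V × k → L, IsSignValuation k ψ ∧ (∀ x, ψ (x, 0) = φ x) ∧ ψ (0, 1) = a := by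
  obtain ⟨up, lo, h, ha⟩ := hφ.isComparison.exists_cut hcn 0 a
  refine ⟨extend φ up lo, hφ.extend_isSignValuation h, extend_zero φ up lo, ?_⟩
  simpa [ha] using extend_pos φ up lo 0 (one_pos (α := k))

end IsSignValuation

end SignValuation

section Transfinite

variable {k : Type u} [DivisionRing k] [LinearOrder k]
  {L : Type v} [DistribLattice L] [OrderBot L]

theorem exists_wellOrder_countable_initialSegments {α : Type*}
    (hα : Cardinal.mk α ≤ Cardinal.aleph 1) :
    ∃ r : α → α → Prop, IsWellOrder α r ∧ ∀ a, Countable {b | r b a} := by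
  obtain ⟨r, hr, h⟩ := Cardinal.exists_ord_eq α
  refine ⟨r, hr, fun a => ?_⟩
  have h₁ : Ordinal.typein r a < (Cardinal.mk α).ord := h ▸ Ordinal.typein_lt_type r a
  have h₂ : Cardinal.mk {b // r b a} < Cardinal.aleph 1 := (Cardinal.lt_ord.1 h₁).trans_le hα
  rw [← Cardinal.succ_aleph0, Order.lt_succ_iff] at h₂
  exact Cardinal.mk_le_aleph0_iff.1 h₂

/-- A sign valuation on the vectors supported in `S`, an initial segment of `L` with respect
to `r`, taking the value `a` at the basis vector indexed by `a`. -/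
structure IsPartialValuation (k : Type*) [DivisionRing k] [LinearOrder k] {L : Type*}
    [DistribLattice L] [OrderBot L] (r : L → L → Prop) (S : Set L) (φ : (L →₀ k) → L) :
    Prop where
  initial : ∀ a ∈ S, ∀ b, r b a → b ∈ S
  isSignValuation : IsSignValuation k fun x : Finsupp.supported k k S => φ x
  single : ∀ a ∈ S, φ (Finsupp.single a 1) = a

theorem IsPartialValuation.exists_upperBound {r : L → L → Prop}
    {ι : Type*} [Nonempty ι] {S : ι → Set L} {φ : ι → (L →₀ k) → L}
    (h : ∀ i, IsPartialValuation k r (S i) (φ i))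
    (hchain : ∀ i j, ∃ m, (S i ⊆ S m ∧ ∀ x ∈ Finsupp.supported k k (S i), φ m x = φ i x) ∧
      (S j ⊆ S m ∧ ∀ x ∈ Finsupp.supported k k (S j), φ m x = φ j x)) :
    ∃ (S' : Set L) (φ' : (L →₀ k) → L), IsPartialValuation k r S' φ' ∧
      ∀ i, S i ⊆ S' ∧ ∀ x ∈ Finsupp.supported k k (S i), φ' x = φ i x := by
  classical
  let φ' : (L →₀ k) → L := fun x =>
    if hx : ∃ i, x ∈ Finsupp.supported k k (S i) then φ hx.choose x else ⊥
  have hφ' : ∀ i, ∀ x ∈ Finsupp.supported k k (S i), φ' x = φ i x := fun i x hx => by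
    have hx' : ∃ i, x ∈ Finsupp.supported k k (S i) := ⟨i, hx⟩
    obtain ⟨m, h₁, h₂⟩ := hchain i hx'.choose
    simp only [φ', dif_pos hx', ← h₁.2 x hx, h₂.2 x hx'.choose_spec]
  have hdir : Directed (· ≤ ·) fun i => Finsupp.supported k k (S i) := fun i j => by
    obtain ⟨m, h₁, h₂⟩ := hchain i j
    exact ⟨m, Finsupp.supported_mono h₁.1, Finsupp.supported_mono h₂.1⟩
  have hmem : ∀ x : Finsupp.supported k k (⋃ i, S i), ∃ i, (x : L →₀ k) ∈
      Finsupp.supported k k (S i) := fun x => by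
    rw [← Submodule.mem_iSup_of_directed _ hdir, ← Finsupp.supported_iUnion]
    exact x.2
  refine ⟨⋃ i, S i, φ', ⟨?_, ⟨?_, ?_, ?_⟩, ?_⟩, fun i => ⟨Set.subset_iUnion S i, hφ' i⟩⟩
  · intro a ha b hb
    obtain ⟨i, hi⟩ := Set.mem_iUnion.1 ha
    exact Set.mem_iUnion.2 ⟨i, (h i).initial a hi b hb⟩
  · intro x
    obtain ⟨i, hi⟩ := hmem x
    simpa only [NegMemClass.coe_neg, hφ' i _ hi, hφ' i _ (neg_mem hi)] using
      (h i).isSignValuation.inf_neg ⟨x, hi⟩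
  · intro x y
    obtain ⟨i, hi⟩ := hmem x
    obtain ⟨j, hj⟩ := hmem y
    obtain ⟨m, hm, hm'⟩ := hdir i j
    simpa only [Submodule.coe_add, hφ' m _ (hm hi), hφ' m _ (hm' hj),
      hφ' m _ (add_mem (hm hi) (hm' hj))] using
      (h m).isSignValuation.add_le ⟨x, hm hi⟩ ⟨y, hm' hj⟩
  · intro c x hc
    obtain ⟨i, hi⟩ := hmem x
    simpa only [Submodule.coe_smul, hφ' i _ hi, hφ' i _ (Submodule.smul_mem _ c hi)] using
      (h i).isSignValuation.smul_le c ⟨x, hi⟩ hc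
  · intro a ha
    obtain ⟨i, hi⟩ := Set.mem_iUnion.1 ha
    rw [hφ' i _ (Finsupp.single_mem_supported k 1 hi), (h i).single a hi]

theorem IsPartialValuation.exists_insert [IsStrictOrderedRing k] [Countable k]
    (hcn : ∀ a b : L, ∃ x y : L, a ⊔ b = a ⊔ y ∧ a ⊔ b = x ⊔ b ∧ x ⊓ y = ⊥)
    {r : L → L → Prop} {S : Set L} {φ : (L →₀ k) → L} (h : IsPartialValuation k r S φ)
    [Countable S] {a : L} (ha : a ∉ S) (haS : ∀ b, r b a → b ∈ S) :
    ∃ φ' : (L →₀ k) → L, IsPartialValuation k r (insert a S) φ' ∧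
      ∀ x ∈ Finsupp.supported k k S, φ' x = φ x := by
  classical
  have : Countable (Finsupp.supported k k S) :=
    (Finsupp.supportedEquivFinsupp (M := k) (R := k) S).toEquiv.countable_iff.2 inferInstance
  obtain ⟨ψ, hψ, hψφ, hψa⟩ := h.isSignValuation.exists_extension hcn a
  have hres : ∀ x ∈ Finsupp.supported k k S,
      ψ (Finsupp.restrictDom k k S x, x a) = φ x := fun x hx => by
    rw [(Finsupp.mem_supported' k x).1 hx a ha, hψφ]
    congr 1
    exact congrArg Subtype.val
      (LinearMap.congr_fun (Finsupp.restrictDom_comp_subtype (M := k) (R := k) S) ⟨x, hx⟩)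
  refine ⟨fun x => ψ (Finsupp.restrictDom k k S x, x a), ⟨?_, ?_, ?_⟩, hres⟩
  · rintro b (rfl | hb) c hc
    · exact Or.inr (haS c hc)
    · exact Or.inr (h.initial b hb c hc)
  · exact (hψ.comp ((Finsupp.restrictDom k k S).prod (Finsupp.lapply a))).comp
      (W := Finsupp.supported k k (insert a S)) (Submodule.subtype _)
  · rintro b (rfl | hb)
    · have hb : Finsupp.restrictDom k k S (Finsupp.single b 1) = 0 :=
        Subtype.ext (Finsupp.filter_single_of_neg _ ha)
      rw [hb, Finsupp.single_eq_same, hψa]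
    · rw [hres _ (Finsupp.single_mem_supported k 1 hb), h.single b hb]

theorem exists_isSignValuation_surjective_finsupp [IsStrictOrderedRing k] [Countable k]
    (hcn : ∀ a b : L, ∃ x y : L, a ⊔ b = a ⊔ y ∧ a ⊔ b = x ⊔ b ∧ x ⊓ y = ⊥)
    (hcard : Cardinal.mk L ≤ Cardinal.aleph 1) :
    ∃ φ : (L →₀ k) → L, IsSignValuation k φ ∧ Function.Surjective φ := by
  obtain ⟨r, hr, hcount⟩ := exists_wellOrder_countable_initialSegments hcard
  let T := {p : Set L × ((L →₀ k) → L) // IsPartialValuation k r p.1 p.2}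
  let le : T → T → Prop := fun p q => p.1.1 ⊆ q.1.1 ∧
    ∀ x ∈ Finsupp.supported k k p.1.1, q.1.2 x = p.1.2 x
  have le_refl : ∀ p, le p p := fun p => ⟨subset_rfl, fun _ _ => rfl⟩
  have : Nonempty T := by
    refine ⟨⟨(∅, fun _ => ⊥), ⟨by simp, ⟨?_, ?_, ?_⟩, by simp⟩⟩⟩ <;> simp
  obtain ⟨⟨⟨S, φ⟩, h⟩, hmax⟩ := exists_maximal_of_nonempty_chains_bounded (r := le)
    (fun c hc hne => by
      have : Nonempty c := hne.to_subtype
      obtain ⟨S', φ', h', hub⟩ := IsPartialValuation.exists_upperBound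
        (fun i : c => i.1.2) (fun i j => by
          by_cases hij : i.1 = j.1
          · exact ⟨i, le_refl i.1, hij ▸ le_refl i.1⟩
          rcases hc i.2 j.2 hij with hij | hij
          · exact ⟨j, hij, le_refl j.1⟩
          · exact ⟨i, le_refl i.1, hij⟩)
      exact ⟨⟨(S', φ'), h'⟩, fun p hp => hub ⟨p, hp⟩⟩)
    (fun {p q s} hpq hqs => ⟨hpq.1.trans hqs.1, fun x hx =>
      (hqs.2 x (Finsupp.supported_mono hpq.1 hx)).trans (hpq.2 x hx)⟩)
  have hS : S = Set.univ := by
    by_contra hne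
    obtain ⟨a, ha, hmin⟩ := hr.wf.has_min Sᶜ (Set.nonempty_compl.2 hne)
    have haS : ∀ b, r b a → b ∈ S := fun b hb => by
      by_contra hbS
      exact hmin b hbS hb
    have hSa : S ⊆ {b | r b a} := fun b hb => by
      rcases trichotomous_of r b a with hba | rfl | hab
      · exact hba
      · exact absurd hb ha
      · exact absurd (h.initial b hb a hab) ha
    have : Countable S := ((hcount a).to_set.mono hSa).to_subtype
    obtain ⟨φ', h', hφ'⟩ := h.exists_insert hcn ha haS
    exact ha ((hmax ⟨(insert a S, φ'), h'⟩ ⟨Set.subset_insert a S, hφ'⟩).1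
      (Set.mem_insert a S))
  subst hS
  exact ⟨φ, h.isSignValuation.comp
      (LinearMap.id.codRestrict (Finsupp.supported k k Set.univ) (by simp)),
    fun a => ⟨Finsupp.single a 1, h.single a trivial⟩⟩

theorem exists_isSignValuation_surjective (k : Type u) [DivisionRing k] [LinearOrder k]
    [IsStrictOrderedRing k] [Countable k]
    (hcn : ∀ a b : L, ∃ x y : L, a ⊔ b = a ⊔ y ∧ a ⊔ b = x ⊔ b ∧ x ⊓ y = ⊥)
    (hcard : Cardinal.mk L ≤ Cardinal.aleph 1) :
    ∃ (V : Type v) (_ : AddCommGroup V) (_ : Module k V) (φ : V → L),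
      IsSignValuation k φ ∧ Function.Surjective φ := by
  obtain ⟨φ, hφ, hsurj⟩ := exists_isSignValuation_surjective_finsupp (k := k) hcn hcard
  have : Small.{v} (L →₀ k) :=
    ⟨L →₀ Shrink.{v} k, ⟨(Finsupp.mapRange.addEquiv (Shrink.addEquiv.symm)).toEquiv⟩⟩
  exact ⟨Shrink.{v} (L →₀ k), inferInstance, inferInstance, _,
    hφ.comp (Shrink.linearEquiv k (L →₀ k)).toLinearMap,
    hsurj.comp (Shrink.linearEquiv k (L →₀ k)).surjective⟩

end Transfinite

section Realization

variable {k : Type u} [DivisionRing k] [LinearOrder k]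
  {L : Type v} [DistribLattice L] [OrderBot L]

theorem exists_isPrime_of_not_le {α : Type*} [DistribLattice α] {a b : α} (h : ¬a ≤ b) :
    ∃ P : Order.Ideal α, P.IsPrime ∧ b ∈ P ∧ a ∉ P := by
  have hdisj : Disjoint (Order.PFilter.principal a : Set α) (Order.Ideal.principal b : Set α) :=
    Set.disjoint_left.2 fun x hx hx' => h ((Order.PFilter.mem_principal.1 hx).trans
      (Order.Ideal.mem_principal.1 hx'))
  obtain ⟨P, hP, hb, ha⟩ := DistribLattice.prime_ideal_of_disjoint_filter_ideal hdisj
  exact ⟨P, hP, Order.Ideal.principal_le_iff.1 hb,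
    Set.disjoint_left.1 ha (Order.PFilter.mem_principal.2 le_rfl)⟩

/-- A totally ordered vector space with a linear map from `V` under which `pos` becomes
positivity. -/
structure OrderedQuotient (k : Type u) [DivisionRing k] [LinearOrder k] {V : Type v}
    [AddCommGroup V] [Module k V] (pos : V → Prop) where
  carrier : Type v
  [grp : AddCommGroup carrier]
  [mod : Module k carrier]
  [ord : LinearOrder carrier]
  [ordered : IsOrderedAddMonoid carrier]
  smul_nonneg : ∀ (c : k) (x : carrier), 0 < c → 0 ≤ x → 0 ≤ c • x
  proj : V →ₗ[k] carrier
  proj_pos : ∀ x, 0 < proj x ↔ pos x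

attribute [instance] OrderedQuotient.grp OrderedQuotient.mod OrderedQuotient.ord
  OrderedQuotient.ordered

variable [IsStrictOrderedRing k] {V : Type v} [AddCommGroup V] [Module k V] {φ : V → L}

/-- The vectors that vanish at the prime ideal `P`. -/
def IsSignValuation.kernel (hφ : IsSignValuation k φ) (P : Order.Ideal L) : Submodule k V where
  carrier := {x | φ x ∈ P ∧ φ (-x) ∈ P}
  zero_mem' := by simp [hφ.map_zero]
  add_mem' {x y} hx hy :=
    ⟨P.lower (hφ.add_le x y) (P.sup_mem hx.1 hy.1),
      P.lower ((congrArg φ (neg_add x y)).trans_le (hφ.add_le (-x) (-y)))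
        (P.sup_mem hx.2 hy.2)⟩
  smul_mem' c x hx := by
    rcases lt_trichotomy c 0 with hc | rfl | hc
    · have hc' := neg_pos.2 hc
      refine ⟨P.lower ?_ hx.2, P.lower ?_ hx.1⟩
      · simpa using hφ.smul_le (-c) (-x) hc'
      · simpa using hφ.smul_le (-c) x hc'
    · simp [hφ.map_zero]
    · refine ⟨P.lower (hφ.smul_le c x hc) hx.1, P.lower ?_ hx.2⟩
      simpa using hφ.smul_le c (-x) hc

theorem IsSignValuation.nonempty_orderedQuotient (hφ : IsSignValuation k φ)
    {P : Order.Ideal L} (hP : P.IsPrime) :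
    Nonempty (OrderedQuotient k fun x => φ x ∉ P) := by
  classical
  let K := hφ.kernel P
  let C : AddGroupCone (V ⧸ K) :=
    { carrier := {t | ∃ x, K.mkQ x = t ∧ φ (-x) ∈ P}
      zero_mem' := ⟨0, by simp, by simp [hφ.map_zero]⟩
      add_mem' := by
        rintro _ _ ⟨x, rfl, hx⟩ ⟨y, rfl, hy⟩
        refine ⟨x + y, map_add _ _ _, ?_⟩
        rw [neg_add]
        exact P.lower (hφ.add_le _ _) (P.sup_mem hx hy)
      eq_zero_of_mem_of_neg_mem' := by
        rintro _ ⟨x, rfl, hx⟩ ⟨y, hy, hy'⟩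
        have hyx : y + x ∈ K := by
          rw [← Submodule.Quotient.mk_eq_zero, ← Submodule.mkQ_apply, map_add, hy,
            neg_add_cancel]
        rw [Submodule.mkQ_apply, Submodule.Quotient.mk_eq_zero]
        refine ⟨?_, hx⟩
        have := hφ.add_le (y + x) (-y)
        rw [add_neg_cancel_comm] at this
        exact P.lower this (P.sup_mem hyx.1 hy') }
  have hC : ∀ x, K.mkQ x ∈ C ↔ φ (-x) ∈ P := fun x => by
    refine ⟨?_, fun hx => ⟨x, rfl, hx⟩⟩
    rintro ⟨y, hyx, hy⟩
    have hyx' : y - x ∈ K := by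
      rw [← Submodule.Quotient.mk_eq_zero, ← Submodule.mkQ_apply, map_sub, hyx, sub_self]
    have := hφ.add_le (y - x) (-y)
    rw [show y - x + -y = -x by abel] at this
    exact P.lower this (P.sup_mem hyx'.1 hy)
  have htotal : HasMemOrNegMem C := ⟨fun t => by
    obtain ⟨x, rfl⟩ := K.mkQ_surjective t
    rw [← map_neg, hC, hC, neg_neg]
    exact (hP.mem_or_mem (by rw [hφ.inf_neg]; exact P.bot_mem)).symm⟩
  let : LinearOrder (V ⧸ K) := LinearOrder.mkOfAddGroupCone C
  have : IsOrderedAddMonoid (V ⧸ K) := IsOrderedAddMonoid.mkOfCone C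
  have hnonneg : ∀ t : V ⧸ K, 0 ≤ t ↔ t ∈ C := fun t => by
    change t - 0 ∈ C ↔ t ∈ C
    rw [sub_zero]
  refine ⟨⟨V ⧸ K, fun c t hc ht => ?_, K.mkQ, fun x => ?_⟩⟩
  · obtain ⟨x, rfl⟩ := K.mkQ_surjective t
    rw [hnonneg, hC] at ht
    rw [← map_smul, hnonneg, hC, ← smul_neg]
    exact P.lower (hφ.smul_le c _ hc) ht
  · rw [← not_le, ← neg_nonneg, ← map_neg, hnonneg, hC, neg_neg]

/-- The closure of a set under binary suprema and infima. -/
inductive LatticeSpan {E : Type*} [Lattice E] (s : Set E) : E → Prop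
  | basic {x : E} : x ∈ s → LatticeSpan s x
  | sup {x y : E} : LatticeSpan s x → LatticeSpan s y → LatticeSpan s (x ⊔ y)
  | inf {x y : E} : LatticeSpan s x → LatticeSpan s y → LatticeSpan s (x ⊓ y)

theorem LatticeSpan.map {E E' : Type*} [Lattice E] [Lattice E'] {s : Set E} {t : Set E'}
    {f : E → E'} (hs : ∀ x ∈ s, LatticeSpan t (f x)) (hsup : ∀ x y, f (x ⊔ y) = f x ⊔ f y)
    (hinf : ∀ x y, f (x ⊓ y) = f x ⊓ f y) {x : E} (hx : LatticeSpan s x) :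
    LatticeSpan t (f x) := by
  induction hx with
  | basic hx => exact hs _ hx
  | sup _ _ ihx ihy => exact hsup _ _ ▸ ihx.sup ihy
  | inf _ _ ihx ihy => exact hinf _ _ ▸ ihx.inf ihy

theorem LatticeSpan.map_antitone {E E' : Type*} [Lattice E] [Lattice E'] {s : Set E}
    {t : Set E'} {f : E → E'} (hs : ∀ x ∈ s, LatticeSpan t (f x))
    (hsup : ∀ x y, f (x ⊔ y) = f x ⊓ f y) (hinf : ∀ x y, f (x ⊓ y) = f x ⊔ f y) {x : E}
    (hx : LatticeSpan s x) : LatticeSpan t (f x) := by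
  induction hx with
  | basic hx => exact hs _ hx
  | sup _ _ ihx ihy => exact hsup _ _ ▸ ihx.inf ihy
  | inf _ _ ihx ihy => exact hinf _ _ ▸ ihx.sup ihy

/-- The sublattice generated by a subspace of a product of totally ordered vector spaces, as a
subspace. -/
def latticeSpanSubmodule {ι : Type*} {T : ι → Type*} [∀ i, AddCommGroup (T i)]
    [∀ i, Module k (T i)] [∀ i, LinearOrder (T i)] [∀ i, IsOrderedAddMonoid (T i)]
    (hsmul : ∀ i (c : k) (x : T i), 0 < c → 0 ≤ x → 0 ≤ c • x)
    (W : Submodule k (∀ i, T i)) : Submodule k (∀ i, T i) where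
  carrier := {a | LatticeSpan (W : Set (∀ i, T i)) a}
  zero_mem' := .basic W.zero_mem
  add_mem' {a b} ha hb := by
    refine LatticeSpan.map (f := fun x => x + b) (fun x hx => ?_)
      (fun _ _ => sup_add _ _ _) (fun _ _ => inf_add _ _ _) ha
    exact LatticeSpan.map (f := fun y => x + y) (fun y hy => .basic (W.add_mem hx hy))
      (fun _ _ => add_sup _ _ _) (fun _ _ => add_inf _ _ _) hb
  smul_mem' c a ha := by
    have hmono : ∀ c : k, 0 < c → ∀ i, Monotone fun x : T i => c • x := fun c hc i x y hxy => by
      rw [← sub_nonneg, ← smul_sub]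
      exact hsmul i c _ hc (sub_nonneg.2 hxy)
    have hanti : ∀ c : k, c < 0 → ∀ i, Antitone fun x : T i => c • x := fun c hc i x y hxy => by
      have := hmono (-c) (neg_pos.2 hc) i hxy
      simpa using this
    have hbasic : ∀ x ∈ (W : Set (∀ i, T i)), LatticeSpan (W : Set (∀ i, T i)) (c • x) :=
      fun x hx => .basic (W.smul_mem c hx)
    rcases lt_trichotomy c 0 with hc | rfl | hc
    · exact LatticeSpan.map_antitone hbasic (fun x y => funext fun i => (hanti c hc i).map_max)
        (fun x y => funext fun i => (hanti c hc i).map_min) ha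
    · rw [zero_smul]
      exact .basic W.zero_mem
    · exact LatticeSpan.map hbasic (fun x y => funext fun i => (hmono c hc i).map_max)
        (fun x y => funext fun i => (hmono c hc i).map_min) ha

theorem IsSignValuation.exists_vectorLattice (hφ : IsSignValuation k φ)
    (hsurj : Function.Surjective φ) :
    ∃ (F : VectorLatticeOver.{u, v} k) (g : Set F.carrier → L),
      (∀ l : L, ∃ a : F.carrier, 0 ≤ a ∧ g (principalLIdeal a) = l) ∧
      (∀ a b : F.carrier, 0 ≤ a → 0 ≤ b →
        g (principalLIdeal (a ⊔ b)) = g (principalLIdeal a) ⊔ g (principalLIdeal b) ∧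
        g (principalLIdeal (a ⊓ b)) = g (principalLIdeal a) ⊓ g (principalLIdeal b)) := by
  classical
  let ι := {P : Order.Ideal L // P.IsPrime}
  let Q : ∀ P : ι, OrderedQuotient k fun x => φ x ∉ P.1 := fun P =>
    (hφ.nonempty_orderedQuotient P.2).some
  let E := ∀ P : ι, (Q P).carrier
  let π : V →ₗ[k] E := LinearMap.pi fun P => (Q P).proj
  let M : Submodule k E := latticeSpanSubmodule (fun P => (Q P).smul_nonneg) (LinearMap.range π)
  let : Lattice M := Subtype.lattice (fun _ _ ha hb => LatticeSpan.sup ha hb)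
    (fun _ _ ha hb => LatticeSpan.inf ha hb)
  let F : VectorLatticeOver.{u, v} k :=
    { carrier := M
      add_le_add_left' := fun a b hab c P => add_le_add_right ((hab : a.1 ≤ b.1) P) (c.1 P)
      smul_nonneg' := fun c x hc hx P => (Q P).smul_nonneg c _ hc ((hx : 0 ≤ x.1) P) }
  have hunique : ∀ l m : L, (∀ P : ι, l ∉ P.1 ↔ m ∉ P.1) → l = m := fun l m h => by
    refine le_antisymm ?_ ?_ <;> by_contra hle <;>
      obtain ⟨P, hP, h₁, h₂⟩ := exists_isPrime_of_not_le hle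
    · exact (h ⟨P, hP⟩).1 h₂ h₁
    · exact (h ⟨P, hP⟩).2 h₂ h₁
  have hsup : ∀ (P : ι) (l m : L), l ⊔ m ∉ P.1 ↔ l ∉ P.1 ∨ m ∉ P.1 := fun P l m => by
    rw [Order.Ideal.sup_mem_iff, not_and_or]
  have hinf : ∀ (P : ι) (l m : L), l ⊓ m ∉ P.1 ↔ l ∉ P.1 ∧ m ∉ P.1 := fun P l m => by
    rw [← not_or, not_iff_not]
    exact ⟨P.2.mem_or_mem, fun h => h.elim (P.1.lower inf_le_left) (P.1.lower inf_le_right)⟩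
  have hsupport : ∀ a : E, LatticeSpan (LinearMap.range π : Set E) a →
      ∃ l : L, ∀ P : ι, l ∉ P.1 ↔ 0 < a P := fun a ha => by
    induction ha with
    | basic hx =>
      obtain ⟨x, rfl⟩ := hx
      exact ⟨φ x, fun P => ((Q P).proj_pos x).symm⟩
    | sup _ _ ihx ihy =>
      obtain ⟨l, hl⟩ := ihx
      obtain ⟨m, hm⟩ := ihy
      exact ⟨l ⊔ m, fun P => by rw [hsup, hl, hm, Pi.sup_apply, lt_sup_iff]⟩
    | inf _ _ ihx ihy =>
      obtain ⟨l, hl⟩ := ihx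
      obtain ⟨m, hm⟩ := ihy
      exact ⟨l ⊓ m, fun P => by rw [hinf, hl, hm, Pi.inf_apply, lt_inf_iff]⟩
  let g : Set M → L := fun s =>
    if h : ∃ l : L, ∀ P : ι, l ∉ P.1 ↔ ∃ x ∈ s, 0 < x.1 P then h.choose else ⊥
  have hprincipal : ∀ a : M, 0 ≤ a → ∀ P : ι,
      (∃ x ∈ principalLIdeal a, 0 < x.1 P) ↔ 0 < a.1 P := fun a ha P => by
    constructor
    · rintro ⟨x, ⟨n, hn⟩, hx⟩
      have h₁ : x.1 P ≤ n • a.1 P := (le_sup_left.trans hn : x ≤ n • a) P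
      by_contra hle
      have h₂ : n • a.1 P ≤ 0 := nsmul_nonpos (not_lt.1 hle) n
      exact absurd hx (h₁.trans h₂).not_gt
    · refine fun h => ⟨a, ⟨1, ?_⟩, h⟩
      rw [one_smul]
      refine sup_le le_rfl fun P => ?_
      exact (neg_nonpos.2 (ha P)).trans (ha P)
  have hg : ∀ a : M, 0 ≤ a → ∀ P : ι, g (principalLIdeal a) ∉ P.1 ↔ 0 < a.1 P :=
    fun a ha P => by
      have h : ∃ l : L, ∀ P : ι, l ∉ P.1 ↔ ∃ x ∈ principalLIdeal a, 0 < x.1 P := by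
        simpa only [hprincipal a ha] using hsupport a.1 a.2
      simp only [g, dif_pos h, ← hprincipal a ha]
      exact h.choose_spec P
  refine ⟨F, g, fun l => ?_, fun a b ha hb => ⟨?_, ?_⟩⟩
  · obtain ⟨x, rfl⟩ := hsurj l
    let a : M := ⟨π x, .basic ⟨x, rfl⟩⟩ ⊔ 0
    have ha : 0 ≤ a := le_sup_right
    refine ⟨a, ha, hunique _ _ fun P => (hg a ha P).trans ?_⟩
    change 0 < (Q P).proj x ⊔ 0 ↔ _
    simp [(Q P).proj_pos]
  · refine hunique _ _ fun P => ?_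
    rw [hsup, hg a ha, hg b hb]
    exact (hg (a ⊔ b) (le_sup_of_le_left ha) P).trans lt_sup_iff
  · refine hunique _ _ fun P => ?_
    rw [hinf, hg a ha, hg b hb]
    exact (hg (a ⊓ b) (le_inf ha hb) P).trans lt_inf_iff

end Realization

/-- for a countable totally ordered division ring `k`, every completely
normal distributive `0`-lattice `L` with at most `ℵ₁` elements is the image of a
surjective lattice homomorphism from `Idc F` for some vector lattice `F` over `k`.
The surjective lattice homomorphism `Idc F ↠ L` is encoded by a map `g` on sets of
elements of `F`, applied to the principal `ℓ`-ideals `⟨a⟩` for `a ∈ F⁺` (every element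
of `Idc F` has this form, joins and meets in `Idc F` being `⟨a ⊔ b⟩` and `⟨a ⊓ b⟩`). -/
theorem stmt0 (k : Type u) [DivisionRing k] [LinearOrder k]
    [CovariantClass k k (· + ·) (· < ·)] [PosMulStrictMono k] [MulPosStrictMono k]
    [Countable k]
    (L : Type v) [DistribLattice L] [OrderBot L]
    (hcn : ∀ a b : L, ∃ x y : L, a ⊔ b = a ⊔ y ∧ a ⊔ b = x ⊔ b ∧ x ⊓ y = ⊥)
    (hcard : Cardinal.mk L ≤ Cardinal.aleph 1) :
    ∃ (F : VectorLatticeOver.{u, v} k) (g : Set F.carrier → L),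
      (∀ l : L, ∃ a : F.carrier, 0 ≤ a ∧ g (principalLIdeal a) = l) ∧
      (∀ a b : F.carrier, 0 ≤ a → 0 ≤ b →
        g (principalLIdeal (a ⊔ b)) = g (principalLIdeal a) ⊔ g (principalLIdeal b) ∧
        g (principalLIdeal (a ⊓ b)) = g (principalLIdeal a) ⊓ g (principalLIdeal b)) := by
  have : IsOrderedAddMonoid k :=
    { add_le_add_left := fun a b hab c => by
        rcases hab.eq_or_lt with rfl | hab
        · exact le_rfl
        · rw [add_comm a, add_comm b]
          exact (CovariantClass.elim c hab).le }
  have : IsStrictOrderedRing k := .of_mul_pos fun a b ha hb => mul_pos ha hb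
  obtain ⟨V, _, _, φ, hφ, hsurj⟩ := exists_isSignValuation_surjective k hcn hcard
  exact hφ.exists_vectorLattice hsurj
end

section
/- Every completely normal distributive 0-lattice L with at most ℵ₁ elements is the image of a surjective lattice homomorphism from Idc F for some Abelian ℓ-group F. -/
universe v

/-- An Abelian `ℓ`-group: an abelian group endowed with a translation-invariant
lattice order. -/
structure AbelianLGroup where
  carrier : Type v
  [lat : Lattice carrier]
  [grp : AddCommGroup carrier]
  add_le_add_left' : ∀ a b : carrier, a ≤ b → ∀ c : carrier, c + a ≤ c + b

attribute [instance] AbelianLGroup.lat AbelianLGroup.grp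

open Order

/-- Complete normality of a distributive lattice with zero. -/
def IsCompletelyNormal (L : Type*) [DistribLattice L] [OrderBot L] : Prop :=
  ∀ a b : L, ∃ x y : L, a ⊔ b = a ⊔ y ∧ a ⊔ b = x ⊔ b ∧ x ⊓ y = ⊥

section Lattice

variable {L : Type*} [DistribLattice L] [OrderBot L]

/-- In a completely normal lattice, the prime ideals above a given prime ideal form a chain. -/
lemma IsCompletelyNormal.le_or_ge (hL : IsCompletelyNormal L) {I J K : Ideal L}
    (hI : I.IsPrime) (hJ : I ≤ J) (hK : I ≤ K) : J ≤ K ∨ K ≤ J := by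
  by_contra! h
  obtain ⟨u, huJ, huK⟩ := Set.not_subset.1 h.1
  obtain ⟨v, hvK, hvJ⟩ := Set.not_subset.1 h.2
  obtain ⟨x, y, h₁, h₂, h₃⟩ := hL u v
  rcases hI.mem_or_mem (h₃ ▸ I.bot_mem : x ⊓ y ∈ I) with hx | hy
  · exact huK (K.lower (le_sup_left.trans h₂.le) (Ideal.sup_mem (hK hx) hvK))
  · exact hvJ (J.lower (le_sup_right.trans h₁.le) (Ideal.sup_mem huJ (hJ hy)))

/-- An ideal which contains no relative difference of `p` by `q` lies in a prime ideal
containing `q` but not `p`. -/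
lemma exists_prime_of_forall_not_le (I : Ideal L) {p q : L} (h : ∀ t ∈ I, ¬ p ≤ t ⊔ q) :
    ∃ J : Ideal L, J.IsPrime ∧ I ≤ J ∧ q ∈ J ∧ p ∉ J := by
  have hd : Disjoint (PFilter.principal p : Set L) (I ⊔ Ideal.principal q : Ideal L) := by
    refine Set.disjoint_left.2 fun x hx hx' ↦ ?_
    obtain ⟨t, ht, hxt⟩ := (Lattice.mem_ideal_sup_principal _ _ _).1 hx'
    exact h t ht (le_trans (PFilter.mem_principal.1 hx) hxt)
  obtain ⟨J, hJ, hle, hdJ⟩ := DistribLattice.prime_ideal_of_disjoint_filter_ideal hd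
  exact ⟨J, hJ, le_sup_left.trans hle, hle (le_sup_right (a := I) Ideal.mem_principal_self),
    fun hp ↦ Set.disjoint_left.1 hdJ (PFilter.mem_principal.2 le_rfl) hp⟩

lemma le_of_forall_prime {a b : L} (h : ∀ I : Ideal L, I.IsPrime → b ∈ I → a ∈ I) : a ≤ b := by
  by_contra hab
  obtain ⟨J, hJ, -, hb, ha⟩ := exists_prime_of_forall_not_le (⊥ : Ideal L) (p := a) (q := b) (by
    intro t ht
    rw [← Ideal.principal_bot, Ideal.mem_principal, le_bot_iff] at ht
    simpa [ht] using hab)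
  exact ha (h J hJ hb)

/-- An ideal containing no common upper bound of the relative differences of `p k` by `q k`
lies in a prime ideal containing some `q k` but not `p k`. -/
lemma exists_prime_of_forall_exists_not_le {κ : Type*} (T : Finset κ) (p q : κ → L) (I : Ideal L)
    (h : ∀ t ∈ I, ∃ k ∈ T, ¬ p k ≤ t ⊔ q k) :
    ∃ k ∈ T, ∃ J : Ideal L, J.IsPrime ∧ I ≤ J ∧ q k ∈ J ∧ p k ∉ J := by
  suffices h' : ∃ k ∈ T, ∀ t ∈ I, ¬ p k ≤ t ⊔ q k by
    obtain ⟨k, hk, hk'⟩ := h'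
    exact ⟨k, hk, exists_prime_of_forall_not_le I hk'⟩
  by_contra! h'
  choose! t ht hpt using h'
  obtain ⟨k, hk, hk'⟩ := h (T.sup t) ((Ideal.finsetSup_mem_iff I).2 ht)
  exact hk' ((hpt k hk).trans (sup_le_sup_right (Finset.le_sup hk) _))

/-- Simultaneous separation of two finite families of relative differences by disjoint elements. -/
lemma IsCompletelyNormal.exists_disjoint (hL : IsCompletelyNormal L) {κ : Type*} (T : Finset κ)
    (p q r s : κ → L)
    (h : ∀ k ∈ T, ∀ m ∈ T, ∀ J K : Ideal L, J.IsPrime → K.IsPrime → p k ∉ J → q k ∈ J →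
      r m ∉ K → s m ∈ K → ¬ J ≤ K ∧ ¬ K ≤ J) :
    ∃ α β : L, α ⊓ β = ⊥ ∧ ∀ k ∈ T, p k ≤ α ⊔ q k ∧ r k ≤ β ⊔ s k := by
  by_contra! hne
  let S : Set L := {c | ∃ α β, (∀ k ∈ T, p k ≤ α ⊔ q k) ∧ (∀ k ∈ T, r k ≤ β ⊔ s k) ∧ α ⊓ β ≤ c}
  have hp : ∀ k ∈ T, p k ≤ T.sup p ⊔ q k := fun k hk ↦ (Finset.le_sup hk).trans le_sup_left
  have hr : ∀ k ∈ T, r k ≤ T.sup r ⊔ s k := fun k hk ↦ (Finset.le_sup hk).trans le_sup_left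
  have hS : IsPFilter S := by
    refine IsPFilter.of_def ⟨_, _, _, hp, hr, le_rfl⟩ ?_ ?_
    · rintro c ⟨α, β, hα, hβ, hc⟩ c' ⟨α', β', hα', hβ', hc'⟩
      refine ⟨c ⊓ c', ⟨α ⊓ α', β ⊓ β', fun k hk ↦ ?_, fun k hk ↦ ?_, ?_⟩, inf_le_left, inf_le_right⟩
      · rw [sup_inf_right]; exact le_inf (hα k hk) (hα' k hk)
      · rw [sup_inf_right]; exact le_inf (hβ k hk) (hβ' k hk)
      · rw [inf_inf_inf_comm]; exact inf_le_inf hc hc'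
    · rintro c c' hcc ⟨α, β, hα, hβ, hc⟩
      exact ⟨α, β, hα, hβ, hc.trans hcc⟩
  have hd : Disjoint (hS.toPFilter : Set L) (⊥ : Ideal L) := by
    refine Set.disjoint_left.2 fun x hx hx' ↦ ?_
    rw [← Ideal.principal_bot, SetLike.mem_coe, Ideal.mem_principal, le_bot_iff] at hx'
    obtain ⟨α, β, hα, hβ, hc⟩ : x ∈ S := hx
    obtain ⟨k, hk, hk'⟩ := hne α β (le_bot_iff.1 (hx' ▸ hc))
    exact hk' (hα k hk) (hβ k hk)
  obtain ⟨I, hI, -, hSI⟩ := DistribLattice.prime_ideal_of_disjoint_filter_ideal hd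
  have hSI' : ∀ c ∈ I, c ∉ S := fun c hc hcS ↦ Set.disjoint_left.1 hSI hcS hc
  obtain ⟨k, hk, J, hJ, hIJ, hqJ, hpJ⟩ := exists_prime_of_forall_exists_not_le T p q I (by
    intro t ht
    by_contra! ht'
    exact hSI' t ht ⟨t, _, ht', hr, inf_le_left⟩)
  obtain ⟨m, hm, K, hK, hIK, hsK, hrK⟩ := exists_prime_of_forall_exists_not_le T r s I (by
    intro t ht
    by_contra! ht'
    exact hSI' t ht ⟨_, t, hp, ht', inf_le_right⟩)
  have := h k hk m hm J K hJ hK hpJ hqJ hrK hsK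
  rcases hL.le_or_ge hI hIJ hIK with hle | hle <;> tauto

lemma exists_between_of_pairwise_le_sup {L : Type*} [DistribLattice L] {κ : Type*} {T : Finset κ}
    (hT : T.Nonempty) (α : L) (p q u : κ → L) (hα : ∀ k ∈ T, p k ≤ α ⊔ q k)
    (hu : ∀ k ∈ T, ∀ m ∈ T, p k ≤ q k ⊔ u m) :
    ∃ α' ≤ α, ∀ k ∈ T, p k ≤ α' ⊔ q k ∧ α' ≤ u k := by
  refine ⟨α ⊓ T.inf' hT u, inf_le_left, fun k hk ↦ ⟨?_, inf_le_right.trans (Finset.inf'_le _ hk)⟩⟩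
  rw [sup_inf_right]
  refine le_inf (hα k hk) ?_
  rw [sup_comm, Finset.inf'_sup_distrib_left]
  exact Finset.le_inf' _ _ fun m hm ↦ hu k hk m hm

lemma IsCompletelyNormal.exists_disjoint_between (hL : IsCompletelyNormal L) {κ : Type*}
    (T : Finset κ) (p q q' r s s' : κ → L)
    (hp : ∀ k ∈ T, p k ⊓ q' k = ⊥) (hr : ∀ k ∈ T, r k ⊓ s' k = ⊥)
    (hps : ∀ k ∈ T, ∀ m ∈ T, p k ≤ q k ⊔ (s m ⊔ s' m))
    (hrq : ∀ k ∈ T, ∀ m ∈ T, r k ≤ s k ⊔ (q m ⊔ q' m)) :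
    ∃ α β : L, α ⊓ β = ⊥ ∧ ∀ k ∈ T,
      p k ≤ α ⊔ q k ∧ r k ≤ β ⊔ s k ∧ α ≤ s k ⊔ s' k ∧ β ≤ q k ⊔ q' k := by
  rcases T.eq_empty_or_nonempty with rfl | hT
  · exact ⟨⊥, ⊥, by simp, by simp⟩
  obtain ⟨α, β, hαβ, h⟩ := hL.exists_disjoint T p q r s (by
    intro k hk m hm J K hJ hK hpJ hqJ hrK hsK
    refine ⟨fun hle ↦ ?_, fun hle ↦ ?_⟩
    · have hq' : q' k ∈ J := (hJ.mem_or_mem (hp k hk ▸ J.bot_mem : p k ⊓ q' k ∈ J)).resolve_left hpJ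
      exact hrK (K.lower (hrq m hm k hk) (Ideal.sup_mem hsK (hle (Ideal.sup_mem hqJ hq'))))
    · have hs' : s' m ∈ K := (hK.mem_or_mem (hr m hm ▸ K.bot_mem : r m ⊓ s' m ∈ K)).resolve_left hrK
      exact hpJ (J.lower (hps k hk m hm) (Ideal.sup_mem hqJ (hle (Ideal.sup_mem hsK hs')))))
  obtain ⟨α', hα', h₁⟩ := exists_between_of_pairwise_le_sup hT α p q (fun k ↦ s k ⊔ s' k)
    (fun k hk ↦ (h k hk).1) hps
  obtain ⟨β', hβ', h₂⟩ := exists_between_of_pairwise_le_sup hT β r s (fun k ↦ q k ⊔ q' k)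
    (fun k hk ↦ (h k hk).2) hrq
  exact ⟨α', β', le_bot_iff.1 (hαβ ▸ inf_le_inf hα' hβ'),
    fun k hk ↦ ⟨(h₁ k hk).1, (h₂ k hk).1, (h₁ k hk).2, (h₂ k hk).2⟩⟩

end Lattice

/-- Well-founded dependent choice: the value at `i` may be constrained by the values below `i`. -/
lemma exists_forall_of_exists_extension {ι X : Type*} [Preorder ι] [WellFoundedLT ι] [Nonempty X]
    (R : ι → (ι → X) → X → Prop)
    (hloc : ∀ i f g y, (∀ j < i, f j = g j) → R i f y → R i g y)
    (hex : ∀ i f, (∀ j < i, R j f (f j)) → ∃ y, R i f y) :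
    ∃ f : ι → X, ∀ i, R i f (f i) := by
  classical
  have hlt : WellFounded ((· < ·) : ι → ι → Prop) := wellFounded_lt
  let ext (i : ι) (rec : ∀ j, j < i → X) (j : ι) : X :=
    if h : j < i then rec j h else Classical.arbitrary X
  let f : ι → X := hlt.fix fun i rec ↦ Classical.epsilon (R i (ext i rec))
  refine ⟨f, fun i ↦ ?_⟩
  induction i using hlt.induction with
  | _ i ih =>
    have hagree : ∀ j < i, f j = ext i (fun j _ ↦ f j) j := fun j hj ↦ by simp [ext, hj]
    have hf : f i = Classical.epsilon (R i (ext i fun j _ ↦ f j)) := hlt.fix_eq _ i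
    rw [hf]
    refine hloc i _ f _ (fun j hj ↦ (hagree j hj).symm) (Classical.epsilon_spec (hex i _ ?_))
    intro j hj
    rw [← hagree j hj]
    exact hloc j f _ _ (fun k hk ↦ hagree k (hk.trans hj)) (ih j hj)

section Cevian

variable {L : Type*} [DistribLattice L] [OrderBot L]

/-- A binary difference operation with values in a distributive lattice with zero. -/
structure IsCevian {H : Type*} (D : H → H → L) : Prop where
  self (w : H) : D w w = ⊥
  disjoint (w w' : H) : D w w' ⊓ D w' w = ⊥
  triangle (w w' w'' : H) : D w w'' ≤ D w w' ⊔ D w' w''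

/-- `A w` and `B w` behave like the truth values of `0 < x + w` and `x + w < 0`, where
`D w w'` is the truth value of `w' < w`. -/
structure IsCutPair {H : Type*} (D : H → H → L) (A B : H → L) (w w' : H) : Prop where
  left_le : A w ≤ A w' ⊔ D w w'
  right_le : B w ≤ B w' ⊔ D w' w
  diff_le : D w w' ≤ A w ⊔ B w'

/-- Extension of a cut from a finite set by one more point. -/
lemma IsCompletelyNormal.exists_cut_extension (hL : IsCompletelyNormal L) {H : Type*}
    {D : H → H → L} (hD : IsCevian D) (S : Finset H) (w : H) (A B : H → L)
    (hdisj : ∀ v ∈ S, A v ⊓ B v = ⊥) (hcut : ∀ v ∈ S, ∀ v' ∈ S, IsCutPair D A B v v') :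
    ∃ α β : L, α ⊓ β = ⊥ ∧ ∀ v ∈ S, α ≤ A v ⊔ D w v ∧ A v ≤ α ⊔ D v w ∧ β ≤ B v ⊔ D v w ∧
      B v ≤ β ⊔ D w v ∧ D w v ≤ α ⊔ B v ∧ D v w ≤ A v ⊔ β := by
  have hA : ∀ v ∈ S, ∀ v' ∈ S, A v ≤ D v w ⊔ (D w v' ⊔ A v') := fun v hv v' hv' ↦
    (hcut v hv v' hv').left_le.trans (sup_le (le_sup_right.trans le_sup_right)
      ((hD.triangle v w v').trans (sup_le le_sup_left (le_sup_left.trans le_sup_right))))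
  have hB : ∀ v ∈ S, ∀ v' ∈ S, B v ≤ D w v ⊔ (D v' w ⊔ B v') := fun v hv v' hv' ↦
    (hcut v hv v' hv').right_le.trans (sup_le (le_sup_right.trans le_sup_right)
      ((hD.triangle v' w v).trans (sup_le (le_sup_left.trans le_sup_right) le_sup_left)))
  have hDw : ∀ v ∈ S, ∀ v' ∈ S, D w v ≤ B v ⊔ (D w v' ⊔ A v') := fun v hv v' hv' ↦
    (hD.triangle w v' v).trans (sup_le (le_sup_left.trans le_sup_right)
      ((hcut v' hv' v hv).diff_le.trans (sup_le (le_sup_right.trans le_sup_right) le_sup_left)))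
  have hDv : ∀ v ∈ S, ∀ v' ∈ S, D v w ≤ A v ⊔ (D v' w ⊔ B v') := fun v hv v' hv' ↦
    (hD.triangle v v' w).trans (sup_le ((hcut v hv v' hv').diff_le.trans
      (sup_le le_sup_left (le_sup_right.trans le_sup_right))) (le_sup_left.trans le_sup_right))
  obtain ⟨α, β, hαβ, h⟩ := hL.exists_disjoint_between (S ×ˢ (Finset.univ : Finset Bool))
    (fun k ↦ bif k.2 then A k.1 else D w k.1) (fun k ↦ bif k.2 then D k.1 w else B k.1)
    (fun k ↦ bif k.2 then B k.1 else D k.1 w)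
    (fun k ↦ bif k.2 then B k.1 else D k.1 w) (fun k ↦ bif k.2 then D w k.1 else A k.1)
    (fun k ↦ bif k.2 then A k.1 else D w k.1)
    (by
      rintro ⟨v, _ | _⟩ hv <;> have hv := (Finset.mem_product.1 hv).1
      · exact hD.disjoint w v
      · exact hdisj v hv)
    (by
      rintro ⟨v, _ | _⟩ hv <;> have hv := (Finset.mem_product.1 hv).1
      · exact hD.disjoint v w
      · exact (inf_comm _ _).trans (hdisj v hv))
    (by
      rintro ⟨v, _ | _⟩ hv ⟨v', _ | _⟩ hv' <;> have hv := (Finset.mem_product.1 hv).1 <;>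
        have hv' := (Finset.mem_product.1 hv').1
      · exact (hDw v hv v' hv').trans_eq (by simp only [cond_false, sup_comm])
      · exact hDw v hv v' hv'
      · exact (hA v hv v' hv').trans_eq (by simp only [cond_false, cond_true, sup_comm])
      · exact hA v hv v' hv')
    (by
      rintro ⟨v, _ | _⟩ hv ⟨v', _ | _⟩ hv' <;> have hv := (Finset.mem_product.1 hv).1 <;>
        have hv' := (Finset.mem_product.1 hv').1
      · exact (hDv v hv v' hv').trans_eq (by simp only [cond_false, sup_comm])
      · exact hDv v hv v' hv'
      · exact (hB v hv v' hv').trans_eq (by simp only [cond_false, cond_true, sup_comm])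
      · exact hB v hv v' hv')
  refine ⟨α, β, hαβ, fun v hv ↦ ?_⟩
  obtain ⟨h₁, h₂, h₃, h₄⟩ := h (v, true) (by simp [hv])
  obtain ⟨h₅, h₆, -, -⟩ := h (v, false) (by simp [hv])
  simp only [cond_true, cond_false] at *
  exact ⟨h₃.trans_eq (sup_comm _ _), h₁, h₄.trans_eq (sup_comm _ _), h₂, h₅,
    h₆.trans_eq (sup_comm _ _)⟩

lemma IsCompletelyNormal.exists_cut_nat (hL : IsCompletelyNormal L) {D : ℕ → ℕ → L}
    (hD : IsCevian D) (l : L) :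
    ∃ A B : ℕ → L, A 0 = l ∧ (∀ n, A n ⊓ B n = ⊥) ∧ ∀ m n, IsCutPair D A B m n := by
  let R (n : ℕ) (f : ℕ → L × L) (y : L × L) : Prop :=
    (n = 0 → y.1 = l) ∧ y.1 ⊓ y.2 = ⊥ ∧ ∀ m < n,
      y.1 ≤ (f m).1 ⊔ D n m ∧ (f m).1 ≤ y.1 ⊔ D m n ∧ y.2 ≤ (f m).2 ⊔ D m n ∧
      (f m).2 ≤ y.2 ⊔ D n m ∧ D n m ≤ y.1 ⊔ (f m).2 ∧ D m n ≤ (f m).1 ⊔ y.2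
  have key : ∀ (N : ℕ) (f : ℕ → L × L), (∀ j < N, R j f (f j)) → ∀ m < N, ∀ n < N,
      IsCutPair D (fun k ↦ (f k).1) (fun k ↦ (f k).2) m n := by
    intro N f hf m hm n hn
    rcases lt_trichotomy m n with h | rfl | h
    · obtain ⟨-, -, h'⟩ := hf n hn
      obtain ⟨h₁, h₂, h₃, h₄, h₅, h₆⟩ := h' m h
      exact ⟨h₂, h₄, h₆⟩
    · exact ⟨le_sup_left, le_sup_left, (hD.self m).trans_le bot_le⟩
    · obtain ⟨-, -, h'⟩ := hf m hm
      obtain ⟨h₁, h₂, h₃, h₄, h₅, h₆⟩ := h' n h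
      exact ⟨h₁, h₃, h₅⟩
  obtain ⟨f, hf⟩ := exists_forall_of_exists_extension R
    (by
      rintro i f g y hfg ⟨h₀, h₁, h₂⟩
      exact ⟨h₀, h₁, fun m hm ↦ hfg m hm ▸ h₂ m hm⟩)
    (by
      intro i f hf
      rcases Nat.eq_zero_or_pos i with rfl | hi
      · exact ⟨(l, ⊥), by simp [R]⟩
      obtain ⟨α, β, hαβ, h⟩ := hL.exists_cut_extension hD (Finset.range i) i
        (fun k ↦ (f k).1) (fun k ↦ (f k).2)
        (fun v hv ↦ (hf v (Finset.mem_range.1 hv)).2.1)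
        (fun v hv v' hv' ↦ key i f hf v (Finset.mem_range.1 hv) v' (Finset.mem_range.1 hv'))
      exact ⟨(α, β), by omega, hαβ, fun m hm ↦ h m (Finset.mem_range.2 hm)⟩)
  exact ⟨fun k ↦ (f k).1, fun k ↦ (f k).2, (hf 0).1 rfl, fun n ↦ (hf n).2.1,
    fun m n ↦ key (max m n + 1) f (fun j _ ↦ hf j) m (by omega) n (by omega)⟩

/-- A Cevian operation on a countable set admits a cut with a prescribed value at a point. -/
lemma IsCompletelyNormal.exists_cut (hL : IsCompletelyNormal L) {H : Type*} [Countable H]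
    {D : H → H → L} (hD : IsCevian D) (h₀ : H) (l : L) :
    ∃ A B : H → L, A h₀ = l ∧ (∀ w, A w ⊓ B w = ⊥) ∧ ∀ w w', IsCutPair D A B w w' := by
  have : Nonempty H := ⟨h₀⟩
  obtain ⟨e, he⟩ := exists_surjective_nat H
  let e' : ℕ → H := fun n ↦ Nat.casesOn n h₀ e
  have he' : ∀ w, ∃ n, e' n = w := fun w ↦ (he w).elim fun n hn ↦ ⟨n + 1, hn⟩
  choose t ht using he'
  obtain ⟨A, B, h0, hdisj, hcut⟩ := hL.exists_cut_nat (D := fun m n ↦ D (e' m) (e' n))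
    ⟨fun _ ↦ hD.self _, fun _ _ ↦ hD.disjoint _ _, fun _ _ _ ↦ hD.triangle _ _ _⟩ l
  refine ⟨A ∘ t, B ∘ t, ?_, fun w ↦ hdisj _, fun w w' ↦ ?_⟩
  · have h₁ := (hcut (t h₀) 0).left_le
    have h₂ := (hcut 0 (t h₀)).left_le
    have : e' 0 = h₀ := rfl
    simp only [ht, this, hD.self, sup_bot_eq] at h₁ h₂
    exact (le_antisymm h₁ h₂).trans h0
  · obtain ⟨h₁, h₂, h₃⟩ := hcut (t w) (t w')
    simp only [ht] at h₁ h₂ h₃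
    exact ⟨h₁, h₂, h₃⟩

end Cevian

section Valuation

variable {L : Type*} [DistribLattice L] [OrderBot L] {E : Type*} [AddCommGroup E] [Module ℚ E]

/-- `μ u` behaves on `W` like the truth value of `0 < u`. -/
structure IsSignValuation_s1 (μ : E → L) (W : Submodule ℚ E) : Prop where
  smul {q : ℚ} (hq : 0 < q) {u : E} (hu : u ∈ W) : μ (q • u) = μ u
  disjoint {u : E} (hu : u ∈ W) : μ u ⊓ μ (-u) = ⊥
  add_le {u v : E} (hu : u ∈ W) (hv : v ∈ W) : μ (u + v) ≤ μ u ⊔ μ v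

namespace IsSignValuation_s1

variable {μ ν : E → L} {V W : Submodule ℚ E}

lemma zero (h : IsSignValuation_s1 μ W) : μ 0 = ⊥ := by
  simpa using h.disjoint W.zero_mem

lemma congr (h : IsSignValuation_s1 μ W) (hν : ∀ u ∈ W, ν u = μ u) : IsSignValuation_s1 ν W where
  smul hq u hu := by rw [hν _ (W.smul_mem _ hu), hν _ hu, h.smul hq hu]
  disjoint hu := by rw [hν _ hu, hν _ (W.neg_mem hu), h.disjoint hu]
  add_le hu hv := by
    rw [hν _ hu, hν _ hv, hν _ (W.add_mem hu hv)]
    exact h.add_le hu hv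

lemma of_directed
    (h : ∀ u ∈ W, ∀ v ∈ W, ∃ V : Submodule ℚ E, u ∈ V ∧ v ∈ V ∧ IsSignValuation_s1 μ V) :
    IsSignValuation_s1 μ W where
  smul hq u hu := by
    obtain ⟨V, hV, -, h'⟩ := h u hu u hu
    exact h'.smul hq hV
  disjoint {u} hu := by
    obtain ⟨V, hV, -, h'⟩ := h u hu u hu
    exact h'.disjoint hV
  add_le {u v} hu hv := by
    obtain ⟨V, hu', hv', h'⟩ := h u hu v hv
    exact h'.add_le hu' hv'

lemma isCevian (h : IsSignValuation_s1 μ V) {H : Type*} (x : H → E) (hx : ∀ a b, x a - x b ∈ V) :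
    IsCevian fun a b ↦ μ (x a - x b) where
  self a := by simpa using h.zero
  disjoint a b := by simpa using h.disjoint (hx a b)
  triangle a b c := by simpa using h.add_le (hx a b) (hx b c)

end IsSignValuation_s1

/-- A sign valuation on the kernel of a linear form `c`, and a cut on the affine hyperplane
`c = 1`, define a sign valuation on the whole space. -/
lemma IsSignValuation_s1.of_cut {μ ν : E → L} {W : Submodule ℚ E} (c : E →ₗ[ℚ] ℚ)
    (hker : IsSignValuation_s1 μ (W ⊓ LinearMap.ker c)) (A B : E → L)
    (hdisj : ∀ w ∈ W, c w = 1 → A w ⊓ B w = ⊥)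
    (hcut : ∀ w ∈ W, c w = 1 → ∀ w' ∈ W, c w' = 1 → IsCutPair (fun a b ↦ μ (a - b)) A B w w')
    (hzero : ∀ u, c u = 0 → ν u = μ u)
    (hpos : ∀ (t : ℚ) w, 0 < t → c w = 1 → ν (t • w) = A w)
    (hneg : ∀ (t : ℚ) w, t < 0 → c w = 1 → ν (t • w) = B w) :
    IsSignValuation_s1 ν W := by
  have hsub : ∀ w ∈ W, c w = 1 → ∀ w' ∈ W, c w' = 1 → w - w' ∈ W ⊓ LinearMap.ker c :=
    fun w hw hc w' hw' hc' ↦ ⟨W.sub_mem hw hw', by simp [hc, hc']⟩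
  have hrep : ∀ u ∈ W, c u ≠ 0 → ∃ t : ℚ, ∃ w ∈ W, c w = 1 ∧ t ≠ 0 ∧ u = t • w := fun u hu hc ↦
    ⟨c u, (c u)⁻¹ • u, W.smul_mem _ hu, by simp [hc], hc, by simp [smul_smul, hc]⟩
  have hadd₀ : ∀ t : ℚ, t ≠ 0 → ∀ w ∈ W, c w = 1 → ∀ v ∈ W, c v = 0 →
      ν (t • w + v) ≤ ν (t • w) ⊔ ν v := by
    intro t ht w hw hcw v hv hcv
    have hw' : w + t⁻¹ • v ∈ W := W.add_mem hw (W.smul_mem _ hv)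
    have hcw' : c (w + t⁻¹ • v) = 1 := by simp [hcw, hcv]
    have heq : t • w + v = t • (w + t⁻¹ • v) := by simp [smul_add, smul_smul, ht]
    have hvk : v ∈ W ⊓ LinearMap.ker c := ⟨hv, hcv⟩
    have hcut' := hcut _ hw' hcw' w hw hcw
    rw [heq, hzero v hcv]
    rcases ht.lt_or_gt with ht | ht
    · rw [hneg _ _ ht hcw', hneg _ _ ht hcw]
      have := hcut'.right_le
      rwa [show w - (w + t⁻¹ • v) = (-t⁻¹) • v by module,
        hker.smul (by simpa using ht) hvk] at this
    · rw [hpos _ _ ht hcw', hpos _ _ ht hcw]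
      have := hcut'.left_le
      rwa [show w + t⁻¹ • v - w = t⁻¹ • v by module, hker.smul (by simpa using ht) hvk] at this
  have hmix : ∀ t : ℚ, 0 < t → ∀ t' : ℚ, t' < 0 → ∀ w ∈ W, c w = 1 → ∀ w' ∈ W, c w' = 1 →
      ν (t • w + t' • w') ≤ ν (t • w) ⊔ ν (t' • w') := by
    intro t ht t' ht' w hw hcw w' hw' hcw'
    rw [hpos t w ht hcw, hneg t' w' ht' hcw']
    have hD := (hcut w hw hcw w' hw' hcw').diff_le
    obtain hs | hs := eq_or_ne (t + t') 0
    · obtain rfl : t' = -t := by linarith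
      rw [show t • w + (-t) • w' = t • (w - w') by module,
        hzero _ (by simp [hcw, hcw']), hker.smul ht (hsub w hw hcw w' hw' hcw')]
      exact hD
    obtain ⟨s, hst⟩ : ∃ s, s = t + t' := ⟨_, rfl⟩
    obtain ⟨b, hb⟩ : ∃ b, s * b = t' := ⟨t' / s, by rw [hst]; field_simp⟩
    have heq : t • w + t' • w' = s • (w + b • (w' - w)) := by
      rw [show t = s - s * b by linarith, ← hb]; module
    have hw'' : w + b • (w' - w) ∈ W := W.add_mem hw (W.smul_mem _ (W.sub_mem hw' hw))
    have hcw'' : c (w + b • (w' - w)) = 1 := by simp [hcw, hcw']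
    rw [heq]
    rw [← hst] at hs
    rcases hs.lt_or_gt with hs | hs
    · rw [hneg _ _ hs hcw'']
      have := (hcut _ hw'' hcw'' w' hw' hcw').right_le
      rw [show w' - (w + b • (w' - w)) = (b - 1) • (w - w') by module,
        hker.smul (by nlinarith) (hsub w hw hcw w' hw' hcw')] at this
      exact this.trans (sup_le le_sup_right hD)
    · rw [hpos _ _ hs hcw'']
      have := (hcut _ hw'' hcw'' w hw hcw).left_le
      rw [show w + b • (w' - w) - w = (-b) • (w - w') by module,
        hker.smul (by nlinarith) (hsub w hw hcw w' hw' hcw')] at this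
      exact this.trans (sup_le le_sup_left hD)
  have hconvex : ∀ t t' : ℚ, 0 < t * t' → ∀ w ∈ W, c w = 1 → ∀ w' ∈ W, c w' = 1 →
      ν (t • w + t' • w') ≤ ν (t • w) ⊔ ν (t' • w') := by
    intro t t' htt w hw hcw w' hw' hcw'
    have hdis := hker.disjoint (hsub w hw hcw w' hw' hcw')
    rw [neg_sub] at hdis
    have hcombine : ∀ x y z : L, x ≤ y ⊔ μ (w - w') → x ≤ z ⊔ μ (w' - w) → x ≤ y ⊔ z := by
      intro x y z hy hz
      have := le_inf (hy.trans (sup_le_sup_right (le_sup_left (b := z)) _))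
        (hz.trans (sup_le_sup_right (le_sup_right (a := y)) _))
      rwa [← sup_inf_left, hdis, sup_bot_eq] at this
    have hs : t + t' ≠ 0 := by
      intro h
      rw [eq_neg_of_add_eq_zero_right h] at htt
      nlinarith [sq_nonneg t]
    obtain ⟨b, hb⟩ : ∃ b, (t + t') * b = t' := ⟨t' / (t + t'), by field_simp⟩
    have heq : t • w + t' • w' = (t + t') • (w + b • (w' - w)) := by
      obtain ⟨s, hst⟩ : ∃ s, s = t + t' := ⟨_, rfl⟩
      rw [← hst] at hb ⊢
      rw [show t = s - s * b by linarith, ← hb]; module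
    have hw'' : w + b • (w' - w) ∈ W := W.add_mem hw (W.smul_mem _ (W.sub_mem hw' hw))
    have hcw'' : c (w + b • (w' - w)) = 1 := by simp [hcw, hcw']
    rw [heq]
    have hcut₁ := hcut _ hw'' hcw'' w hw hcw
    have hcut₂ := hcut _ hw'' hcw'' w' hw' hcw'
    rcases pos_and_pos_or_neg_and_neg_of_mul_pos htt with ⟨ht, ht'⟩ | ⟨ht, ht'⟩
    · have hb₀ : 0 < b := by nlinarith
      have hb₁ : 0 < 1 - b := by nlinarith
      rw [hpos _ _ (by linarith) hcw'', hpos _ _ ht hcw, hpos _ _ ht' hcw']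
      have h₁ := hcut₁.left_le
      have h₂ := hcut₂.left_le
      rw [show w + b • (w' - w) - w = b • (w' - w) by module,
        hker.smul hb₀ (hsub w' hw' hcw' w hw hcw)] at h₁
      rw [show w + b • (w' - w) - w' = (1 - b) • (w - w') by module,
        hker.smul hb₁ (hsub w hw hcw w' hw' hcw')] at h₂
      exact (hcombine _ _ _ h₂ h₁).trans_eq (sup_comm _ _)
    · have hb₀ : 0 < b := by nlinarith
      have hb₁ : 0 < 1 - b := by nlinarith
      rw [hneg _ _ (by linarith) hcw'', hneg _ _ ht hcw, hneg _ _ ht' hcw']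
      have h₁ := hcut₁.right_le
      have h₂ := hcut₂.right_le
      rw [show w - (w + b • (w' - w)) = b • (w - w') by module,
        hker.smul hb₀ (hsub w hw hcw w' hw' hcw')] at h₁
      rw [show w' - (w + b • (w' - w)) = (1 - b) • (w' - w) by module,
        hker.smul hb₁ (hsub w' hw' hcw' w hw hcw)] at h₂
      exact hcombine _ _ _ h₁ h₂
  refine ⟨fun {q} hq {u} hu ↦ ?_, fun {u} hu ↦ ?_, fun {u v} hu hv ↦ ?_⟩
  · by_cases hc : c u = 0
    · rw [hzero _ hc, hzero _ (by simp [hc]), hker.smul hq ⟨hu, hc⟩]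
    obtain ⟨t, w, hw, hcw, ht, rfl⟩ := hrep u hu hc
    rw [smul_smul]
    rcases ht.lt_or_gt with ht | ht
    · rw [hneg _ _ ht hcw, hneg _ _ (mul_neg_of_pos_of_neg hq ht) hcw]
    · rw [hpos _ _ ht hcw, hpos _ _ (mul_pos hq ht) hcw]
  · by_cases hc : c u = 0
    · rw [hzero _ hc, hzero _ (by simp [hc]), hker.disjoint ⟨hu, hc⟩]
    obtain ⟨t, w, hw, hcw, ht, rfl⟩ := hrep u hu hc
    rw [← neg_smul]
    rcases ht.lt_or_gt with ht | ht
    · rw [hneg _ _ ht hcw, hpos _ _ (neg_pos.2 ht) hcw, inf_comm, hdisj w hw hcw]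
    · rw [hpos _ _ ht hcw, hneg _ _ (neg_neg_iff_pos.2 ht) hcw, hdisj w hw hcw]
  · by_cases hcu : c u = 0 <;> by_cases hcv : c v = 0
    · rw [hzero _ hcu, hzero _ hcv, hzero _ (by simp [hcu, hcv])]
      exact hker.add_le ⟨hu, hcu⟩ ⟨hv, hcv⟩
    · obtain ⟨t, w, hw, hcw, ht, rfl⟩ := hrep v hv hcv
      rw [add_comm, sup_comm]
      exact hadd₀ t ht w hw hcw u hu hcu
    · obtain ⟨t, w, hw, hcw, ht, rfl⟩ := hrep u hu hcu
      exact hadd₀ t ht w hw hcw v hv hcv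
    · obtain ⟨t, w, hw, hcw, ht, rfl⟩ := hrep u hu hcu
      obtain ⟨t', w', hw', hcw', ht', rfl⟩ := hrep v hv hcv
      rcases ht.lt_or_gt with ht | ht <;> rcases ht'.lt_or_gt with ht' | ht'
      · exact hconvex t t' (mul_pos_of_neg_of_neg ht ht') w hw hcw w' hw' hcw'
      · rw [add_comm, sup_comm]
        exact hmix t' ht' t ht w' hw' hcw' w hw hcw
      · exact hmix t ht t' ht' w hw hcw w' hw' hcw'
      · exact hconvex t t' (mul_pos ht ht') w hw hcw w' hw' hcw'

/-- A sign valuation extends from the kernel of a linear form on a countable space, with a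
prescribed value at a point outside the kernel. -/
lemma IsCompletelyNormal.exists_signValuation_extension (hL : IsCompletelyNormal L) {μ : E → L}
    {W : Submodule ℚ E} (hW : Countable W) (c : E →ₗ[ℚ] ℚ)
    (hker : IsSignValuation_s1 μ (W ⊓ LinearMap.ker c)) {e : E} (he : e ∈ W) (hce : c e = 1) (l : L) :
    ∃ ν : E → L, IsSignValuation_s1 ν W ∧ (∀ u, c u = 0 → ν u = μ u) ∧ ν e = l := by
  classical
  let H := {u : W // c u = 1}
  obtain ⟨A, B, hA, hdisj, hcut⟩ := hL.exists_cut (H := H)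
    (hker.isCevian (fun u : H ↦ (u.1 : E)) fun a b ↦
      ⟨W.sub_mem a.1.2 b.1.2, by simp [a.2, b.2]⟩) ⟨⟨e, he⟩, hce⟩ l
  let A' (u : E) : L := if h : u ∈ W ∧ c u = 1 then A ⟨⟨u, h.1⟩, h.2⟩ else ⊥
  let B' (u : E) : L := if h : u ∈ W ∧ c u = 1 then B ⟨⟨u, h.1⟩, h.2⟩ else ⊥
  have hA' : ∀ w (hw : w ∈ W) (hc : c w = 1), A' w = A ⟨⟨w, hw⟩, hc⟩ :=
    fun w hw hc ↦ dif_pos ⟨hw, hc⟩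
  have hB' : ∀ w (hw : w ∈ W) (hc : c w = 1), B' w = B ⟨⟨w, hw⟩, hc⟩ :=
    fun w hw hc ↦ dif_pos ⟨hw, hc⟩
  let ν (u : E) : L :=
    if c u = 0 then μ u else if 0 < c u then A' ((c u)⁻¹ • u) else B' ((c u)⁻¹ • u)
  have hzero : ∀ u, c u = 0 → ν u = μ u := fun u hu ↦ if_pos hu
  have hpos : ∀ (t : ℚ) w, 0 < t → c w = 1 → ν (t • w) = A' w := by
    intro t w ht hw
    simp [ν, hw, ht, ht.ne', smul_smul]
  have hneg : ∀ (t : ℚ) w, t < 0 → c w = 1 → ν (t • w) = B' w := by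
    intro t w ht hw
    simp [ν, hw, ht.ne, ht.not_gt, smul_smul]
  refine ⟨ν, IsSignValuation_s1.of_cut c hker A' B' ?_ ?_ hzero hpos hneg, hzero, ?_⟩
  · intro w hw hc
    rw [hA' w hw hc, hB' w hw hc, hdisj]
  · intro w hw hc w' hw' hc'
    obtain ⟨h₁, h₂, h₃⟩ := hcut ⟨⟨w, hw⟩, hc⟩ ⟨⟨w', hw'⟩, hc'⟩
    constructor
    · rwa [hA' w hw hc, hA' w' hw' hc']
    · rwa [hB' w hw hc, hB' w' hw' hc']
    · rwa [hA' w hw hc, hB' w' hw' hc']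
  · rw [← one_smul ℚ e, hpos 1 e one_pos hce, hA' e he hce, hA]

/-- Sign valuations on a free rational vector space whose basis is well-ordered with countable
initial segments, with prescribed values on the basis. -/
lemma IsCompletelyNormal.exists_signValuation (hL : IsCompletelyNormal L) {ι : Type*}
    [LinearOrder ι] [WellFoundedLT ι] (hι : ∀ i : ι, (Set.Iio i).Countable) (l : ι → L) :
    ∃ μ : (ι →₀ ℚ) → L, IsSignValuation_s1 μ ⊤ ∧ ∀ i, μ (Finsupp.single i 1) = l i := by
  classical
  let glue (f : ι → (ι →₀ ℚ) → L) (v : ι →₀ ℚ) : L :=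
    if h : v.support.Nonempty then f (v.support.max' h) v else ⊥
  have glue_zero : ∀ f, glue f 0 = ⊥ := fun f ↦ by simp [glue]
  have glue_eq : ∀ f v (h : v.support.Nonempty), glue f v = f (v.support.max' h) v :=
    fun f v h ↦ dif_pos h
  have hdirected : ∀ (f : ι → (ι →₀ ℚ) → L) (P : ι → Prop) (W : Submodule ℚ (ι →₀ ℚ)),
      (∀ u ∈ W, ∀ i ∈ u.support, P i) →
      (∀ i, P i → IsSignValuation_s1 (glue f) (Finsupp.supported ℚ ℚ (Set.Iic i))) →
      IsSignValuation_s1 (glue f) W := by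
    intro f P W hWP hP
    refine IsSignValuation_s1.of_directed fun u hu v hv ↦ ?_
    rcases (u.support ∪ v.support).eq_empty_or_nonempty with h | h
    · simp only [Finset.union_eq_empty, Finsupp.support_eq_empty] at h
      refine ⟨⊥, by simp [h.1], by simp [h.2], ?_⟩
      constructor <;> simp [glue_zero]
    · refine ⟨_, fun k hk ↦ ?_, fun k hk ↦ ?_, hP ((u.support ∪ v.support).max' h) ?_⟩
      · exact Finset.le_max' _ _ (Finset.mem_union_left _ hk)
      · exact Finset.le_max' _ _ (Finset.mem_union_right _ hk)
      · rcases Finset.mem_union.1 ((u.support ∪ v.support).max'_mem h) with h' | h'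
        · exact hWP u hu _ h'
        · exact hWP v hv _ h'
  have hglue : ∀ f i, (∀ v ∈ Finsupp.supported ℚ ℚ (Set.Iio i), f i v = glue f v) →
      ∀ v ∈ Finsupp.supported ℚ ℚ (Set.Iic i), glue f v = f i v := by
    intro f i hf v hv
    by_cases hvi : v ∈ Finsupp.supported ℚ ℚ (Set.Iio i)
    · exact (hf v hvi).symm
    obtain ⟨k, hk, hki⟩ := Set.not_subset.1 hvi
    obtain rfl : k = i := le_antisymm (hv hk) (not_lt.1 hki)
    have hne : v.support.Nonempty := ⟨k, hk⟩
    have : v.support.max' hne = k := le_antisymm (Finset.max'_le _ _ _ hv) (Finset.le_max' _ _ hk)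
    rw [glue_eq f v hne, this]
  let R (i : ι) (f : ι → (ι →₀ ℚ) → L) (y : (ι →₀ ℚ) → L) : Prop :=
    IsSignValuation_s1 y (Finsupp.supported ℚ ℚ (Set.Iic i)) ∧
    (∀ v ∈ Finsupp.supported ℚ ℚ (Set.Iio i), y v = glue f v) ∧ y (Finsupp.single i 1) = l i
  obtain ⟨f, hf⟩ := exists_forall_of_exists_extension R
    (by
      rintro i f g y hfg ⟨h₁, h₂, h₃⟩
      refine ⟨h₁, fun v hv ↦ (h₂ v hv).trans ?_, h₃⟩
      by_cases hne : v.support.Nonempty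
      · rw [glue_eq f v hne, glue_eq g v hne, hfg _ (hv (v.support.max'_mem hne))]
      · rw [Finset.not_nonempty_iff_eq_empty, Finsupp.support_eq_empty] at hne
        rw [hne, glue_zero, glue_zero])
    (by
      intro i f hf
      have hcount : Countable (Finsupp.supported ℚ ℚ (Set.Iic i)) := by
        have : Countable (Set.Iic i) := by
          rw [← Set.Iio_insert]
          exact ((hι i).insert i).to_subtype
        exact (Finsupp.supportedEquivFinsupp (M := ℚ) (R := ℚ) (Set.Iic i)).toEquiv.countable_iff.2
          inferInstance
      have hker : Finsupp.supported ℚ ℚ (Set.Iic i) ⊓ LinearMap.ker (Finsupp.lapply i) ≤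
          Finsupp.supported ℚ ℚ (Set.Iio i) := by
        rintro u ⟨hu, hui⟩ k hk
        refine lt_of_le_of_ne (hu hk) ?_
        rintro rfl
        exact (Finsupp.mem_support_iff.1 hk) hui
      obtain ⟨ν, hν, hν₀, hνl⟩ := hL.exists_signValuation_extension hcount
        (Finsupp.lapply i) (μ := glue f) (hdirected f (· < i) _ (fun u hu k hk ↦ hker hu hk)
          (fun j hj ↦ (hf j hj).1.congr (hglue f j (hf j hj).2.1)))
        (Finsupp.single_mem_supported ℚ (1 : ℚ) (Set.self_mem_Iic (a := i))) (by simp) (l i)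
      refine ⟨ν, hν, fun v hv ↦ hν₀ v ?_, hνl⟩
      exact Finsupp.notMem_support_iff.1 fun h ↦ lt_irrefl i (hv h))
  refine ⟨glue f, hdirected f (fun _ ↦ True) _ (by simp) fun i _ ↦
    (hf i).1.congr (hglue f i (hf i).2.1), fun i ↦ ?_⟩
  rw [hglue f i (hf i).2.1 _ (Finsupp.single_mem_supported ℚ _ Set.self_mem_Iic), (hf i).2.2]

end Valuation

/-- The sublattice generated by a subgroup of a lattice-ordered abelian group is a subgroup. -/
def AddSubgroup.latticeClosure {M : Type*} [Lattice M] [AddCommGroup M] [IsOrderedAddMonoid M]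
    (S : AddSubgroup M) : AddSubgroup M where
  carrier := _root_.latticeClosure (S : Set M)
  zero_mem' := subset_latticeClosure S.zero_mem
  neg_mem' {a} ha := by
    refine latticeClosure_min (t := {a | -a ∈ _root_.latticeClosure (S : Set M)})
      (fun a ha ↦ subset_latticeClosure (S.neg_mem ha)) ⟨fun a ha b hb ↦ ?_, fun a ha b hb ↦ ?_⟩ ha
    · simpa [neg_sup] using isSublattice_latticeClosure.infClosed ha hb
    · simpa [neg_inf] using isSublattice_latticeClosure.supClosed ha hb
  add_mem' {a b} ha hb := by
    have hS : ∀ c ∈ S, ∀ a ∈ _root_.latticeClosure (S : Set M),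
        c + a ∈ _root_.latticeClosure (S : Set M) := by
      intro c hc
      refine latticeClosure_min (t := {a | c + a ∈ _root_.latticeClosure (S : Set M)})
        (fun a ha ↦ subset_latticeClosure (S.add_mem hc ha))
        ⟨fun a ha b hb ↦ ?_, fun a ha b hb ↦ ?_⟩
      · simpa [add_sup] using isSublattice_latticeClosure.supClosed ha hb
      · simpa [add_inf] using isSublattice_latticeClosure.infClosed ha hb
    refine latticeClosure_min (t := {a | a + b ∈ _root_.latticeClosure (S : Set M)})
      (fun a ha ↦ hS a ha b hb) ⟨fun a ha b hb ↦ ?_, fun a ha b hb ↦ ?_⟩ ha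
    · simpa [sup_add] using isSublattice_latticeClosure.supClosed ha hb
    · simpa [inf_add] using isSublattice_latticeClosure.infClosed ha hb

section Representation

variable {L : Type v} [DistribLattice L] [OrderBot L] {E : Type v} [AddCommGroup E] [Module ℚ E]

/-- Each prime ideal turns a sign valuation into a homomorphism to a linearly ordered group. -/
lemma IsSignValuation_s1.exists_linearOrder {μ : E → L} (h : IsSignValuation_s1 μ ⊤) (I : Ideal L)
    (hI : I.IsPrime) :
    ∃ (G : Type v) (_ : AddCommGroup G) (_ : LinearOrder G) (_ : IsOrderedAddMonoid G)
      (φ : E →+ G), ∀ u, 0 < φ u ↔ μ u ∉ I := by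
  classical
  have hadd : ∀ u v, μ u ∈ I → μ v ∈ I → μ (u + v) ∈ I := fun u v hu hv ↦
    I.lower (h.add_le trivial trivial) (Ideal.sup_mem hu hv)
  have hzero : μ 0 ∈ I := h.zero ▸ I.bot_mem
  let K : AddSubgroup E :=
    { carrier := {u | μ u ∈ I ∧ μ (-u) ∈ I}
      zero_mem' := by simpa using hzero
      add_mem' := fun {u v} hu hv ↦
        ⟨hadd u v hu.1 hv.1, by simpa [add_comm] using hadd (-u) (-v) hu.2 hv.2⟩
      neg_mem' := fun {u} hu ↦ ⟨hu.2, by simpa using hu.1⟩ }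
  let C : AddGroupCone (E ⧸ K) :=
    { carrier := {x | ∃ u, μ (-u) ∈ I ∧ QuotientAddGroup.mk' K u = x}
      zero_mem' := ⟨0, by simpa using hzero, map_zero _⟩
      add_mem' := by
        rintro _ _ ⟨u, hu, rfl⟩ ⟨v, hv, rfl⟩
        exact ⟨u + v, by simpa [add_comm] using hadd _ _ hu hv, map_add _ _ _⟩
      eq_zero_of_mem_of_neg_mem' := by
        rintro _ ⟨u, hu, rfl⟩ ⟨v, hv, huv⟩
        rw [← map_neg] at huv
        have hK : -v + -u ∈ K := (QuotientAddGroup.eq (s := K)).1 huv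
        refine (QuotientAddGroup.eq_zero_iff u).2 ⟨?_, hu⟩
        have := hadd _ _ hK.2 hv
        rwa [show -(-v + -u) + -v = u by abel] at this }
  have hmem : ∀ u, QuotientAddGroup.mk' K u ∈ C ↔ μ (-u) ∈ I := by
    refine fun u ↦ ⟨?_, fun hu ↦ ⟨u, hu, rfl⟩⟩
    rintro ⟨v, hv, huv⟩
    have hK : -v + u ∈ K := (QuotientAddGroup.eq (s := K)).1 huv
    have := hadd _ _ hK.2 hv
    rwa [show -(-v + u) + -v = -u by abel] at this
  have : HasMemOrNegMem C := ⟨fun x ↦ by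
    obtain ⟨u, rfl⟩ := QuotientAddGroup.mk'_surjective K x
    rw [← map_neg, hmem, hmem, neg_neg, or_comm]
    exact hI.mem_or_mem (h.disjoint (u := u) trivial ▸ I.bot_mem)⟩
  let : LinearOrder (E ⧸ K) := LinearOrder.mkOfAddGroupCone C
  refine ⟨E ⧸ K, inferInstance, inferInstance, IsOrderedAddMonoid.mkOfCone C,
    QuotientAddGroup.mk' K, fun u ↦ ?_⟩
  rw [← not_le, not_iff_not, ← neg_neg u, ← hmem, neg_neg, map_neg, ← zero_sub]
  rfl

/-- A surjective sign valuation induces a surjective lattice homomorphism from the lattice of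
principal `ℓ`-ideals of an Abelian `ℓ`-group. -/
lemma IsSignValuation_s1.exists_abelianLGroup {μ : E → L} (h : IsSignValuation_s1 μ ⊤)
    (hμ : Function.Surjective μ) :
    ∃ (F : AbelianLGroup.{v}) (g : Set F.carrier → L),
      (∀ l : L, ∃ a : F.carrier, 0 ≤ a ∧ g (principalLIdeal a) = l) ∧
      (∀ a b : F.carrier, 0 ≤ a → 0 ≤ b →
        g (principalLIdeal (a ⊔ b)) = g (principalLIdeal a) ⊔ g (principalLIdeal b) ∧
        g (principalLIdeal (a ⊓ b)) = g (principalLIdeal a) ⊓ g (principalLIdeal b)) := by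
  classical
  let X := {I : Ideal L // I.IsPrime}
  choose G instGroup instOrder instOrdered φ hφ using fun I : X ↦ h.exists_linearOrder I.1 I.2
  let Φ : E →+ (∀ I, G I) := AddMonoidHom.pi φ
  let S : AddSubgroup (∀ I, G I) := Φ.range.latticeClosure
  have hsup : ∀ ⦃a b : ∀ I, G I⦄, a ∈ S → b ∈ S → a ⊔ b ∈ S := fun _ _ ha hb ↦
    isSublattice_latticeClosure.supClosed ha hb
  have hinf : ∀ ⦃a b : ∀ I, G I⦄, a ∈ S → b ∈ S → a ⊓ b ∈ S := fun _ _ ha hb ↦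
    isSublattice_latticeClosure.infClosed ha hb
  let : Lattice S := Subtype.lattice hsup hinf
  let F : AbelianLGroup.{v} := ⟨S, fun a b hab c ↦ add_le_add_right (α := ∀ I, G I) hab c.1⟩
  have hsupp : ∀ a : (∀ I, G I), a ∈ S → ∃ l : L, ∀ I : X, 0 < a I ↔ l ∉ I.1 := by
    refine fun a ha ↦ latticeClosure_min
      (t := {a : ∀ I, G I | ∃ l : L, ∀ I : X, 0 < a I ↔ l ∉ I.1}) ?_ ⟨?_, ?_⟩ ha
    · rintro _ ⟨u, rfl⟩
      exact ⟨μ u, fun I ↦ hφ I u⟩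
    · rintro a ⟨l, hl⟩ b ⟨m, hm⟩
      refine ⟨l ⊔ m, fun I ↦ ?_⟩
      rw [Pi.sup_apply, lt_sup_iff, hl, hm, Ideal.sup_mem_iff]
      tauto
    · rintro a ⟨l, hl⟩ b ⟨m, hm⟩
      refine ⟨l ⊓ m, fun I ↦ ?_⟩
      rw [Pi.inf_apply, lt_inf_iff, hl, hm, ← not_or, not_iff_not]
      exact ⟨fun h ↦ h.elim (I.1.lower inf_le_left) (I.1.lower inf_le_right), I.2.mem_or_mem⟩
  have hunique : ∀ l m : L, (∀ I : X, l ∉ I.1 ↔ m ∉ I.1) → l = m := fun l m hlm ↦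
    le_antisymm (le_of_forall_prime fun I hI ↦ not_imp_not.1 (hlm ⟨I, hI⟩).1)
      (le_of_forall_prime fun I hI ↦ not_imp_not.1 (hlm ⟨I, hI⟩).2)
  choose σ hσ using fun a : F.carrier ↦ hsupp a.1 a.2
  have hσeq : ∀ a l, (∀ I : X, 0 < a.1 I ↔ l ∉ I.1) → σ a = l := fun a l hl ↦
    hunique _ _ fun I ↦ (hσ a I).symm.trans (hl I)
  have hpos : ∀ a b : F.carrier, 0 ≤ a → principalLIdeal a = principalLIdeal b →
      ∀ I : X, 0 < a.1 I → 0 < b.1 I := by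
    intro a b ha hab I haI
    have hself : a ∈ principalLIdeal a := by
      refine ⟨1, ?_⟩
      rw [one_smul]
      have hneg : -a.1 ≤ a.1 := (neg_nonpos.2 (show (0 : ∀ I, G I) ≤ a.1 from ha)).trans ha
      exact sup_le le_rfl hneg
    obtain ⟨n, hn⟩ : a ∈ principalLIdeal b := hab ▸ hself
    have hle : a.1 I ≤ n • b.1 I := (show a ≤ n • b from le_sup_left.trans hn) I
    by_contra hb
    exact (haI.trans_le hle).not_ge (nsmul_nonpos (not_lt.1 hb) n)
  have hσcongr : ∀ a b : F.carrier, 0 ≤ a → 0 ≤ b → principalLIdeal a = principalLIdeal b →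
      σ a = σ b := fun a b ha hb hab ↦
    hσeq a _ fun I ↦ ⟨fun h ↦ (hσ b I).1 (hpos a b ha hab I h),
      fun h ↦ hpos b a hb hab.symm I ((hσ b I).2 h)⟩
  let g (s : Set F.carrier) : L :=
    if h : ∃ a : F.carrier, 0 ≤ a ∧ principalLIdeal a = s then σ h.choose else ⊥
  have hg : ∀ a : F.carrier, 0 ≤ a → g (principalLIdeal a) = σ a := by
    intro a ha
    have hex : ∃ b : F.carrier, 0 ≤ b ∧ principalLIdeal b = principalLIdeal a := ⟨a, ha, rfl⟩
    rw [show g (principalLIdeal a) = σ hex.choose from dif_pos hex]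
    exact hσcongr _ _ hex.choose_spec.1 ha hex.choose_spec.2
  refine ⟨F, g, fun l ↦ ?_, fun a b ha hb ↦ ⟨?_, ?_⟩⟩
  · obtain ⟨u, rfl⟩ := hμ l
    have hu : Φ u ∈ S := subset_latticeClosure ⟨u, rfl⟩
    let a : F.carrier := (⟨Φ u, hu⟩ : S) ⊔ 0
    have ha : 0 ≤ a := le_sup_right
    refine ⟨a, ha, (hg a ha).trans (hσeq a _ fun I ↦ ?_)⟩
    rw [← hφ I u, show a.1 I = φ I u ⊔ 0 from rfl, lt_sup_iff, or_iff_left (lt_irrefl _)]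
  · rw [hg a ha, hg b hb, hg _ (ha.trans le_sup_left)]
    refine hσeq _ _ fun I ↦ ?_
    rw [show (a ⊔ b).1 I = a.1 I ⊔ b.1 I from rfl, lt_sup_iff, hσ, hσ, Ideal.sup_mem_iff]
    tauto
  · rw [hg a ha, hg b hb, hg _ (le_inf ha hb)]
    refine hσeq _ _ fun I ↦ ?_
    rw [show (a ⊓ b).1 I = a.1 I ⊓ b.1 I from rfl, lt_inf_iff, hσ, hσ, ← not_or, not_iff_not]
    exact ⟨fun h ↦ h.elim (I.1.lower inf_le_left) (I.1.lower inf_le_right), I.2.mem_or_mem⟩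

end Representation

/-- every completely normal distributive `0`-lattice `L` with at most `ℵ₁`
elements is the image of a surjective lattice homomorphism from `Idc F` for some Abelian
`ℓ`-group `F`.  The surjective lattice homomorphism `Idc F ↠ L` is encoded by a map `g`
on sets of elements of `F`, applied to the principal `ℓ`-ideals `⟨a⟩` for `a ∈ F⁺`
(every element of `Idc F` has this form, joins and meets in `Idc F` being `⟨a ⊔ b⟩`
and `⟨a ⊓ b⟩`). -/
theorem stmt1 (L : Type v) [DistribLattice L] [OrderBot L]
    (hcn : ∀ a b : L, ∃ x y : L, a ⊔ b = a ⊔ y ∧ a ⊔ b = x ⊔ b ∧ x ⊓ y = ⊥)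
    (hcard : Cardinal.mk L ≤ Cardinal.aleph 1) :
    ∃ (F : AbelianLGroup.{v}) (g : Set F.carrier → L),
      (∀ l : L, ∃ a : F.carrier, 0 ≤ a ∧ g (principalLIdeal a) = l) ∧
      (∀ a b : F.carrier, 0 ≤ a → 0 ≤ b →
        g (principalLIdeal (a ⊔ b)) = g (principalLIdeal a) ⊔ g (principalLIdeal b) ∧
        g (principalLIdeal (a ⊓ b)) = g (principalLIdeal a) ⊓ g (principalLIdeal b)) := by
  let ι := (Cardinal.aleph.{v} 1).ord.ToType
  have hι : ∀ i : ι, (Set.Iio i).Countable := fun i ↦ by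
    have hlt : Cardinal.mk (Set.Iio i) < Cardinal.aleph 1 := by
      simpa [ι] using Cardinal.mk_Iio_lt i (by simp [ι])
    exact Cardinal.le_aleph0_iff_set_countable.1
      (Order.lt_succ_iff.1 (hlt.trans_eq Cardinal.succ_aleph0.symm))
  obtain ⟨e⟩ : Nonempty (L ↪ ι) := by
    rw [← Cardinal.le_def]
    simpa [ι] using hcard
  obtain ⟨μ, hμ, hμl⟩ := IsCompletelyNormal.exists_signValuation hcn hι (Function.invFun e)
  refine hμ.exists_abelianLGroup fun l ↦ ⟨Finsupp.single (e l) 1, ?_⟩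
  rw [hμl, Function.leftInverse_invFun e.injective]
end

section
/- Let k be a countable totally ordered division ring, let I and J be countable sets with I ⊊ J and J∖I infinite, let K and L be distributive 0-lattices with L countable and completely normal, let φ : K → L be a 0-lattice homomorphism, and let f : Op⁻(k^(I), k^(I)) → K be a 0-lattice homomorphism. Then there exists a surjective lattice homomorphism g : Op⁻(k^(J), k^(J)) ↠ L such that g ∘ ε_{I,J} = φ ∘ f on Op⁻(k^(I), k^(I)). -/
open scoped Classical

/-- The linear functional `x ↦ Σ_i a_i * x_i` on `k^(ι)` associated with `a ∈ k^(ι)`. -/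
def pairing {k ι : Type*} [DivisionRing k] (a x : ι →₀ k) : k :=
  a.sum fun i c => c * x i

/-- The vectors of `k^(ι)` supported on a subset `I ⊆ ι` (the copy of `k^(I)`
inside `k^(ι)`). -/
def suppIn {k ι : Type*} [Zero k] (I : Set ι) : Set (ι →₀ k) :=
  {y : ι →₀ k | ∀ i, i ∉ I → y i = 0}

/-- Membership in `Op⁻(A, Ω)`: the sublattice of the powerset of `Ω` generated by the
sets `⟦a > 0⟧` and `⟦a < 0⟧` for `a ∈ A` (identifying `a` with its linear functional). -/
inductive MemOp {k ι : Type*} [DivisionRing k] [LinearOrder k]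
    (A Ω : Set (ι →₀ k)) : Set (ι →₀ k) → Prop
  | pos (a : ι →₀ k) (ha : a ∈ A) : MemOp A Ω {x ∈ Ω | 0 < pairing a x}
  | neg (a : ι →₀ k) (ha : a ∈ A) : MemOp A Ω {x ∈ Ω | pairing a x < 0}
  | union {U V : Set (ι →₀ k)} : MemOp A Ω U → MemOp A Ω V → MemOp A Ω (U ∪ V)
  | inter {U V : Set (ι →₀ k)} : MemOp A Ω U → MemOp A Ω V → MemOp A Ω (U ∩ V)

/-- Restriction `y ↦ y↾I` of a vector to the coordinates in `I`. -/
noncomputable def restrictTo {k ι : Type*} [Zero k] (I : Set ι) (y : ι →₀ k) : ι →₀ k :=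
  y.filter (· ∈ I)

/-- The canonical Boolean embedding `ε_{I,J} : P(k^(I)) → P(k^(J))`,
`X ↦ {y : y↾I ∈ X}`. -/
noncomputable def epsilonMap {k ι : Type*} [Zero k] (I : Set ι) (X : Set (ι →₀ k)) :
    Set (ι →₀ k) :=
  {y : ι →₀ k | restrictTo I y ∈ X}

section Lattice

variable {L : Type*} [DistribLattice L] [OrderBot L]

theorem exists_disjoint_between {X : Type*}
    (hcn : ∀ a b : L, ∃ x y : L, a ⊔ b = a ⊔ y ∧ a ⊔ b = x ⊔ b ∧ x ⊓ y = ⊥)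
    (A : Finset X) (hA : A.Nonempty) (a b : X → L)
    (ha : ∀ i ∈ A, ∀ m ∈ A, a i ≤ b i ⊔ a m) (hb : ∀ i ∈ A, ∀ m ∈ A, b i ≤ a i ⊔ b m) :
    ∃ u v : L, u ⊓ v = ⊥ ∧
      ∀ i ∈ A, u ≤ a i ∧ v ≤ b i ∧ a i ≤ b i ⊔ u ∧ b i ≤ a i ⊔ v := by
  choose x y hy hx hxy using hcn
  let p : X → X → L := fun i m => x (a m) (b i) ⊓ a m
  let q : X → X → L := fun i m => y (a m) (b i) ⊓ b i
  have hp : ∀ i m, a m ≤ b i ⊔ p i m := fun i m => by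
    rw [sup_inf_left]
    refine le_inf ?_ le_sup_right
    rw [sup_comm, ← hx]
    exact le_sup_left
  have hq : ∀ i m, b i ≤ a m ⊔ q i m := fun i m => by
    rw [sup_inf_left]
    refine le_inf ?_ le_sup_right
    rw [← hy]
    exact le_sup_right
  have hpq : ∀ i m, Disjoint (p i m) (q i m) := fun i m =>
    (disjoint_iff.2 (hxy (a m) (b i))).mono inf_le_left inf_le_left
  refine ⟨A.sup fun i => A.inf' hA fun m => p i m, A.sup fun m => A.inf' hA fun i => q i m,
    ?_, fun i hi => ⟨?_, ?_, ?_, ?_⟩⟩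
  · rw [← disjoint_iff, Finset.disjoint_sup_left]
    intro i hi
    rw [Finset.disjoint_sup_right]
    intro m hm
    exact (hpq i m).mono (Finset.inf'_le _ hm) (Finset.inf'_le _ hi)
  · exact Finset.sup_le fun m _ => (Finset.inf'_le _ hi).trans inf_le_right
  · exact Finset.sup_le fun m _ => (Finset.inf'_le _ hi).trans inf_le_right
  · refine le_trans ?_ (sup_le_sup_left (Finset.le_sup hi) _)
    rw [Finset.inf'_sup_distrib_left]
    exact Finset.le_inf' _ _ fun m hm =>
      (ha i hi m hm).trans (sup_le le_sup_left (hp i m))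
  · refine le_trans ?_ (sup_le_sup_left (Finset.le_sup hi) _)
    rw [Finset.inf'_sup_distrib_left]
    exact Finset.le_inf' _ _ fun m hm =>
      (hb i hi m hm).trans (sup_le le_sup_left (hq m i))

theorem exists_limit_of_extension {X Y : Type*} (A : ℕ → Set X) (hA : Monotone A)
    (P : ℕ → (X → Y) → Prop) (F₀ : X → Y) (h₀ : P 0 F₀)
    (hstep : ∀ n F, P n F → ∃ F', P (n + 1) F' ∧ Set.EqOn F F' (A n)) :
    ∃ F : X → Y, ∀ n, ∃ F', P n F' ∧ Set.EqOn F F' (A n) := by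
  choose! E hE hEeq using hstep
  let S : ℕ → X → Y := fun n => Nat.rec F₀ E n
  have hS : ∀ n, P n (S n) := fun n => by
    induction n with
    | zero => exact h₀
    | succ n ih => exact hE n _ ih
  have hmono : ∀ m n, m ≤ n → Set.EqOn (S m) (S n) (A m) := fun m n hmn => by
    induction n, hmn using Nat.le_induction with
    | base => exact fun _ _ => rfl
    | succ n hmn ih => exact ih.trans ((hEeq n _ (hS n)).mono (hA hmn))
  refine ⟨fun x => if h : ∃ n, x ∈ A n then S (Nat.find h) x else F₀ x, fun n =>
    ⟨S n, hS n, fun x hx => ?_⟩⟩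
  have h : ∃ n, x ∈ A n := ⟨n, hx⟩
  simp only [dif_pos h]
  exact hmono _ _ (Nat.find_min' h hx) (Nat.find_spec h)

end Lattice

section Sign

variable {k V L : Type*} [DivisionRing k] [LinearOrder k]
  [AddCommGroup V] [Module k V] [DistribLattice L] [OrderBot L]

/-- `s a` is a lattice-valued truth value of `0 < a`, for a `k`-linear total preorder on `W`. -/
structure IsSignMap (W : Submodule k V) (s : V → L) : Prop where
  inf_neg : ∀ a ∈ W, s a ⊓ s (-a) = ⊥
  add_le : ∀ a ∈ W, ∀ b ∈ W, s (a + b) ≤ s a ⊔ s b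
  smul : ∀ t : k, 0 < t → ∀ a ∈ W, s (t • a) = s a

/-- For a point `e` placed relatively to `c` and `c'`, where `p.1` and `p.2` are the truth values
of `c < e` and `e < c`, and similarly for `p'` and `c'`: the relations that follow
from comparing `c` with `c'`. -/
structure CutLE (s : V → L) (c : V) (p : L × L) (c' : V) (p' : L × L) : Prop where
  fst_le : p.1 ≤ p'.1 ⊔ s (c' - c)
  snd_le : p'.2 ≤ p.2 ⊔ s (c' - c)
  inf_le : p.1 ⊓ p'.2 ≤ s (c' - c)
  le_sup : s (c' - c) ≤ p.1 ⊔ p'.2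

/-- Consistent placement of a new point relatively to the elements of `A`. -/
def IsCut_s3 (s : V → L) (A : Set V) (F : V → L × L) : Prop :=
  ∀ c ∈ A, ∀ c' ∈ A, CutLE s c (F c) c' (F c')

variable {W : Submodule k V} {s : V → L}

theorem IsSignMap.zero (hs : IsSignMap W s) : s 0 = ⊥ := by
  simpa using hs.inf_neg 0 W.zero_mem

theorem IsSignMap.sub_le (hs : IsSignMap W s) {a b c : V} (ha : a ∈ W) (hb : b ∈ W) (hc : c ∈ W) :
    s (a - c) ≤ s (a - b) ⊔ s (b - c) := by
  simpa using hs.add_le _ (W.sub_mem ha hb) _ (W.sub_mem hb hc)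

theorem IsSignMap.inf_sub (hs : IsSignMap W s) {a b : V} (ha : a ∈ W) (hb : b ∈ W) :
    s (a - b) ⊓ s (b - a) = ⊥ := by
  simpa using hs.inf_neg _ (W.sub_mem ha hb)

theorem IsCut_s3.inf_eq_bot (hs : IsSignMap W s) {A : Set V} {F : V → L × L} (hF : IsCut_s3 s A F)
    {c : V} (hc : c ∈ A) : (F c).1 ⊓ (F c).2 = ⊥ := by
  simpa [hs.zero] using (hF c hc c hc).inf_le

theorem cutLE_self (hs : IsSignMap W s) (c : V) {p : L × L} (hp : p.1 ⊓ p.2 = ⊥) :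
    CutLE s c p c p := by
  constructor <;> simp [hs.zero, hp]

theorem le_of_le_sup_of_inf_eq_bot_s3 {x y z : L} (h : x ≤ y ⊔ z) (hd : x ⊓ z = ⊥) : x ≤ y :=
  (disjoint_iff.2 hd).left_le_of_le_sup_right h

theorem le_sup_of_inf_eq_bot {x p q z w : L} (h₁ : x ≤ p ⊔ z) (h₂ : x ≤ q ⊔ w)
    (h : z ⊓ w = ⊥) : x ≤ p ⊔ q := by
  have h₃ : x ≤ (p ⊔ q ⊔ z) ⊓ (p ⊔ q ⊔ w) :=
    le_inf (h₁.trans (sup_le_sup_right le_sup_left _)) (h₂.trans (sup_le_sup_right le_sup_right _))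
  rwa [← sup_inf_left, h, sup_bot_eq] at h₃

theorem IsCut_s3.exists_insert
    (hcn : ∀ a b : L, ∃ x y : L, a ⊔ b = a ⊔ y ∧ a ⊔ b = x ⊔ b ∧ x ⊓ y = ⊥)
    (hs : IsSignMap W s) {A : Finset V} (hA : A.Nonempty) (hAW : ∀ c ∈ A, c ∈ W)
    {F : V → L × L} (hF : IsCut_s3 s (A : Set V) F) {c : V} (hc : c ∈ W) :
    ∃ F' : V → L × L, IsCut_s3 s (insert c (A : Set V)) F' ∧ Set.EqOn F F' A := by
  by_cases hcA : c ∈ A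
  · exact ⟨F, by rwa [Set.insert_eq_of_mem (by simpa using hcA)], fun _ _ => rfl⟩
  obtain ⟨u, v, huv, h⟩ := exists_disjoint_between hcn A hA
    (fun i => (F i).1 ⊔ s (i - c)) (fun i => (F i).2 ⊔ s (c - i))
    (fun i hi m hm => by
      have h₁ := (hF i hi m hm).fst_le
      have h₂ := hs.sub_le (hAW m hm) hc (hAW i hi)
      have h₃ := hs.sub_le (hAW i hi) (hAW m hm) hc
      have h₄ := (hF m hm i hi).le_sup
      refine sup_le (h₁.trans (sup_le ?_ (h₂.trans (sup_le ?_ ?_))))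
        (h₃.trans (sup_le (h₄.trans (sup_le ?_ ?_)) ?_))
      · exact le_sup_left.trans le_sup_right
      · exact le_sup_right.trans le_sup_right
      · exact le_sup_right.trans le_sup_left
      · exact le_sup_left.trans le_sup_right
      · exact le_sup_left.trans le_sup_left
      · exact le_sup_right.trans le_sup_right)
    (fun i hi m hm => by
      have h₁ := (hF m hm i hi).snd_le
      have h₂ := hs.sub_le (hAW i hi) hc (hAW m hm)
      have h₃ := hs.sub_le hc (hAW m hm) (hAW i hi)
      have h₄ := (hF i hi m hm).le_sup
      refine sup_le (h₁.trans (sup_le ?_ (h₂.trans (sup_le ?_ ?_))))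
        (h₃.trans (sup_le ?_ (h₄.trans (sup_le ?_ ?_))))
      · exact le_sup_left.trans le_sup_right
      · exact le_sup_right.trans le_sup_left
      · exact le_sup_right.trans le_sup_right
      · exact le_sup_right.trans le_sup_right
      · exact le_sup_left.trans le_sup_left
      · exact le_sup_left.trans le_sup_right)
  have hne : ∀ i ∈ A, i ≠ c := fun i hi h => hcA (h ▸ hi)
  refine ⟨Function.update F c (u, v), ?_, fun i hi => by
    rw [Function.update_of_ne (hne i hi)]⟩
  have key : ∀ i ∈ A, CutLE s i (F i) c (u, v) ∧ CutLE s c (u, v) i (F i) := by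
    intro i hi
    obtain ⟨h₁, h₂, h₃, h₄⟩ := h i hi
    have hd : (F i).1 ⊓ (F i).2 = ⊥ := hF.inf_eq_bot hs hi
    have hn := hs.inf_sub hc (hAW i hi)
    refine ⟨⟨?_, h₂, ?_, ?_⟩, ⟨h₁, ?_, ?_, ?_⟩⟩
    · refine le_of_le_sup_of_inf_eq_bot_s3 (z := (F i).2) ?_ hd
      refine (le_sup_left.trans h₃).trans (le_of_eq ?_)
      dsimp only
      ac_rfl
    · refine (inf_le_inf_left _ h₂).trans ?_
      rw [inf_sup_left, hd, bot_sup_eq]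
      exact inf_le_right
    · refine le_of_le_sup_of_inf_eq_bot_s3 (z := s (i - c)) ?_ hn
      refine (le_sup_right.trans h₄).trans (le_of_eq ?_)
      dsimp only
      ac_rfl
    · refine le_of_le_sup_of_inf_eq_bot_s3 (z := (F i).1) ?_ (by rw [inf_comm, hd])
      refine (le_sup_left.trans h₄).trans (le_of_eq ?_)
      dsimp only
      ac_rfl
    · refine (inf_le_inf_right _ h₁).trans ?_
      rw [inf_sup_right, hd, bot_sup_eq]
      exact inf_le_left
    · refine le_of_le_sup_of_inf_eq_bot_s3 (z := s (c - i)) ?_ (by rw [inf_comm, hn])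
      refine (le_sup_right.trans h₃).trans (le_of_eq ?_)
      dsimp only
      ac_rfl
  rintro i (rfl | hi) m (rfl | hm)
  · simpa using cutLE_self hs _ (p := (u, v)) huv
  · rw [Function.update_self, Function.update_of_ne (hne m hm)]
    exact (key m hm).2
  · rw [Function.update_self, Function.update_of_ne (hne i hi)]
    exact (key i hi).1
  · rw [Function.update_of_ne (hne i hi), Function.update_of_ne (hne m hm)]
    exact hF i hi m hm

theorem exists_isCut [Countable V]
    (hcn : ∀ a b : L, ∃ x y : L, a ⊔ b = a ⊔ y ∧ a ⊔ b = x ⊔ b ∧ x ⊓ y = ⊥)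
    (hs : IsSignMap W s) (l : L) :
    ∃ F : V → L × L, IsCut_s3 s (W : Set V) F ∧ (F 0).1 = l := by
  obtain ⟨c, hc⟩ := exists_surjective_nat W
  let A : ℕ → Finset V := fun n => insert 0 ((Finset.range n).image fun i => (c i : V))
  have hAW : ∀ n, ∀ x ∈ A n, x ∈ W := fun n x hx => by
    simp only [A, Finset.mem_insert, Finset.mem_image] at hx
    rcases hx with rfl | ⟨i, -, rfl⟩
    exacts [W.zero_mem, (c i).2]
  have hmono : Monotone fun n => (A n : Set V) := fun m n hmn =>
    Finset.coe_subset.2 (Finset.insert_subset_insert _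
      (Finset.image_subset_image (Finset.range_mono hmn)))
  obtain ⟨F, hF⟩ := exists_limit_of_extension (fun n => (A n : Set V)) hmono
    (fun n F => IsCut_s3 s (A n : Set V) F ∧ (F 0).1 = l) (fun _ => (l, ⊥))
    ⟨by
      intro a ha b hb
      simp only [A, Finset.range_zero, Finset.image_empty, insert_empty_eq,
        Finset.coe_singleton, Set.mem_singleton_iff] at ha hb
      subst ha hb
      exact cutLE_self hs 0 (by simp), rfl⟩
    (fun n F ⟨hF, hl⟩ => by
      obtain ⟨F', h, heq⟩ := hF.exists_insert hcn hs ⟨0, by simp [A]⟩ (hAW n) (c n).2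
      refine ⟨F', ⟨?_, ?_⟩, heq⟩
      · convert h using 1
        simp only [A]
        rw [Finset.range_add_one, Finset.image_insert, Finset.insert_comm]
        simp
      · rw [← heq (by simp [A]), hl])
  refine ⟨F, ?_, ?_⟩
  · intro a ha b hb
    obtain ⟨i, hi⟩ := hc ⟨a, ha⟩
    obtain ⟨j, hj⟩ := hc ⟨b, hb⟩
    obtain ⟨F', ⟨hF', -⟩, heq⟩ := hF (max i j + 1)
    have ha' : a ∈ (A (max i j + 1) : Set V) := by
      simp only [A, Finset.coe_insert, Finset.coe_image]
      exact Or.inr ⟨i, by simp, by simp [hi]⟩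
    have hb' : b ∈ (A (max i j + 1) : Set V) := by
      simp only [A, Finset.coe_insert, Finset.coe_image]
      exact Or.inr ⟨j, by simp, by simp [hj]⟩
    rw [heq ha', heq hb']
    exact hF' a ha' b hb'
  · obtain ⟨F', ⟨-, h⟩, heq⟩ := hF 0
    rw [heq (by simp [A]), h]

theorem IsSignMap.exists_extend [IsStrictOrderedRing k] [Countable V]
    (hcn : ∀ a b : L, ∃ x y : L, a ⊔ b = a ⊔ y ∧ a ⊔ b = x ⊔ b ∧ x ⊓ y = ⊥)
    (hs : IsSignMap W s) (τ : V →ₗ[k] k) (e : V) (hτe : τ e = 1) (hτW : ∀ a ∈ W, τ a = 0)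
    (W' : Submodule k V) (hW' : ∀ x ∈ W', x - τ x • e ∈ W) (l : L) :
    ∃ s' : V → L, IsSignMap W' s' ∧ Set.EqOn s s' W ∧ s' e = l := by
  obtain ⟨F, hF, hl⟩ := exists_isCut hcn hs l
  let c : V → V := fun x => e - (τ x)⁻¹ • x
  let s' : V → L := fun x =>
    if τ x = 0 then s x else if 0 < τ x then (F (c x)).1 else (F (c x)).2
  have hzero : ∀ a ∈ W, s' a = s a := fun a ha => if_pos (hτW a ha)
  have hpos : ∀ t : k, 0 < t → ∀ d ∈ W, s' (t • (e - d)) = (F d).1 := fun t ht d hd => by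
    have h : τ (t • (e - d)) = t := by simp [hτe, hτW d hd]
    simp only [s', c, h, ht.ne', ht, if_true, if_false, inv_smul_smul₀ ht.ne', sub_sub_cancel]
  have hneg : ∀ t : k, 0 < t → ∀ d ∈ W, s' (t • (d - e)) = (F d).2 := fun t ht d hd => by
    have h : τ (t • (d - e)) = -t := by simp [hτe, hτW d hd]
    have h' : ¬ 0 < -t := by simpa using ht.le
    simp only [s', c, h, neg_eq_zero, ht.ne', h', if_false, inv_neg, neg_smul,
      inv_smul_smul₀ ht.ne', sub_neg_eq_add, add_sub_cancel]
  have hcases : ∀ x ∈ W', x ∈ W ∨ (∃ t : k, 0 < t ∧ ∃ d ∈ W, x = t • (e - d)) ∨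
      ∃ t : k, 0 < t ∧ ∃ d ∈ W, x = t • (d - e) := fun x hx => by
    have hxW := hW' x hx
    rcases lt_trichotomy (τ x) 0 with h | h | h
    · refine Or.inr (Or.inr ⟨-τ x, neg_pos.2 h, (-τ x)⁻¹ • (x - τ x • e),
        W.smul_mem _ hxW, ?_⟩)
      rw [smul_sub, smul_inv_smul₀ (neg_ne_zero.2 h.ne), neg_smul]
      abel
    · left
      simpa [h] using hxW
    · refine Or.inr (Or.inl ⟨τ x, h, -((τ x)⁻¹ • (x - τ x • e)),
        W.neg_mem (W.smul_mem _ hxW), ?_⟩)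
      rw [sub_neg_eq_add, smul_add, smul_inv_smul₀ h.ne']
      abel
  have hsmul : ∀ {t r : k} {a b : V}, 0 < t → 0 < r → a ∈ W → b ∈ W → t • a = r • b →
      s a = s b := fun ht hr ha hb h => by
    rw [← hs.smul _ ht _ ha, h, hs.smul _ hr _ hb]
  -- a barycentre of two points of `W` lies between them
  have hbar : ∀ {t r : k} {a b : V}, 0 < t → 0 < r → a ∈ W → b ∈ W → t • a + r • b = 0 →
      s a ⊓ s b = ⊥ := fun {t r a b} ht hr ha hb h => by
    rw [← hs.smul _ ht _ ha, ← hs.smul _ hr _ hb, eq_neg_of_add_eq_zero_right h]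
    exact hs.inf_neg _ (W.smul_mem _ ha)
  have hadd_pos_pos : ∀ t r : k, 0 < t → 0 < r → ∀ c ∈ W, ∀ d ∈ W,
      s' (t • (e - c) + r • (e - d)) ≤ (F c).1 ⊔ (F d).1 ∧
      s' (t • (c - e) + r • (d - e)) ≤ (F c).2 ⊔ (F d).2 := fun t r ht hr c hc d hd => by
    have htr := add_pos ht hr
    obtain ⟨f, hf, hfe⟩ : ∃ f ∈ W, (t + r) • f = t • c + r • d :=
      ⟨(t + r)⁻¹ • (t • c + r • d),
        W.smul_mem _ (W.add_mem (W.smul_mem _ hc) (W.smul_mem _ hd)), smul_inv_smul₀ htr.ne' _⟩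
    have hbot : s (c - f) ⊓ s (d - f) = ⊥ := by
      refine hbar ht hr (W.sub_mem hc hf) (W.sub_mem hd hf) ?_
      rw [add_smul] at hfe
      rw [smul_sub, smul_sub, sub_add_sub_comm, hfe, sub_self]
    have hbot' : s (f - c) ⊓ s (f - d) = ⊥ := by
      refine hbar ht hr (W.sub_mem hf hc) (W.sub_mem hf hd) ?_
      rw [add_smul] at hfe
      rw [smul_sub, smul_sub, sub_add_sub_comm, hfe, sub_self]
    have e₁ : t • (e - c) + r • (e - d) = (t + r) • (e - f) := by
      rw [smul_sub (t + r), hfe, add_smul, smul_sub, smul_sub]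
      abel
    have e₂ : t • (c - e) + r • (d - e) = (t + r) • (f - e) := by
      rw [smul_sub (t + r), hfe, add_smul, smul_sub, smul_sub]
      abel
    rw [e₁, e₂, hpos _ htr _ hf, hneg _ htr _ hf]
    constructor
    · exact le_sup_of_inf_eq_bot (hF f hf c hc).fst_le (hF f hf d hd).fst_le hbot
    · exact le_sup_of_inf_eq_bot (hF c hc f hf).snd_le (hF d hd f hf).snd_le hbot'
  have hadd_pos_neg : ∀ t r : k, 0 < t → 0 < r → ∀ c ∈ W, ∀ d ∈ W,
      s' (t • (e - c) + r • (d - e)) ≤ (F c).1 ⊔ (F d).2 := fun t r ht hr c hc d hd => by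
    have hdc := (hF c hc d hd).le_sup
    have hdcW := W.sub_mem hd hc
    rcases lt_trichotomy r t with h | h | h
    · have hw := sub_pos.2 h
      obtain ⟨f, hf, hfe⟩ : ∃ f ∈ W, (t - r) • f = t • c - r • d :=
        ⟨(t - r)⁻¹ • (t • c - r • d),
          W.smul_mem _ (W.sub_mem (W.smul_mem _ hc) (W.smul_mem _ hd)), smul_inv_smul₀ hw.ne' _⟩
      have e₁ : t • (e - c) + r • (d - e) = (t - r) • (e - f) := by
        rw [smul_sub (t - r), hfe, sub_smul, smul_sub, smul_sub]
        abel
      have e₂ : (t - r) • (c - f) = r • (d - c) := by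
        rw [smul_sub (t - r), hfe, sub_smul, smul_sub]
        abel
      rw [e₁, hpos _ hw _ hf]
      refine (hF f hf c hc).fst_le.trans (sup_le le_sup_left ?_)
      rwa [hsmul hw hr (W.sub_mem hc hf) hdcW e₂]
    · subst h
      rw [← smul_add, sub_add_sub_comm, add_comm c, add_sub_add_left_eq_sub,
        hzero _ (W.smul_mem _ hdcW), hs.smul _ hr _ hdcW]
      exact hdc
    · have hw := sub_pos.2 h
      obtain ⟨f, hf, hfe⟩ : ∃ f ∈ W, (r - t) • f = r • d - t • c :=
        ⟨(r - t)⁻¹ • (r • d - t • c),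
          W.smul_mem _ (W.sub_mem (W.smul_mem _ hd) (W.smul_mem _ hc)), smul_inv_smul₀ hw.ne' _⟩
      have e₁ : t • (e - c) + r • (d - e) = (r - t) • (f - e) := by
        rw [smul_sub (r - t), hfe, sub_smul, smul_sub, smul_sub]
        abel
      have e₂ : (r - t) • (f - d) = t • (d - c) := by
        rw [smul_sub (r - t), hfe, sub_smul, smul_sub]
        abel
      rw [e₁, hneg _ hw _ hf]
      refine (hF d hd f hf).snd_le.trans (sup_le le_sup_right ?_)
      rwa [hsmul hw ht (W.sub_mem hf hd) hdcW e₂]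
  have hadd_zero : ∀ t : k, 0 < t → ∀ c ∈ W, ∀ a ∈ W,
      s' (t • (e - c) + a) ≤ (F c).1 ⊔ s a ∧ s' (t • (c - e) + a) ≤ (F c).2 ⊔ s a :=
    fun t ht c hc a ha => by
    have haW := W.smul_mem t⁻¹ ha
    have e₁ : t • (e - c) + a = t • (e - (c - t⁻¹ • a)) := by
      rw [← sub_add, smul_add, smul_inv_smul₀ ht.ne']
    have e₂ : t • (c - e) + a = t • (c + t⁻¹ • a - e) := by
      rw [add_sub_right_comm, smul_add, smul_inv_smul₀ ht.ne']
    rw [e₁, e₂, hpos _ ht _ (W.sub_mem hc haW), hneg _ ht _ (W.add_mem hc haW),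
      ← hs.smul _ (inv_pos.2 ht) a ha]
    constructor
    · simpa using (hF _ (W.sub_mem hc haW) c hc).fst_le
    · simpa using (hF c hc _ (W.add_mem hc haW)).snd_le
  refine ⟨s', ⟨fun x hx => ?_, fun x hx y hy => ?_, fun r hr x hx => ?_⟩,
    fun a ha => (hzero a ha).symm, ?_⟩
  · rcases hcases x hx with h | ⟨t, ht, d, hd, rfl⟩ | ⟨t, ht, d, hd, rfl⟩
    · rw [hzero x h, hzero _ (W.neg_mem h), hs.inf_neg x h]
    · rw [← smul_neg, neg_sub, hpos t ht d hd, hneg t ht d hd, hF.inf_eq_bot hs hd]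
    · rw [← smul_neg, neg_sub, hpos t ht d hd, hneg t ht d hd, inf_comm, hF.inf_eq_bot hs hd]
  · rcases hcases x hx with h | ⟨t, ht, d, hd, rfl⟩ | ⟨t, ht, d, hd, rfl⟩ <;>
    rcases hcases y hy with h' | ⟨r, hr, c, hc, rfl⟩ | ⟨r, hr, c, hc, rfl⟩
    · rw [hzero x h, hzero y h', hzero _ (W.add_mem h h')]
      exact hs.add_le x h y h'
    · rw [add_comm, sup_comm, hpos r hr c hc, hzero x h]
      exact (hadd_zero r hr c hc x h).1
    · rw [add_comm, sup_comm, hneg r hr c hc, hzero x h]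
      exact (hadd_zero r hr c hc x h).2
    · rw [hpos t ht d hd, hzero y h']
      exact (hadd_zero t ht d hd y h').1
    · rw [hpos t ht d hd, hpos r hr c hc]
      exact (hadd_pos_pos t r ht hr d hd c hc).1
    · rw [hpos t ht d hd, hneg r hr c hc]
      exact hadd_pos_neg t r ht hr d hd c hc
    · rw [hneg t ht d hd, hzero y h']
      exact (hadd_zero t ht d hd y h').2
    · rw [hneg t ht d hd, hpos r hr c hc, add_comm, sup_comm]
      exact hadd_pos_neg r t hr ht c hc d hd
    · rw [hneg t ht d hd, hneg r hr c hc]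
      exact (hadd_pos_pos t r ht hr d hd c hc).2
  · rcases hcases x hx with h | ⟨t, ht, d, hd, rfl⟩ | ⟨t, ht, d, hd, rfl⟩
    · rw [hzero x h, hzero _ (W.smul_mem _ h), hs.smul r hr x h]
    · rw [smul_smul, hpos t ht d hd, hpos _ (mul_pos hr ht) d hd]
    · rw [smul_smul, hneg t ht d hd, hneg _ (mul_pos hr ht) d hd]
  · have := hpos 1 one_pos 0 W.zero_mem
    rwa [one_smul, sub_zero, hl] at this

end Sign

section Pairing

variable {k ι : Type*} [DivisionRing k]

theorem pairing_add (a b x : ι →₀ k) : pairing (a + b) x = pairing a x + pairing b x :=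
  Finsupp.sum_add_index' (by simp) (by simp [add_mul])

theorem pairing_smul (t : k) (a x : ι →₀ k) : pairing (t • a) x = t * pairing a x := by
  rw [pairing, pairing, Finsupp.sum_smul_index (by simp), Finsupp.mul_sum]
  simp [mul_assoc]

theorem pairing_neg (a x : ι →₀ k) : pairing (-a) x = -pairing a x := by
  rw [← neg_one_smul k a, pairing_smul, neg_one_mul]

theorem pairing_sub (a b x : ι →₀ k) : pairing (a - b) x = pairing a x - pairing b x := by
  rw [sub_eq_add_neg, pairing_add, pairing_neg, sub_eq_add_neg]

theorem pairing_zero (x : ι →₀ k) : pairing 0 x = 0 := Finsupp.sum_zero_index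

theorem pairing_single (j : ι) (t : k) (x : ι →₀ k) :
    pairing (Finsupp.single j t) x = t * x j :=
  Finsupp.sum_single_index (by simp)

theorem pairing_congr {a x y : ι →₀ k} (h : ∀ i, a i ≠ 0 → x i = y i) :
    pairing a x = pairing a y :=
  Finsupp.sum_congr fun i hi => by rw [h i (Finsupp.mem_support_iff.1 hi)]

variable [LinearOrder k] [IsStrictOrderedRing k]

theorem DivisionRing.densely_ordered : DenselyOrdered k where
  dense a b hab := by
    have hd := sub_pos.2 hab
    have ht : (0 : k) < 2⁻¹ := inv_pos.2 two_pos
    have ht' : (2⁻¹ : k) < 1 := inv_lt_one_of_one_lt₀ one_lt_two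
    refine ⟨a + 2⁻¹ * (b - a), lt_add_of_pos_right a (mul_pos ht hd), ?_⟩
    rw [← lt_sub_iff_add_lt']
    simpa using mul_lt_mul_of_pos_right ht' hd

/-- Finitely many signs in a `k`-linear total preorder on `k^(ι)` are realized by a vector. -/
theorem exists_realization {P : (ι →₀ k) → Prop}
    (hP : IsSignMap (⊤ : Submodule k (ι →₀ k)) P) (T : Finset ι) :
    ∀ S : Finset (ι →₀ k), (∀ a ∈ S, ∀ i ∉ T, a i = 0) →
      ∃ x : ι →₀ k, ∀ a ∈ S, 0 < pairing a x ↔ P a := by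
  have hsub : ∀ a b c : ι →₀ k, P (a - c) → P (a - b) ∨ P (b - c) := fun a b c =>
    hP.sub_le (Submodule.mem_top) (Submodule.mem_top) (Submodule.mem_top)
  have hasymm : ∀ a b : ι →₀ k, P (a - b) → ¬ P (b - a) := fun a b h h' => by
    have := hP.inf_sub (a := a) (b := b) Submodule.mem_top Submodule.mem_top
    exact (this ▸ ⟨h, h'⟩ : (⊥ : Prop))
  induction T using Finset.induction_on with
  | empty =>
    intro S hS
    refine ⟨0, fun a ha => ?_⟩
    obtain rfl : a = 0 := Finsupp.ext fun i => hS a ha i (by simp)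
    rw [pairing_zero, hP.zero]
    simp
  | insert j T hj ih =>
    intro S hS
    let e : ι →₀ k := Finsupp.single j 1
    let c : (ι →₀ k) → (ι →₀ k) := fun a => e - (a j)⁻¹ • a
    let E : Finset (ι →₀ k) := (S.filter fun a => a j ≠ 0).image c
    have hE : ∀ d ∈ E, ∀ i ∉ T, d i = 0 := by
      intro d hd i hi
      obtain ⟨a, ha, rfl⟩ := Finset.mem_image.1 hd
      obtain ⟨haS, haj⟩ := Finset.mem_filter.1 ha
      by_cases hij : i = j
      · subst hij
        simp [c, e, haj]
      · simp [c, e, Ne.symm hij, hS a haS i (by simp [hij, hi])]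
    obtain ⟨x₀, hx₀⟩ := ih ((S.filter fun a => a j = 0) ∪ (E ×ˢ E).image fun p => p.1 - p.2) (by
      intro a ha i hi
      rcases Finset.mem_union.1 ha with ha | ha
      · obtain ⟨haS, haj⟩ := Finset.mem_filter.1 ha
        by_cases hij : i = j
        · rw [hij, haj]
        · exact hS a haS i (by simp [hij, hi])
      · obtain ⟨p, hp, rfl⟩ := Finset.mem_image.1 ha
        obtain ⟨h₁, h₂⟩ := Finset.mem_product.1 hp
        simp [hE _ h₁ i hi, hE _ h₂ i hi])
    have hlt : ∀ d ∈ E, ∀ d' ∈ E, pairing d x₀ < pairing d' x₀ ↔ P (d' - d) := fun d hd d' hd' => by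
      rw [← hx₀ (d' - d), pairing_sub, sub_pos]
      exact Finset.mem_union_right _
        (Finset.mem_image.2 ⟨(d', d), Finset.mem_product.2 ⟨hd', hd⟩, rfl⟩)
    obtain ⟨z, hz⟩ : ∃ z : k, ∀ d ∈ E,
        (pairing d x₀ < z ↔ P (e - d)) ∧ (z < pairing d x₀ ↔ P (d - e)) := by
      by_cases h : ∃ b ∈ E, ¬ P (e - b) ∧ ¬ P (b - e)
      · obtain ⟨b, hb, hb₁, hb₂⟩ := h
        refine ⟨pairing b x₀, fun d hd => ⟨?_, ?_⟩⟩
        · rw [hlt d hd b hb]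
          exact ⟨fun h => (hsub _ e _ h).resolve_left hb₂, fun h => (hsub _ b _ h).resolve_left hb₁⟩
        · rw [hlt b hb d hd]
          exact ⟨fun h => (hsub _ e _ h).resolve_right hb₁,
            fun h => (hsub _ b _ h).resolve_right hb₂⟩
      · push Not at h
        have := DivisionRing.densely_ordered (k := k)
        obtain ⟨z, hz₁, hz₂⟩ := Order.exists_between_finsets
          ((E.filter fun d => P (e - d)).image fun d => pairing d x₀)
          ((E.filter fun d => P (d - e)).image fun d => pairing d x₀) (by
            intro p hp q hq
            obtain ⟨d, hd, rfl⟩ := Finset.mem_image.1 hp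
            obtain ⟨d', hd', rfl⟩ := Finset.mem_image.1 hq
            obtain ⟨hd, hde⟩ := Finset.mem_filter.1 hd
            obtain ⟨hd', hde'⟩ := Finset.mem_filter.1 hd'
            rw [hlt d hd d' hd']
            exact (hsub _ d' _ hde).resolve_left (hasymm _ _ hde'))
        have h₁ : ∀ d ∈ E, P (e - d) → pairing d x₀ < z := fun d hd h =>
          hz₁ _ (Finset.mem_image_of_mem _ (Finset.mem_filter.2 ⟨hd, h⟩))
        have h₂ : ∀ d ∈ E, P (d - e) → z < pairing d x₀ := fun d hd h =>
          hz₂ _ (Finset.mem_image_of_mem _ (Finset.mem_filter.2 ⟨hd, h⟩))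
        refine ⟨z, fun d hd => ⟨⟨fun hlt' => ?_, h₁ d hd⟩, ⟨fun hlt' => ?_, h₂ d hd⟩⟩⟩
        · by_contra hn
          exact lt_asymm hlt' (h₂ d hd (h d hd hn))
        · by_contra hn
          exact lt_asymm hlt' (h₁ d hd (not_not.1 fun hn' => hn (h d hd hn')))
    refine ⟨x₀.update j z, fun a ha => ?_⟩
    have hx : ∀ b : ι →₀ k, b j = 0 → pairing b (x₀.update j z) = pairing b x₀ := fun b hb =>
      pairing_congr fun i hi => by
        have hij : i ≠ j := fun h => hi (h ▸ hb)
        simp [Finsupp.update, hij]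
    by_cases haj : a j = 0
    · rw [hx a haj]
      exact hx₀ a (Finset.mem_union_left _ (Finset.mem_filter.2 ⟨ha, haj⟩))
    have hc : c a ∈ E := Finset.mem_image_of_mem _ (Finset.mem_filter.2 ⟨ha, haj⟩)
    have hac : a = a j • (e - c a) := by simp only [c, sub_sub_cancel, smul_inv_smul₀ haj]
    have hpa : pairing a (x₀.update j z) = a j * (z - pairing (c a) x₀) := by
      conv_lhs => rw [hac]
      rw [pairing_smul, pairing_sub, hx _ (hE _ hc j hj), pairing_single]
      simp
    rw [hpa]
    rcases lt_or_gt_of_ne haj with h | h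
    · have hac' : a = (-a j) • (c a - e) := by rw [neg_smul, ← smul_neg, neg_sub, ← hac]
      have hPa : P a ↔ P (c a - e) := by
        conv_lhs => rw [hac', hP.smul _ (neg_pos.2 h) _ Submodule.mem_top]
      rw [hPa, ← (hz _ hc).2, mul_pos_iff]
      simp [h, h.not_gt]
    · have hPa : P a ↔ P (e - c a) := by
        conv_lhs => rw [hac, hP.smul _ h _ Submodule.mem_top]
      rw [hPa, ← (hz _ hc).1, mul_pos_iff]
      simp [h, h.not_gt]

end Pairing

section Hom

variable {k ι L : Type*} [DivisionRing k] [LinearOrder k] [DistribLattice L]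

/-- The graph of the lattice homomorphism that sends `⟦a > 0⟧` to `s a`. -/
inductive SignRel (s : (ι →₀ k) → L) : Set (ι →₀ k) → L → Prop
  | pos (a : ι →₀ k) : SignRel s {x ∈ Set.univ | 0 < pairing a x} (s a)
  | neg (a : ι →₀ k) : SignRel s {x ∈ Set.univ | pairing a x < 0} (s (-a))
  | union {U V : Set (ι →₀ k)} {l m : L} :
      SignRel s U l → SignRel s V m → SignRel s (U ∪ V) (l ⊔ m)
  | inter {U V : Set (ι →₀ k)} {l m : L} :
      SignRel s U l → SignRel s V m → SignRel s (U ∩ V) (l ⊓ m)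

variable {s : (ι →₀ k) → L}

theorem MemOp.exists_signRel {U : Set (ι →₀ k)}
    (hU : MemOp (Set.univ : Set (ι →₀ k)) Set.univ U) : ∃ l, SignRel s U l := by
  induction hU with
  | pos a _ => exact ⟨_, .pos a⟩
  | neg a _ => exact ⟨_, .neg a⟩
  | union _ _ h₁ h₂ => exact ⟨_, h₁.choose_spec.union h₂.choose_spec⟩
  | inter _ _ h₁ h₂ => exact ⟨_, h₁.choose_spec.inter h₂.choose_spec⟩

variable [IsStrictOrderedRing k]

theorem SignRel.exists_finset {U : Set (ι →₀ k)} {l : L} (h : SignRel s U l) :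
    ∃ S : Finset (ι →₀ k), ∀ Q : Order.Ideal L, Q.IsPrime → ∀ x : ι →₀ k,
      (∀ a ∈ S, 0 < pairing a x ↔ s a ∉ Q) → (x ∈ U ↔ l ∉ Q) := by
  induction h with
  | pos a => exact ⟨{a}, fun Q _ x hx => by simpa using hx a (by simp)⟩
  | neg a => exact ⟨{-a}, fun Q _ x hx => by simpa [pairing_neg] using hx (-a) (by simp)⟩
  | union _ _ h₁ h₂ =>
    obtain ⟨S₁, h₁⟩ := h₁
    obtain ⟨S₂, h₂⟩ := h₂
    refine ⟨S₁ ∪ S₂, fun Q hQ x hx => ?_⟩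
    rw [Set.mem_union, h₁ Q hQ x fun a ha => hx a (Finset.mem_union_left _ ha),
      h₂ Q hQ x fun a ha => hx a (Finset.mem_union_right _ ha), Order.Ideal.sup_mem_iff]
    tauto
  | inter _ _ h₁ h₂ =>
    obtain ⟨S₁, h₁⟩ := h₁
    obtain ⟨S₂, h₂⟩ := h₂
    refine ⟨S₁ ∪ S₂, fun Q hQ x hx => ?_⟩
    rw [Set.mem_inter_iff, h₁ Q hQ x fun a ha => hx a (Finset.mem_union_left _ ha),
      h₂ Q hQ x fun a ha => hx a (Finset.mem_union_right _ ha), ← not_or, not_iff_not]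
    exact ⟨fun h => h.elim (Q.lower inf_le_left) (Q.lower inf_le_right), hQ.mem_or_mem⟩

variable [OrderBot L]

theorem SignRel.le (hs : IsSignMap (⊤ : Submodule k (ι →₀ k)) s) {U V : Set (ι →₀ k)} {l m : L}
    (hU : SignRel s U l) (hV : SignRel s V m) (hUV : U ⊆ V) : l ≤ m := by
  by_contra hlm
  obtain ⟨Q, hQ, hmQ, hlQ⟩ := DistribLattice.prime_ideal_of_disjoint_filter_ideal
    (F := Order.PFilter.principal l) (I := Order.Ideal.principal m)
    (Set.disjoint_left.2 fun x hx hx' => hlm (le_trans hx hx'))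
  have hl : l ∉ Q := Set.disjoint_left.1 hlQ (Order.PFilter.mem_principal.2 le_rfl)
  have hm : m ∈ Q := hmQ (Order.Ideal.mem_principal_self)
  have hP : IsSignMap (⊤ : Submodule k (ι →₀ k)) fun a => s a ∉ Q := by
    refine ⟨fun a ha => ?_, fun a ha b hb h => ?_, fun t ht a ha => by rw [hs.smul t ht a ha]⟩
    · refine eq_bot_iff.2 fun h => ?_
      have := hs.inf_neg a ha
      exact (hQ.mem_or_mem (this ▸ Order.Ideal.bot_mem Q)).elim h.1 h.2
    · by_contra hn
      simp only [sup_Prop_eq, not_or, not_not] at hn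
      exact h (Q.lower (hs.add_le a ha b hb) (Order.Ideal.sup_mem hn.1 hn.2))
  obtain ⟨S₁, h₁⟩ := hU.exists_finset
  obtain ⟨S₂, h₂⟩ := hV.exists_finset
  obtain ⟨x, hx⟩ := exists_realization hP ((S₁ ∪ S₂).biUnion Finsupp.support) (S₁ ∪ S₂)
    fun a ha i hi => by
      by_contra h
      exact hi (Finset.mem_biUnion.2 ⟨a, ha, Finsupp.mem_support_iff.2 h⟩)
  have hxU := (h₁ Q hQ x fun a ha => hx a (Finset.mem_union_left _ ha)).2 hl
  exact (h₂ Q hQ x fun a ha => hx a (Finset.mem_union_right _ ha)).1 (hUV hxU) hm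

theorem exists_eq_of_signRel (hs : IsSignMap (⊤ : Submodule k (ι →₀ k)) s) :
    ∃ g : Set (ι →₀ k) → L, ∀ U l, SignRel s U l → g U = l := by
  refine ⟨fun U => if h : ∃ l, SignRel s U l then h.choose else ⊥, fun U l hl => ?_⟩
  have h : ∃ l, SignRel s U l := ⟨l, hl⟩
  simp only [dif_pos h]
  exact le_antisymm (h.choose_spec.le hs hl subset_rfl) (hl.le hs h.choose_spec subset_rfl)

theorem IsSignMap.exists_surjective_extend [Countable k] [Countable ι] [Countable L]
    (hcn : ∀ a b : L, ∃ x y : L, a ⊔ b = a ⊔ y ∧ a ⊔ b = x ⊔ b ∧ x ⊓ y = ⊥)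
    {I : Set ι} (hI : Iᶜ.Infinite) {s₀ : (ι →₀ k) → L}
    (hs₀ : IsSignMap (Finsupp.supported k k I) s₀) :
    ∃ s : (ι →₀ k) → L, IsSignMap (⊤ : Submodule k (ι →₀ k)) s ∧
      Set.EqOn s s₀ (Finsupp.supported k k I : Set (ι →₀ k)) ∧ Function.Surjective s := by
  have := hI.to_subtype
  obtain ⟨_⟩ := nonempty_denumerable (Iᶜ : Set ι)
  let j : ℕ ≃ (Iᶜ : Set ι) := (Denumerable.eqv _).symm
  obtain ⟨h, hh⟩ := exists_surjective_nat L
  let A : ℕ → Set ι := fun n => {i | i ∈ I ∨ ∃ m < n, (j m : ι) = i}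
  let W : ℕ → Submodule k (ι →₀ k) := fun n => Finsupp.supported k k (A n)
  have hAmono : Monotone A := fun m n hmn i hi =>
    hi.imp id fun ⟨p, hp, hpi⟩ => ⟨p, hp.trans_le hmn, hpi⟩
  have hWmono : Monotone fun n => (W n : Set (ι →₀ k)) := fun m n hmn =>
    Finsupp.supported_mono (hAmono hmn)
  have hA₀ : A 0 = I := by simp [A]
  have hjW : ∀ m n, m < n → Finsupp.single (j m : ι) (1 : k) ∈ W n := fun m n hmn =>
    Finsupp.single_mem_supported k _ (Or.inr ⟨m, hmn, rfl⟩)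
  have hcover : ∀ x : ι →₀ k, ∃ n, x ∈ W n := fun x => by
    have : ∀ i, ∃ n, i ∈ A n := fun i => by
      by_cases hi : i ∈ I
      · exact ⟨0, Or.inl hi⟩
      · exact ⟨j.symm ⟨i, hi⟩ + 1, Or.inr ⟨j.symm ⟨i, hi⟩, Nat.lt_succ_self _, by simp⟩⟩
    choose N hN using this
    exact ⟨x.support.sup N, fun i hi => hAmono (Finset.le_sup (f := N) hi) (hN i)⟩
  obtain ⟨s, hs⟩ := exists_limit_of_extension (fun n => (W n : Set (ι →₀ k))) hWmono
    (fun n F => IsSignMap (W n) F ∧ Set.EqOn F s₀ (W 0) ∧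
      ∀ m < n, F (Finsupp.single (j m : ι) 1) = h m) s₀
    ⟨by simpa only [W, hA₀] using hs₀, fun _ _ => rfl, by simp⟩
    (fun n F ⟨hF, hF₀, hFj⟩ => by
      obtain ⟨F', h₁, h₂, h₃⟩ := hF.exists_extend hcn (Finsupp.lapply (j n : ι))
        (Finsupp.single (j n : ι) 1) (by simp)
        (fun a ha => (Finsupp.mem_supported' k a).1 ha _ (by
          rintro (hi | ⟨m, hm, hmn⟩)
          · exact (j n).2 hi
          · exact hm.ne (j.injective (Subtype.ext hmn))))
        (W (n + 1)) (fun x hx => (Finsupp.mem_supported' k _).2 fun i hi => by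
          by_cases hij : i = j n
          · simp [hij]
          · have : x i = 0 := (Finsupp.mem_supported' k x).1 hx i (by
              rintro (hi' | ⟨m, hm, hmn⟩)
              · exact hi (Or.inl hi')
              · rcases Nat.lt_succ_iff_lt_or_eq.1 hm with hm | rfl
                · exact hi (Or.inr ⟨m, hm, hmn⟩)
                · exact hij hmn.symm)
            simp [this, Ne.symm hij]) (h n)
      refine ⟨F', ⟨h₁, fun x hx => ?_, fun m hm => ?_⟩, h₂⟩
      · rw [← h₂ (hWmono n.zero_le hx), hF₀ hx]
      · rcases Nat.lt_succ_iff_lt_or_eq.1 hm with hm | rfl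
        · rw [← h₂ (hjW m n hm), hFj m hm]
        · exact h₃)
  refine ⟨s, ⟨fun a _ => ?_, fun a _ b _ => ?_, fun t ht a _ => ?_⟩, ?_, fun l => ?_⟩
  · obtain ⟨n, ha⟩ := hcover a
    obtain ⟨F, ⟨hF, -⟩, heq⟩ := hs n
    rw [heq ha, heq ((W n).neg_mem ha), hF.inf_neg a ha]
  · obtain ⟨n, ha⟩ := hcover a
    obtain ⟨m, hb⟩ := hcover b
    obtain ⟨F, ⟨hF, -⟩, heq⟩ := hs (max n m)
    have ha := hWmono (le_max_left n m) ha
    have hb := hWmono (le_max_right n m) hb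
    rw [heq ha, heq hb, heq ((W _).add_mem ha hb)]
    exact hF.add_le a ha b hb
  · obtain ⟨n, ha⟩ := hcover a
    obtain ⟨F, ⟨hF, -⟩, heq⟩ := hs n
    rw [heq ha, heq ((W n).smul_mem t ha), hF.smul t ht a ha]
  · obtain ⟨F, ⟨-, hF, -⟩, heq⟩ := hs 0
    rw [← hA₀]
    exact heq.trans hF
  · obtain ⟨n, rfl⟩ := hh l
    obtain ⟨F, ⟨-, -, hF⟩, heq⟩ := hs (n + 1)
    exact ⟨_, (heq (hjW n (n + 1) n.lt_succ_self)).trans (hF n n.lt_succ_self)⟩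

end Hom

/-- for a countable totally ordered division ring `k`, countable `I ⊊ J`
with `J∖I` infinite (here `J = ι`), `K`, `L` distributive `0`-lattices with `L` countable
and completely normal, a `0`-lattice homomorphism `φ : K → L` and a `0`-lattice
homomorphism `f : Op⁻(k^(I), k^(I)) → K`, there is a surjective lattice homomorphism
`g : Op⁻(k^(J), k^(J)) ↠ L` with `g ∘ ε_{I,J} = φ ∘ f` on `Op⁻(k^(I), k^(I))`. -/
theorem stmt3 (k ι : Type*) [DivisionRing k] [LinearOrder k]
    [CovariantClass k k (· + ·) (· < ·)] [PosMulStrictMono k] [MulPosStrictMono k]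
    [Countable k] [Countable ι]
    (I : Set ι) (hIne : I ≠ Set.univ) (hIinf : (Set.univ \ I).Infinite)
    (K : Type*) [DistribLattice K] [OrderBot K]
    (L : Type*) [DistribLattice L] [OrderBot L] [Countable L]
    (hcn : ∀ a b : L, ∃ x y : L, a ⊔ b = a ⊔ y ∧ a ⊔ b = x ⊔ b ∧ x ⊓ y = ⊥)
    (φ : K → L)
    (hφ : ∀ x y : K, φ (x ⊔ y) = φ x ⊔ φ y ∧ φ (x ⊓ y) = φ x ⊓ φ y)
    (hφ0 : φ ⊥ = ⊥)
    (f : Set (ι →₀ k) → K)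
    (hf : ∀ U V : Set (ι →₀ k),
      MemOp (suppIn I) (suppIn I) U → MemOp (suppIn I) (suppIn I) V →
      f (U ∪ V) = f U ⊔ f V ∧ f (U ∩ V) = f U ⊓ f V)
    (hf0 : f ∅ = ⊥) :
    ∃ g : Set (ι →₀ k) → L,
      (∀ U V : Set (ι →₀ k),
        MemOp (Set.univ : Set (ι →₀ k)) Set.univ U →
        MemOp (Set.univ : Set (ι →₀ k)) Set.univ V →
        g (U ∪ V) = g U ⊔ g V ∧ g (U ∩ V) = g U ⊓ g V) ∧
      (∀ l : L, ∃ U : Set (ι →₀ k),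
        MemOp (Set.univ : Set (ι →₀ k)) Set.univ U ∧ g U = l) ∧
      (∀ U : Set (ι →₀ k), MemOp (suppIn I) (suppIn I) U →
        g (epsilonMap I U) = φ (f U)) := by
  have : IsStrictOrderedRing k := by
    have h1 : (0 : k) < 1 := by
      rcases lt_or_gt_of_ne (zero_ne_one (α := k)) with h | h
      · exact h
      · have h' : (0 : k) < -1 := by simpa using add_lt_add_right h (-1)
        simpa using mul_lt_mul_of_pos_left h' h'
    exact {
      add_le_add_left := fun a b h c => by
        rcases h.eq_or_lt with rfl | h
        · exact le_rfl
        · exact (add_lt_add_left h c).le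
      le_of_add_le_add_left := fun a b c h => by
        by_contra hn
        exact absurd h (not_le.2 (add_lt_add_right (not_le.1 hn) a))
      zero_le_one := h1.le }
  have hmono : ∀ U V, MemOp (suppIn I) (suppIn I) U → MemOp (suppIn I) (suppIn I) V →
      U ⊆ V → φ (f U) ≤ φ (f V) := fun U V hU hV hUV => by
    rw [← sup_eq_right, ← (hφ _ _).1, ← (hf U V hU hV).1, Set.union_eq_self_of_subset_left hUV]
  let s₀ : (ι →₀ k) → L := fun a => φ (f {x ∈ suppIn I | 0 < pairing a x})
  have hmem : ∀ a : ι →₀ k, a ∈ Finsupp.supported k k I ↔ a ∈ suppIn I :=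
    Finsupp.mem_supported' k
  have hop : ∀ a ∈ Finsupp.supported k k I,
      MemOp (suppIn I) (suppIn I) {x ∈ suppIn I | 0 < pairing a x} :=
    fun a ha => .pos a ((hmem a).1 ha)
  have hs₀ : IsSignMap (Finsupp.supported k k I) s₀ := by
    refine ⟨fun a ha => ?_, fun a ha b hb => ?_, fun t ht a ha => ?_⟩
    · have hna := (Finsupp.supported k k I).neg_mem ha
      rw [← (hφ _ _).2, ← (hf _ _ (hop a ha) (hop _ hna)).2, ← hφ0, ← hf0]
      congr 2
      ext x
      simp only [pairing_neg, Set.mem_inter_iff, Set.mem_ofPred_eq, Set.mem_empty_iff_false,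
        iff_false, neg_pos]
      exact fun h => lt_asymm h.1.2 h.2.2
    · rw [← (hφ _ _).1, ← (hf _ _ (hop a ha) (hop b hb)).1]
      refine hmono _ _ (hop _ (Submodule.add_mem _ ha hb)) ((hop a ha).union (hop b hb)) ?_
      rintro x ⟨hx, h⟩
      rw [pairing_add] at h
      by_contra hn
      simp only [Set.mem_union, Set.mem_ofPred_eq, hx, true_and, not_or, not_lt] at hn
      exact h.not_ge (add_nonpos hn.1 hn.2)
    · simp only [s₀, pairing_smul, mul_pos_iff_of_pos_left ht]
  obtain ⟨s, hs, hss₀, hsurj⟩ := hs₀.exists_surjective_extend hcn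
    (by rwa [Set.compl_eq_univ_sdiff])
  obtain ⟨g, hg⟩ := exists_eq_of_signRel hs
  refine ⟨g, fun U V hU hV => ?_, fun l => ?_, fun U hU => hg _ _ ?_⟩
  · obtain ⟨l, hl⟩ := hU.exists_signRel (s := s)
    obtain ⟨m, hm⟩ := hV.exists_signRel (s := s)
    rw [hg _ _ hl, hg _ _ hm]
    exact ⟨hg _ _ (hl.union hm), hg _ _ (hl.inter hm)⟩
  · obtain ⟨a, rfl⟩ := hsurj l
    exact ⟨_, .pos a (Set.mem_univ a), hg _ _ (.pos a)⟩
  · have hres : ∀ a ∈ suppIn I, ∀ y : ι →₀ k, pairing a (restrictTo I y) = pairing a y :=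
      fun a ha y => pairing_congr fun i hi =>
        Finsupp.filter_apply_pos _ _ (not_not.1 fun h => hi (ha i h))
    have hresI : ∀ y : ι →₀ k, restrictTo I y ∈ suppIn I := fun y i hi =>
      Finsupp.filter_apply_neg _ _ hi
    induction hU with
    | pos a ha =>
      convert SignRel.pos (s := s) a using 1
      · ext y
        simp [epsilonMap, hresI, hres a ha]
      · exact (hss₀ ((hmem a).2 ha)).symm
    | neg a ha =>
      convert SignRel.neg (s := s) a using 1
      · ext y
        simp [epsilonMap, hresI, hres a ha]
      · rw [hss₀ (Submodule.neg_mem _ ((hmem a).2 ha))]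
        simp only [s₀, pairing_neg, neg_pos]
    | union hU hV h₁ h₂ =>
      rw [(hf _ _ hU hV).1, (hφ _ _).1]
      exact h₁.union h₂
    | inter hU hV h₁ h₂ =>
      rw [(hf _ _ hU hV).2, (hφ _ _).2]
      exact h₁.inter h₂
end

section
/- Let D be a semi-Heyting sublattice of a bounded distributive lattice E, let a, b ∈ E, set B := BR(D) ⊆ BR(E), and assume: E is generated as a lattice by D ∪ {a, b}; a ∧ b = 0; the elements a_B, b_B, (a ∨ b)_B, a^B, b^B all exist relative to B; and (a ∨ b)_B = a_B ∨ b_B. Let L be a distributive 0-lattice and f : D → L a 0-lattice homomorphism. Let D' be a finite semi-Heyting sublattice of D with {a_B, b_B} ⊆ BR(D') and {a^B, b^B} ⊆ D', and let e⃗ = (e_p)_{p ∈ Ji(D')} be a consonance kernel of f' := f↾_{D'}. Then, setting f'_{e⃗}(c) := ⋁{e_p : p ∈ Ji(D'), p ≤ p_* ∨ c} for c ∈ E, the pair (α, β) := (f'_{e⃗}(a), f'_{e⃗}(b)) satisfies α ≤ f(a^B), β ≤ f(b^B), α ∧ β = 0, BR(f)(a_B) ≤ α, and BR(f)(b_B)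 ≤ β; consequently there is a lattice homomorphism g : E → L extending f with g(a) = α and g(b) = β. -/
/-- Membership in the sublattice generated by a subset `S`. -/
inductive LatClosure {E : Type*} [Lattice E] (S : Set E) : E → Prop
  | base {x : E} (hx : x ∈ S) : LatClosure S x
  | sup {x y : E} : LatClosure S x → LatClosure S y → LatClosure S (x ⊔ y)
  | inf {x y : E} : LatClosure S x → LatClosure S y → LatClosure S (x ⊓ y)

/-- Membership in the generalized Boolean subalgebra generated by a subset `S`. -/
inductive GBAClosure {C : Type*} [GeneralizedBooleanAlgebra C] (S : Set C) : C → Prop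
  | base {x : C} (hx : x ∈ S) : GBAClosure S x
  | bot : GBAClosure S ⊥
  | sup {x y : C} : GBAClosure S x → GBAClosure S y → GBAClosure S (x ⊔ y)
  | inf {x y : C} : GBAClosure S x → GBAClosure S y → GBAClosure S (x ⊓ y)
  | sdiff {x y : C} : GBAClosure S x → GBAClosure S y → GBAClosure S (x \ y)

/-- The set of join-irreducible elements of a sublattice `S` (viewed as a subset). -/
def JiSet {E : Type*} [Lattice E] [OrderBot E] (S : Set E) : Set E :=
  {p | p ∈ S ∧ p ≠ ⊥ ∧ ∀ x ∈ S, ∀ y ∈ S, p = x ⊔ y → p = x ∨ p = y}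

section DistribLattice

variable {E : Type*} [DistribLattice E] [OrderBot E]

/-- The meet of two elements in normal form over a disjoint pair `a`, `b`. -/
theorem normalForm_inf {a b : E} (hab : a ⊓ b = ⊥) (x y z x' y' z' : E) :
    (x ⊔ y ⊓ a ⊔ z ⊓ b) ⊓ (x' ⊔ y' ⊓ a ⊔ z' ⊓ b) =
      x ⊓ x' ⊔ (x ⊓ y' ⊔ y ⊓ x' ⊔ y ⊓ y') ⊓ a ⊔ (x ⊓ z' ⊔ z ⊓ x' ⊔ z ⊓ z') ⊓ b := by
  have hyz (u v : E) : u ⊓ a ⊓ (v ⊓ b) = ⊥ := by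
    rw [inf_inf_inf_comm, hab, inf_bot_eq]
  have hzy (u v : E) : u ⊓ b ⊓ (v ⊓ a) = ⊥ := by
    rw [inf_comm, hyz]
  have hidem (u v c : E) : u ⊓ c ⊓ (v ⊓ c) = u ⊓ v ⊓ c := by
    rw [inf_inf_inf_comm, inf_idem]
  simp only [inf_sup_left, inf_sup_right, hyz, hzy, hidem, sup_bot_eq]
  ac_rfl

/-- The join of two elements in normal form. -/
theorem normalForm_sup {E : Type*} [DistribLattice E] (a b x y z x' y' z' : E) :
    (x ⊔ y ⊓ a ⊔ z ⊓ b) ⊔ (x' ⊔ y' ⊓ a ⊔ z' ⊓ b) =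
      x ⊔ x' ⊔ (y ⊔ y') ⊓ a ⊔ (z ⊔ z') ⊓ b := by
  simp only [inf_sup_right]
  ac_rfl

/-- Every element of the lattice generated by `D ∪ {a, b}` has a normal form. -/
theorem LatClosure.exists_normalForm {E : Type*} [DistribLattice E] [BoundedOrder E]
    {D : Set E} (hDbot : ⊥ ∈ D) (hDtop : ⊤ ∈ D)
    (hDsup : ∀ x ∈ D, ∀ y ∈ D, x ⊔ y ∈ D) (hDinf : ∀ x ∈ D, ∀ y ∈ D, x ⊓ y ∈ D)
    {a b : E} (hab : a ⊓ b = ⊥) {x : E} (hx : LatClosure (D ∪ {a, b}) x) :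
    ∃ u v w, u ∈ D ∧ v ∈ D ∧ w ∈ D ∧ x = u ⊔ v ⊓ a ⊔ w ⊓ b := by
  induction hx with
  | base hx =>
    rcases hx with hx | rfl | rfl
    · exact ⟨_, ⊥, ⊥, hx, hDbot, hDbot, by simp⟩
    · exact ⟨⊥, ⊤, ⊥, hDbot, hDtop, hDbot, by simp⟩
    · exact ⟨⊥, ⊥, ⊤, hDbot, hDbot, hDtop, by simp⟩
  | sup _ _ ih ih' =>
    obtain ⟨u, v, w, hu, hv, hw, rfl⟩ := ih
    obtain ⟨u', v', w', hu', hv', hw', rfl⟩ := ih'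
    exact ⟨_, _, _, hDsup _ hu _ hu', hDsup _ hv _ hv', hDsup _ hw _ hw',
      normalForm_sup ..⟩
  | inf _ _ ih ih' =>
    obtain ⟨u, v, w, hu, hv, hw, rfl⟩ := ih
    obtain ⟨u', v', w', hu', hv', hw', rfl⟩ := ih'
    exact ⟨_, _, _, hDinf _ hu _ hu',
      hDsup _ (hDsup _ (hDinf _ hu _ hv') _ (hDinf _ hv _ hu')) _ (hDinf _ hv _ hv'),
      hDsup _ (hDsup _ (hDinf _ hu _ hw') _ (hDinf _ hw _ hu')) _ (hDinf _ hw _ hw'),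
      normalForm_inf hab ..⟩

/-- A lattice homomorphism `f` on `D` extends to the lattice generated by `D ∪ {a, b}`, with
prescribed disjoint values at the disjoint elements `a`, `b`, as soon as the values respect the
inequalities between normal forms. -/
theorem exists_extension_of_normalForm_le {E L : Type*} [DistribLattice E] [BoundedOrder E]
    [DistribLattice L] [OrderBot L]
    {D : Set E} (hDbot : ⊥ ∈ D) (hDtop : ⊤ ∈ D)
    (hDsup : ∀ x ∈ D, ∀ y ∈ D, x ⊔ y ∈ D) (hDinf : ∀ x ∈ D, ∀ y ∈ D, x ⊓ y ∈ D)
    {a b : E} (hgenE : ∀ x : E, LatClosure (D ∪ {a, b}) x) (hab : a ⊓ b = ⊥)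
    {f : E → L}
    (hfD : ∀ x ∈ D, ∀ y ∈ D, f (x ⊔ y) = f x ⊔ f y ∧ f (x ⊓ y) = f x ⊓ f y)
    (hf0 : f ⊥ = ⊥) {α β : L} (hαβ : α ⊓ β = ⊥) (hα : α ≤ f ⊤) (hβ : β ≤ f ⊤)
    (hD : ∀ x ∈ D, ∀ u ∈ D, ∀ v ∈ D, ∀ w ∈ D, x ≤ u ⊔ v ⊓ a ⊔ w ⊓ b →
      f x ≤ f u ⊔ f v ⊓ α ⊔ f w ⊓ β)
    (ha : ∀ y ∈ D, ∀ u ∈ D, y ⊓ a ≤ u → f y ⊓ α ≤ f u)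
    (hb : ∀ y ∈ D, ∀ u ∈ D, y ⊓ b ≤ u → f y ⊓ β ≤ f u) :
    ∃ g : E → L,
      (∀ x y : E, g (x ⊔ y) = g x ⊔ g y ∧ g (x ⊓ y) = g x ⊓ g y) ∧
      (∀ x ∈ D, g x = f x) ∧ g a = α ∧ g b = β := by
  have hmono : ∀ u ∈ D, ∀ v ∈ D, ∀ w ∈ D, ∀ u' ∈ D, ∀ v' ∈ D, ∀ w' ∈ D,
      u ⊔ v ⊓ a ⊔ w ⊓ b ≤ u' ⊔ v' ⊓ a ⊔ w' ⊓ b →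
      f u ⊔ f v ⊓ α ⊔ f w ⊓ β ≤ f u' ⊔ f v' ⊓ α ⊔ f w' ⊓ β := by
    intro u hu v hv w hw u' hu' v' hv' w' hw' h
    have hva : v ⊓ a ≤ u' ⊔ v' := by
      calc v ⊓ a ≤ (u' ⊔ v' ⊓ a ⊔ w' ⊓ b) ⊓ a :=
            le_inf ((le_sup_right.trans le_sup_left).trans h) inf_le_right
        _ = (u' ⊔ v' ⊓ a) ⊓ a := by
            rw [inf_sup_right, inf_assoc, inf_comm b, hab, inf_bot_eq, sup_bot_eq]
        _ ≤ u' ⊔ v' := inf_le_left.trans (sup_le_sup_left inf_le_left _)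
    have hwb : w ⊓ b ≤ u' ⊔ w' := by
      calc w ⊓ b ≤ (u' ⊔ v' ⊓ a ⊔ w' ⊓ b) ⊓ b :=
            le_inf (le_sup_right.trans h) inf_le_right
        _ = (u' ⊔ w' ⊓ b) ⊓ b := by
            rw [sup_right_comm, inf_sup_right, inf_assoc v', hab, inf_bot_eq, sup_bot_eq]
        _ ≤ u' ⊔ w' := inf_le_left.trans (sup_le_sup_left inf_le_left _)
    have h₁ := hD u hu u' hu' v' hv' w' hw' ((le_sup_left.trans le_sup_left).trans h)
    have h₂ : f v ⊓ α ≤ f u' ⊔ f v' ⊓ α := by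
      have := ha v hv _ (hDsup _ hu' _ hv') hva
      rw [(hfD _ hu' _ hv').1] at this
      calc f v ⊓ α ≤ (f u' ⊔ f v') ⊓ α := le_inf this inf_le_right
        _ ≤ f u' ⊔ f v' ⊓ α := by
          rw [inf_sup_right]
          exact sup_le_sup_right inf_le_left _
    have h₃ : f w ⊓ β ≤ f u' ⊔ f w' ⊓ β := by
      have := hb w hw _ (hDsup _ hu' _ hw') hwb
      rw [(hfD _ hu' _ hw').1] at this
      calc f w ⊓ β ≤ (f u' ⊔ f w') ⊓ β := le_inf this inf_le_right
        _ ≤ f u' ⊔ f w' ⊓ β := by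
          rw [inf_sup_right]
          exact sup_le_sup_right inf_le_left _
    exact sup_le (sup_le h₁ (h₂.trans le_sup_left)) (h₃.trans (sup_le_sup_right le_sup_left _))
  choose u v w hu hv hw hx using
    fun x => (hgenE x).exists_normalForm hDbot hDtop hDsup hDinf hab
  let g : E → L := fun x => f (u x) ⊔ f (v x) ⊓ α ⊔ f (w x) ⊓ β
  have hg {x r s t : E} (hr : r ∈ D) (hs : s ∈ D) (ht : t ∈ D)
      (h : x = r ⊔ s ⊓ a ⊔ t ⊓ b) : g x = f r ⊔ f s ⊓ α ⊔ f t ⊓ β := by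
    have h' := (hx x).symm.trans h
    exact le_antisymm (hmono _ (hu x) _ (hv x) _ (hw x) _ hr _ hs _ ht h'.le)
      (hmono _ hr _ hs _ ht _ (hu x) _ (hv x) _ (hw x) h'.ge)
  refine ⟨g, fun x y => ⟨?_, ?_⟩, fun x hxD => ?_, ?_, ?_⟩
  · rw [hg (hDsup _ (hu x) _ (hu y)) (hDsup _ (hv x) _ (hv y)) (hDsup _ (hw x) _ (hw y))
      (by rw [← normalForm_sup, ← hx, ← hx]), (hfD _ (hu x) _ (hu y)).1,
      (hfD _ (hv x) _ (hv y)).1, (hfD _ (hw x) _ (hw y)).1, ← normalForm_sup]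
  · have h₁ := hDinf _ (hu x) _ (hv y)
    have h₂ := hDinf _ (hv x) _ (hu y)
    have h₃ := hDinf _ (hv x) _ (hv y)
    have h₄ := hDinf _ (hu x) _ (hw y)
    have h₅ := hDinf _ (hw x) _ (hu y)
    have h₆ := hDinf _ (hw x) _ (hw y)
    rw [hg (hDinf _ (hu x) _ (hu y)) (hDsup _ (hDsup _ h₁ _ h₂) _ h₃)
      (hDsup _ (hDsup _ h₄ _ h₅) _ h₆) (by rw [← normalForm_inf hab, ← hx, ← hx]),
      (hfD _ (hDsup _ h₁ _ h₂) _ h₃).1, (hfD _ h₁ _ h₂).1,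
      (hfD _ (hDsup _ h₄ _ h₅) _ h₆).1, (hfD _ h₄ _ h₅).1,
      (hfD _ (hu x) _ (hu y)).2, (hfD _ (hu x) _ (hv y)).2, (hfD _ (hv x) _ (hu y)).2,
      (hfD _ (hv x) _ (hv y)).2, (hfD _ (hu x) _ (hw y)).2, (hfD _ (hw x) _ (hu y)).2,
      (hfD _ (hw x) _ (hw y)).2, ← normalForm_inf hαβ]
  · rw [hg hxD hDbot hDbot (by simp)]
    simp [hf0]
  · rw [hg hDbot hDtop hDbot (by simp)]
    simp [hf0, hα]
  · rw [hg hDbot hDbot hDtop (by simp)]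
    simp [hf0, hβ]

/-- Join-irreducible elements of a sublattice of a distributive lattice are join-prime. -/
theorem JiSet.le_or_le {S : Set E} (hSinf : ∀ x ∈ S, ∀ y ∈ S, x ⊓ y ∈ S) {p x y : E}
    (hp : p ∈ JiSet S) (hx : x ∈ S) (hy : y ∈ S) (h : p ≤ x ⊔ y) : p ≤ x ∨ p ≤ y := by
  have hp' : p = p ⊓ x ⊔ p ⊓ y := by rw [← inf_sup_left, inf_eq_left.2 h]
  rcases hp.2.2 _ (hSinf _ hp.1 _ hx) _ (hSinf _ hp.1 _ hy) hp' with h | h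
  · exact .inl (inf_eq_left.1 h.symm)
  · exact .inr (inf_eq_left.1 h.symm)

/-- If `p ≤ p_* ⊔ a` and `q ≤ q_* ⊔ b` for disjoint `a`, `b`, then `p ≤ q` is impossible provided
that `p → p_*` exists and belongs to the given sublattice. -/
theorem JiSet.not_le_of_disjoint {S : Set E}
    (hSinf : ∀ x ∈ S, ∀ y ∈ S, x ⊓ y ∈ S)
    (himp : ∀ x ∈ S, ∀ y ∈ S, ∃ z ∈ S, IsGreatest {w : E | x ⊓ w ≤ y} z)
    {a b : E} (hab : a ⊓ b = ⊥) {p p' q q' : E} (hp : p ∈ JiSet S) (hq : q ∈ JiSet S)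
    (hp' : p' ∈ S ∧ p' < p) (hq' : q' ∈ S ∧ q' < q) (hpa : p ≤ p' ⊔ a) (hqb : q ≤ q' ⊔ b) :
    ¬ p ≤ q := by
  intro hpq
  obtain ⟨z, hzS, hz, hzmax⟩ := himp p hp.1 p' hp'.1
  have hbz : b ≤ z := hzmax <| by
    calc p ⊓ b ≤ (p' ⊔ a) ⊓ b := inf_le_inf_right _ hpa
      _ = p' ⊓ b := by rw [inf_sup_right, hab, sup_bot_eq]
      _ ≤ p' := inf_le_left
  rcases JiSet.le_or_le hSinf hq hq'.1 hzS (hqb.trans (sup_le_sup_left hbz _)) with h | h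
  · exact hq'.2.not_ge h
  · exact hp'.2.not_ge ((le_inf le_rfl (hpq.trans h)).trans hz)

end DistribLattice

section BooleanEnvelope

variable {E C : Type*} [GeneralizedBooleanAlgebra C]

theorem GBAClosure.mono {S T : Set C} (h : S ⊆ T) {z : C} (hz : GBAClosure S z) :
    GBAClosure T z := by
  induction hz with
  | base hx => exact .base (h hx)
  | bot => exact .bot
  | sup _ _ ih ih' => exact .sup ih ih'
  | inf _ _ ih ih' => exact .inf ih ih'
  | sdiff _ _ ih ih' => exact .sdiff ih ih'

theorem GBAClosure.le_of_mem_upperBounds {S : Set C} {t : C} (ht : t ∈ upperBounds S) {z : C}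
    (hz : GBAClosure S z) : z ≤ t := by
  induction hz with
  | base hx => exact ht hx
  | bot => exact bot_le
  | sup _ _ ih ih' => exact sup_le ih ih'
  | inf _ _ ih _ => exact inf_le_left.trans ih
  | sdiff _ _ ih _ => exact sdiff_le.trans ih

variable [DistribLattice E] {j : E → C}

/-- The difference `j p \ j p_*` is an atom of the Boolean envelope: it is contained in or disjoint
from every element. -/
theorem GBAClosure.sdiff_le_or_disjoint {S : Set E}
    (hSinf : ∀ x ∈ S, ∀ y ∈ S, x ⊓ y ∈ S)
    (hjmono : Monotone j) (hjinf : ∀ x y, j (x ⊓ y) = j x ⊓ j y)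
    {p p' : E} (hp : p ∈ S) (hp' : IsGreatest {w : E | w ∈ S ∧ w < p} p') {z : C}
    (hz : GBAClosure (j '' S) z) : j p \ j p' ≤ z ∨ Disjoint (j p \ j p') z := by
  induction hz with
  | base hx =>
    obtain ⟨x, hx, rfl⟩ := hx
    by_cases hpx : p ≤ x
    · exact .inl (sdiff_le.trans (hjmono hpx))
    · have h : p ⊓ x ≤ p' := hp'.2 ⟨hSinf _ hp _ hx, inf_lt_left.2 hpx⟩
      refine .inr (disjoint_iff.2 ?_)
      rw [inf_comm, ← inf_sdiff_assoc, inf_comm, ← hjinf]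
      exact sdiff_eq_bot_iff.2 (hjmono h)
  | bot => exact .inr disjoint_bot_right
  | sup _ _ ih ih' =>
    rcases ih with h | h
    · exact .inl (h.trans le_sup_left)
    · rcases ih' with h' | h'
      · exact .inl (h'.trans le_sup_right)
      · exact .inr (h.sup_right h')
  | inf _ _ ih ih' =>
    rcases ih with h | h
    · rcases ih' with h' | h'
      · exact .inl (le_inf h h')
      · exact .inr (h'.mono_right inf_le_right)
    · exact .inr (h.mono_right inf_le_left)
  | sdiff _ _ ih ih' =>
    rcases ih with h | h
    · rcases ih' with h' | h'
      · exact .inr (disjoint_sdiff_self_right.mono_left h')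
      · exact .inl (le_sdiff.2 ⟨h, h'⟩)
    · exact .inr (h.mono_right sdiff_le)

/-- In a finite sublattice `S`, every element lies below the join of the atoms `j p \ j p_*`. -/
theorem le_sup_sdiff_of_finite [OrderBot E] {S : Set E} (hSfin : S.Finite) (hjbot : j ⊥ = ⊥)
    (hjsup : ∀ x y, j (x ⊔ y) = j x ⊔ j y) {pstar : E → E}
    (hpstar : ∀ p ∈ JiSet S, IsGreatest {w : E | w ∈ S ∧ w < p} (pstar p))
    {P : Finset E} (hP : ∀ p, p ∈ P ↔ p ∈ JiSet S) {x : E} (hx : x ∈ S) :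
    j x ≤ P.sup fun p => j p \ j (pstar p) := by
  refine hSfin.wellFoundedOn.induction (r := (· < ·))
    (P := fun x => j x ≤ P.sup fun p => j p \ j (pstar p)) hx fun x hx ih => ?_
  by_cases hx0 : x = ⊥
  · simp [hx0, hjbot]
  by_cases hxJ : x ∈ JiSet S
  · obtain ⟨⟨hmem, hlt⟩, -⟩ := hpstar x hxJ
    calc j x ≤ j (pstar x) ⊔ j x \ j (pstar x) := by rw [sup_sdiff_self_right]; exact le_sup_right
      _ ≤ _ := sup_le (ih _ hmem hlt)
        (Finset.le_sup (f := fun p => j p \ j (pstar p)) ((hP x).2 hxJ))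
  · simp only [JiSet, Set.mem_ofPred_eq, not_and, not_forall, not_or] at hxJ
    obtain ⟨y, hy, z, hz, rfl, hyne, hzne⟩ := hxJ hx hx0
    rw [hjsup]
    exact sup_le (ih y hy (lt_of_le_of_ne le_sup_left (Ne.symm hyne)))
      (ih z hz (lt_of_le_of_ne le_sup_right (Ne.symm hzne)))

end BooleanEnvelope

/-- Main Extension Lemma, "moreover" part: in the setting of the Main
Extension Lemma, given a finite semi-Heyting sublattice `D'` of `D` with
`a_B, b_B ∈ BR(D')` and `a^B, b^B ∈ D'`, and a consonance kernel `e` of `f' = f↾D'`,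
the pair `(α, β) = (f'_e a, f'_e b)` (where `f'_e c = ⋁ {e p : p ∈ Ji(D'), p ≤ p_* ⊔ c}`,
expressed as a least upper bound) satisfies condition (ii), and consequently `f` extends
to a lattice homomorphism `g : E → L` with `g a = α`, `g b = β`.
Here `pstar p` is the lower cover `p_*` of `p` relative to `D'`. -/
theorem stmt7 {E C L M : Type*}
    [DistribLattice E] [BoundedOrder E] [DistribLattice L] [OrderBot L]
    [GeneralizedBooleanAlgebra C] [GeneralizedBooleanAlgebra M]
    (D : Set E) (hDbot : ⊥ ∈ D) (hDtop : ⊤ ∈ D)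
    (hDsup : ∀ x ∈ D, ∀ y ∈ D, x ⊔ y ∈ D) (hDinf : ∀ x ∈ D, ∀ y ∈ D, x ⊓ y ∈ D)
    (hSH : ∀ x ∈ D, ∀ y ∈ D, ∃ z ∈ D, IsGreatest {w : E | x ⊓ w ≤ y} z)
    (j : E → C) (hjinj : Function.Injective j)
    (hjhom : ∀ x y : E, j (x ⊔ y) = j x ⊔ j y ∧ j (x ⊓ y) = j x ⊓ j y)
    (hjbot : j ⊥ = ⊥) (hjgen : ∀ c : C, GBAClosure (Set.range j) c)
    (a b : E)
    (hgenE : ∀ x : E, LatClosure (D ∪ {a, b}) x)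
    (hab : a ⊓ b = ⊥)
    (aB bB abB aT bT : C)
    (haB : IsGreatest {z : C | GBAClosure (j '' D) z ∧ z ≤ j a} aB)
    (hbB : IsGreatest {z : C | GBAClosure (j '' D) z ∧ z ≤ j b} bB)
    (habB : IsGreatest {z : C | GBAClosure (j '' D) z ∧ z ≤ j (a ⊔ b)} abB)
    (haT : IsLeast {z : C | GBAClosure (j '' D) z ∧ j a ≤ z} aT)
    (hbT : IsLeast {z : C | GBAClosure (j '' D) z ∧ j b ≤ z} bT)
    (habB4 : abB = aB ⊔ bB)
    (f : E → L)
    (hfD : ∀ x ∈ D, ∀ y ∈ D, f (x ⊔ y) = f x ⊔ f y ∧ f (x ⊓ y) = f x ⊓ f y)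
    (hf0 : f ⊥ = ⊥)
    (jL : L → M) (hjLinj : Function.Injective jL)
    (hjLhom : ∀ x y : L, jL (x ⊔ y) = jL x ⊔ jL y ∧ jL (x ⊓ y) = jL x ⊓ jL y)
    (hjLbot : jL ⊥ = ⊥) (hjLgen : ∀ m : M, GBAClosure (Set.range jL) m)
    (F : C → M)
    (hFj : ∀ x ∈ D, F (j x) = jL (f x))
    (hFhom : ∀ c c' : C, GBAClosure (j '' D) c → GBAClosure (j '' D) c' →
      F (c ⊔ c') = F c ⊔ F c' ∧ F (c ⊓ c') = F c ⊓ F c' ∧ F (c \ c') = F c \ F c')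
    (hF0 : F ⊥ = ⊥)
    -- the finite semi-Heyting sublattice `D'` of `D`
    (D' : Set E) (hD'sub : D' ⊆ D) (hD'fin : D'.Finite)
    (hD'bot : ⊥ ∈ D') (hD'top : ⊤ ∈ D')
    (hD'sup : ∀ x ∈ D', ∀ y ∈ D', x ⊔ y ∈ D')
    (hD'inf : ∀ x ∈ D', ∀ y ∈ D', x ⊓ y ∈ D')
    (hSH' : ∀ x ∈ D', ∀ y ∈ D', ∃ z ∈ D', IsGreatest {w : E | w ∈ D ∧ x ⊓ w ≤ y} z)
    (haB' : GBAClosure (j '' D') aB) (hbB' : GBAClosure (j '' D') bB)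
    (haT' : aT ∈ j '' D') (hbT' : bT ∈ j '' D')
    -- `pstar p` is the lower cover of `p` in `D'`
    (pstar : E → E)
    (hpstar : ∀ p ∈ JiSet D', IsGreatest {w : E | w ∈ D' ∧ w < p} (pstar p))
    -- `e` is a consonance kernel of `f' = f↾D'`
    (e : E → L)
    (hker1 : ∀ p ∈ JiSet D', f p = f (pstar p) ⊔ e p)
    (hker2 : ∀ p ∈ JiSet D', ∀ q ∈ JiSet D', ¬ p ≤ q → ¬ q ≤ p → e p ⊓ e q = ⊥) :
    ∀ α β : L,
      IsLUB {x : L | ∃ p ∈ JiSet D', p ≤ pstar p ⊔ a ∧ x = e p} α →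
      IsLUB {x : L | ∃ p ∈ JiSet D', p ≤ pstar p ⊔ b ∧ x = e p} β →
      ((∀ d ∈ D, j d = aT → α ≤ f d) ∧ (∀ d ∈ D, j d = bT → β ≤ f d) ∧
        α ⊓ β = ⊥ ∧ F aB ≤ jL α ∧ F bB ≤ jL β ∧
        ∃ g : E → L,
          (∀ x y : E, g (x ⊔ y) = g x ⊔ g y ∧ g (x ⊓ y) = g x ⊓ g y) ∧
          (∀ x ∈ D, g x = f x) ∧ g a = α ∧ g b = β) := by
  intro α β hα hβ
  have hjmono : Monotone j := fun x y h => by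
    rw [← sup_eq_right, ← (hjhom x y).1, sup_eq_right.2 h]
  have hjle {x y : E} (h : j x ≤ j y) : x ≤ y := by
    rw [← sup_eq_right] at h ⊢
    exact hjinj ((hjhom x y).1.trans h)
  have hjLmono : Monotone jL := fun x y h => by
    rw [← sup_eq_right, ← (hjLhom x y).1, sup_eq_right.2 h]
  have hjLle {x y : L} (h : jL x ≤ jL y) : x ≤ y := by
    rw [← sup_eq_right] at h ⊢
    exact hjLinj ((hjLhom x y).1.trans h)
  have hfmono {x y : E} (hx : x ∈ D) (hy : y ∈ D) (h : x ≤ y) : f x ≤ f y := by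
    rw [← sup_eq_right, ← (hfD x hx y hy).1, sup_eq_right.2 h]
  have hcl {x : E} (hx : x ∈ D) : GBAClosure (j '' D) (j x) := .base ⟨x, hx, rfl⟩
  have hFmono {c c' : C} (hc : GBAClosure (j '' D) c) (hc' : GBAClosure (j '' D) c')
      (h : c ≤ c') : F c ≤ F c' := by
    rw [← sup_eq_right, ← (hFhom c c' hc hc').1, sup_eq_right.2 h]
  have himp : ∀ x ∈ D', ∀ y ∈ D', ∃ z ∈ D', IsGreatest {w : E | x ⊓ w ≤ y} z := by
    intro x hx y hy
    obtain ⟨z, hz, hzle, hzmax⟩ := hSH x (hD'sub hx) y (hD'sub hy)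
    obtain ⟨z', hz', ⟨hz'D, hz'le⟩, hz'max⟩ := hSH' x hx y hy
    exact ⟨z', hz', hz'le, fun w hw => (hzmax hw).trans (hz'max ⟨hz, hzle⟩)⟩
  have hJfin : (JiSet D').Finite := hD'fin.subset fun p hp => hp.1
  -- upper bound by the image of the upper approximation
  have hupper {c : E} {γ : L} {cT : C}
      (hγ : IsLUB {x : L | ∃ p ∈ JiSet D', p ≤ pstar p ⊔ c ∧ x = e p} γ)
      (hcT : j c ≤ cT) (hcT' : cT ∈ j '' D') (d : E) (hd : d ∈ D) (hjd : j d = cT) : γ ≤ f d := by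
    obtain ⟨d', hd', hjd'⟩ := hcT'
    obtain rfl : d' = d := hjinj (hjd'.trans hjd.symm)
    refine hγ.2 ?_
    rintro _ ⟨p, hp, hpc, rfl⟩
    obtain ⟨⟨hmem, hlt⟩, -⟩ := hpstar p hp
    have hpd : p ≤ d' := by
      have hcd : c ≤ d' := hjle (hcT.trans hjd.ge)
      rcases JiSet.le_or_le hD'inf hp hmem hd' (hpc.trans (sup_le_sup_left hcd _)) with h | h
      · exact absurd h hlt.not_ge
      · exact h
    calc e p ≤ f p := by rw [hker1 p hp]; exact le_sup_right
      _ ≤ f d' := hfmono (hD'sub hp.1) hd hpd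
  -- lower bound by the image of the lower approximation
  have hlower {c : E} {γ : L} {cB : C}
      (hγ : IsLUB {x : L | ∃ p ∈ JiSet D', p ≤ pstar p ⊔ c ∧ x = e p} γ)
      (hcB : cB ≤ j c) (hcB' : GBAClosure (j '' D') cB) : F cB ≤ jL γ := by
    have hcover : cB ≤ hJfin.toFinset.sup fun p => j p \ j (pstar p) := by
      refine (hcB'.le_of_mem_upperBounds (t := j ⊤) ?_).trans
        (le_sup_sdiff_of_finite hD'fin hjbot (fun x y => (hjhom x y).1) hpstar
          (fun p => hJfin.mem_toFinset) hD'top)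
      rintro _ ⟨x, -, rfl⟩
      exact hjmono le_top
    have hatom {p : E} (hp : p ∈ JiSet D') : GBAClosure (j '' D) (j p \ j (pstar p)) :=
      .sdiff (hcl (hD'sub hp.1)) (hcl (hD'sub (hpstar p hp).1.1))
    have hFsup (P : Finset E) (hP : ∀ p ∈ P, p ∈ JiSet D') :
        F (P.sup fun p => cB ⊓ j p \ j (pstar p)) ≤ jL γ := by
      have hB : GBAClosure (j '' D) cB := hcB'.mono (Set.image_mono hD'sub)
      refine (Finset.sup_induction
        (p := fun z => GBAClosure (j '' D) z ∧ F z ≤ jL γ) ⟨.bot, hF0.trans_le bot_le⟩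
        (fun z hz z' hz' => ⟨.sup hz.1 hz'.1, ?_⟩) fun p hp => ⟨.inf hB (hatom (hP p hp)), ?_⟩).2
      · rw [(hFhom z z' hz.1 hz'.1).1]
        exact sup_le hz.2 hz'.2
      · have hpJ := hP p hp
        obtain ⟨⟨hmem, hlt⟩, hmax⟩ := hpstar p hpJ
        rcases hcB'.sdiff_le_or_disjoint hD'inf hjmono (fun x y => (hjhom x y).2) hpJ.1
          (hpstar p hpJ) with h | h
        · have hpc : p ≤ pstar p ⊔ c := hjle <| by
            rw [(hjhom _ _).1]
            exact sdiff_le_iff.1 (h.trans hcB)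
          have hpD := hD'sub hpJ.1
          have hpD' := hD'sub hmem
          rw [inf_eq_right.2 h, (hFhom _ _ (hcl hpD) (hcl hpD')).2.2, hFj _ hpD, hFj _ hpD',
            hker1 p hpJ, (hjLhom _ _).1, sdiff_le_iff]
          exact sup_le_sup_left (hjLmono (hγ.1 ⟨p, hpJ, hpc, rfl⟩)) _
        · rw [inf_comm, h.eq_bot, hF0]
          exact bot_le
    have heq : cB = hJfin.toFinset.sup fun p => cB ⊓ j p \ j (pstar p) := by
      rw [← Finset.sup_inf_distrib_left, inf_eq_left.2 hcover]
    rw [heq]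
    exact hFsup _ fun p hp => hJfin.mem_toFinset.1 hp
  have hαT := hupper hα haT.1.2 haT'
  have hβT := hupper hβ hbT.1.2 hbT'
  have hαB := hlower hα haB.1.2 haB'
  have hβB := hlower hβ hbB.1.2 hbB'
  have hαβ : α ⊓ β = ⊥ := by
    classical
    have hsup {c : E} {γ : L}
        (hγ : IsLUB {x : L | ∃ p ∈ JiSet D', p ≤ pstar p ⊔ c ∧ x = e p} γ) :
        γ = (hJfin.toFinset.filter fun p => p ≤ pstar p ⊔ c).sup e := by
      refine le_antisymm (hγ.2 ?_) (Finset.sup_le fun p hp => hγ.1 ?_)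
      · rintro _ ⟨p, hp, hpc, rfl⟩
        exact Finset.le_sup (Finset.mem_filter.2 ⟨hJfin.mem_toFinset.2 hp, hpc⟩)
      · obtain ⟨hp, hpc⟩ := Finset.mem_filter.1 hp
        exact ⟨p, hJfin.mem_toFinset.1 hp, hpc, rfl⟩
    rw [hsup hα, hsup hβ, ← disjoint_iff, Finset.disjoint_sup_left]
    intro p hp
    rw [Finset.disjoint_sup_right]
    intro q hq
    simp only [Finset.mem_filter, Set.Finite.mem_toFinset] at hp hq
    have hp' := (hpstar p hp.1).1
    have hq' := (hpstar q hq.1).1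
    exact disjoint_iff.2 <| hker2 p hp.1 q hq.1
      (JiSet.not_le_of_disjoint hD'inf himp hab hp.1 hq.1 hp' hq' hp.2 hq.2)
      (JiSet.not_le_of_disjoint hD'inf himp ((inf_comm b a).trans hab) hq.1 hp.1 hq' hp' hq.2 hp.2)
  -- `y ⊓ c ≤ u` passes to the upper approximation of `c`
  have hinf {c : E} {γ : L} {cT : C}
      (hcT : IsLeast {z : C | GBAClosure (j '' D) z ∧ j c ≤ z} cT) (hcT' : cT ∈ j '' D')
      (hγ : ∀ d ∈ D, j d = cT → γ ≤ f d) :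
      ∀ y ∈ D, ∀ u ∈ D, y ⊓ c ≤ u → f y ⊓ γ ≤ f u := by
    obtain ⟨d, hd', rfl⟩ := hcT'
    have hd := hD'sub hd'
    intro y hy u hu h
    have hle : j d ≤ j ⊤ \ (j y \ j u) := by
      refine hcT.2 ⟨.sdiff (hcl hDtop) (.sdiff (hcl hy) (hcl hu)),
        le_sdiff.2 ⟨hjmono le_top, disjoint_iff.2 ?_⟩⟩
      rw [← inf_sdiff_assoc, inf_comm, ← (hjhom _ _).2]
      exact sdiff_eq_bot_iff.2 (hjmono h)
    have hyd : y ⊓ d ≤ u := hjle <| by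
      have := (le_sdiff.1 hle).2.eq_bot
      rwa [← inf_sdiff_assoc, inf_comm, ← (hjhom _ _).2, sdiff_eq_bot_iff] at this
    calc f y ⊓ γ ≤ f y ⊓ f d := inf_le_inf_left _ (hγ d hd rfl)
      _ = f (y ⊓ d) := (hfD y hy d hd).2.symm
      _ ≤ f u := hfmono (hDinf y hy d hd) hu hyd
  -- `x ≤ u ⊔ c` passes to the lower approximation of `c`
  have hsup {c : E} {γ : L} {cB : C}
      (hcB : IsGreatest {z : C | GBAClosure (j '' D) z ∧ z ≤ j c} cB) (hγ : F cB ≤ jL γ) :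
      ∀ x ∈ D, ∀ u ∈ D, x ≤ u ⊔ c → f x ≤ f u ⊔ γ := by
    intro x hx u hu h
    have hle : j x \ j u ≤ cB := by
      refine hcB.2 ⟨.sdiff (hcl hx) (hcl hu), sdiff_le_iff.2 ?_⟩
      rw [← (hjhom _ _).1]
      exact hjmono h
    refine hjLle ?_
    rw [(hjLhom _ _).1, ← sdiff_le_iff, ← hFj x hx, ← hFj u hu,
      ← (hFhom _ _ (hcl hx) (hcl hu)).2.2]
    exact (hFmono (.sdiff (hcl hx) (hcl hu)) hcB.1.1 hle).trans hγ
  have habγ : F abB ≤ jL (α ⊔ β) := by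
    rw [habB4, (hFhom _ _ haB.1.1 hbB.1.1).1, (hjLhom _ _).1]
    exact sup_le_sup hαB hβB
  have htop {γ : L} {cT : C} (hcT' : cT ∈ j '' D') (hγ : ∀ d ∈ D, j d = cT → γ ≤ f d) :
      γ ≤ f ⊤ := by
    obtain ⟨d, hd, hjd⟩ := hcT'
    exact (hγ d (hD'sub hd) hjd).trans (hfmono (hD'sub hd) hDtop le_top)
  refine ⟨hαT, hβT, hαβ, hαB, hβB, exists_extension_of_normalForm_le hDbot hDtop hDsup hDinf
    hgenE hab hfD hf0 hαβ (htop haT' hαT) (htop hbT' hβT) ?_ (hinf haT haT' hαT)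
    (hinf hbT hbT' hβT)⟩
  intro x hx u hu v hv w hw h
  have h₁ : f x ≤ f u ⊔ (α ⊔ β) := hsup habB habγ x hx u hu <| h.trans <| by
    rw [sup_assoc]
    exact sup_le_sup_left (sup_le_sup inf_le_right inf_le_right) _
  have h₂ : f x ≤ f u ⊔ f v ⊔ β := by
    rw [← (hfD u hu v hv).1]
    exact hsup hbB hβB x hx _ (hDsup u hu v hv) <| h.trans <|
      sup_le_sup (sup_le_sup_left inf_le_left _) inf_le_right
  have h₃ : f x ≤ f u ⊔ f w ⊔ α := by
    rw [← (hfD u hu w hw).1]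
    refine hsup haB hαB x hx _ (hDsup u hu w hw) <| h.trans ?_
    rw [sup_right_comm]
    exact sup_le_sup (sup_le_sup_left inf_le_left _) inf_le_right
  rw [sup_assoc] at h₂ h₃ ⊢
  calc f x ≤ (f u ⊔ (α ⊔ β)) ⊓ (f u ⊔ (f v ⊔ β)) ⊓ (f u ⊔ (f w ⊔ α)) :=
        le_inf (le_inf h₁ h₂) h₃
    _ = f u ⊔ (α ⊓ f v ⊔ β) ⊓ (f w ⊔ α) := by
        rw [← sup_inf_left, ← sup_inf_left, ← sup_inf_right]
    _ ≤ f u ⊔ (f v ⊓ α ⊔ f w ⊓ β) := by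
        refine sup_le_sup_left ?_ _
        rw [inf_sup_right, inf_sup_left β, inf_comm β α, hαβ, sup_bot_eq, inf_comm β]
        exact sup_le_sup_right (inf_le_left.trans (inf_comm _ _).le) _
end
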